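/- arXiv:2106.09892 — 2 statements merged into one kernel-verified Lean document; each statement's English description precedes it below -/
import Mathlib

section
/- Let N ≥ 2, let Ω be a bounded, connected open set in ℂ^N, let x₀ be a point of Ω, and let ε > 0. Then there exists a polynomially convex simple closed curve J in ℂ^N such that x₀ ∈ J ⊆ Ω, m(Ω \ J) < ε, P(J) = C(J), and the set of polynomials in z₁,…,z_N that are zero-free on J is dense in P(cl Ω); i.e., for every polynomial p and every δ > 0 there is a polynomial q with no zero on J such that sup_{z ∈ cl Ω} |p(z) − q(z)| < δ. -/
/-!
A space-filling path through `x₀` sweeps out almost all of `Ω`; it remains to perturb it. Call a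
set of loops volume dense if any loop can be approximated by loops of the set whose ranges lose
arbitrarily little measure. Since `γ ↦ μ (range γ)` is upper semicontinuous, Baire's theorem
applies: countable intersections of open volume dense sets are volume dense. Three properties of a
loop are generic in this sense.

* Avoiding the zero set of a polynomial when this set is null: its complement is open, dense, and
  path connected in balls, because a nonzero polynomial in one complex variable has finitely many
  zeros, and one can push the loop into such a set. Every polynomial becomes admissible after adding
  a small constant; doing this for a countable dense family makes zero-free polynomials dense.
* Injectivity: a loop with coordinates outside a countable dense set `Λ` misses the dense set of
  points that have a coordinate in `Λ`, which allows pushing one arc of the loop off another.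
* Approximability by a polynomial of the step function of `Re (ζ z_i)`: a Runge-type polynomial is
  close to the step function off a thin slab, and the loop can be rerouted so that it crosses the
  slab only along curves on which the polynomial is controlled. Averages of such step functions
  over many levels approximate `Re (ζ z_i)`, hence `conj z_i`, so that `P(J) = C(J)` by the
  Stone–Weierstrass theorem, and then `J` is polynomially convex.

Finally, all properties are invariant under translations, which bring the loop back through `x₀`.
-/

open Set MvPolynomial Topology MeasureTheory

noncomputable section

/-- The polynomial hull of a set `X ⊆ ℂ^N`: points where every polynomial in the
coordinates is dominated by its supremum over `X`. -/
def polyHull {N : ℕ} (X : Set (Fin N → ℂ)) : Set (Fin N → ℂ) :=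
  {z | ∀ p : MvPolynomial (Fin N) ℂ, ‖eval z p‖ ≤ ⨆ x ∈ X, ‖eval x p‖}

/-- A set is polynomially convex if it equals its polynomial hull. -/
def IsPolynomiallyConvex {N : ℕ} (X : Set (Fin N → ℂ)) : Prop :=
  polyHull X = X

/-- `J` is an arc from `a` to `b`: the image of an injective continuous map on `[0,1]`
(equivalently, in a Hausdorff space, a subset homeomorphic to `[0,1]`). -/
def IsArcFrom {α : Type*} [TopologicalSpace α] (J : Set α) (a b : α) : Prop :=
  ∃ γ : ℝ → α, ContinuousOn γ (Icc 0 1) ∧ InjOn γ (Icc 0 1) ∧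
    γ '' Icc 0 1 = J ∧ γ 0 = a ∧ γ 1 = b

/-- `J` is an arc: a subset homeomorphic to the closed unit interval. -/
def IsArc {α : Type*} [TopologicalSpace α] (J : Set α) : Prop :=
  ∃ a b, IsArcFrom J a b

/-- `J` is a simple closed curve: a subset homeomorphic to the unit circle. -/
def IsSimpleClosedCurve {α : Type*} [TopologicalSpace α] (J : Set α) : Prop :=
  ∃ γ : Circle → α, Continuous γ ∧ Function.Injective γ ∧ Set.range γ = J

/-- A `C^∞`-smooth open arc: the image of an injective `C^∞` map on an open interval,
with nowhere vanishing derivative, that is a homeomorphism onto its image. -/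
def IsSmoothOpenArc {E : Type*} [NormedAddCommGroup E] [NormedSpace ℝ E]
    (A : Set E) : Prop :=
  ∃ (a b : ℝ) (γ : ℝ → E), a < b ∧ ContDiffOn ℝ (⊤ : ℕ∞) γ (Ioo a b) ∧
    (∀ t ∈ Ioo a b, derivWithin γ (Ioo a b) t ≠ 0) ∧
    InjOn γ (Ioo a b) ∧
    IsEmbedding ((Ioo a b).restrict γ) ∧
    γ '' Ioo a b = A

/-- `P(X) = C(X)`: every continuous function on `X` is a uniform limit of polynomials. -/
def PolyEqContinuous {N : ℕ} (X : Set (Fin N → ℂ)) : Prop :=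
  ∀ f : (Fin N → ℂ) → ℂ, ContinuousOn f X → ∀ δ : ℝ, 0 < δ →
    ∃ p : MvPolynomial (Fin N) ℂ, ∀ x ∈ X, ‖f x - eval x p‖ < δ

/-- `L` is a complex affine line in `ℂ^N`. -/
def IsComplexAffineLine {N : ℕ} (L : Set (Fin N → ℂ)) : Prop :=
  ∃ (z₀ v : Fin N → ℂ), v ≠ 0 ∧ L = {z | ∃ t : ℂ, z = z₀ + t • v}

/-! ### Paths that sweep out most of an open set -/

section SweepingPaths

/-- `JoinedThrough V K a b`: some path from `a` to `b` inside `V` runs through every point of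
`K`. -/
def JoinedThrough {E : Type*} [TopologicalSpace E] (V K : Set E) (a b : E) : Prop :=
  ∃ p : Path a b, range p ⊆ V ∧ K ⊆ range p

theorem JoinedThrough.of_joinedIn {E : Type*} [TopologicalSpace E] {V : Set E} {a b : E}
    (h : JoinedIn V a b) : JoinedThrough V ∅ a b :=
  let ⟨p, hp⟩ := h
  ⟨p, range_subset_iff.2 hp, empty_subset _⟩

theorem JoinedThrough.trans {E : Type*} [TopologicalSpace E] {V K L : Set E} {a b c : E} :
    JoinedThrough V K a b → JoinedThrough V L b c → JoinedThrough V (K ∪ L) a c := by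
  rintro ⟨p, hpV, hpK⟩ ⟨q, hqV, hqL⟩
  refine ⟨p.trans q, ?_, ?_⟩ <;> rw [Path.trans_range]
  exacts [union_subset hpV hqV, union_subset_union hpK hqL]

theorem JoinedThrough.mono {E : Type*} [TopologicalSpace E] {V W K L : Set E} {a b : E}
    (hVW : V ⊆ W) (hLK : L ⊆ K) : JoinedThrough V K a b → JoinedThrough W L a b :=
  fun ⟨p, hpV, hpK⟩ => ⟨p, hpV.trans hVW, hLK.trans hpK⟩

theorem JoinedThrough.extend_ends {E : Type*} [TopologicalSpace E] {V K : Set E} {a b c d : E}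
    (h : JoinedThrough V K b c) (hab : JoinedIn V a b) (hcd : JoinedIn V c d) :
    JoinedThrough V K a d :=
  (((JoinedThrough.of_joinedIn hab).trans h).trans (.of_joinedIn hcd)).mono subset_rfl <|
    subset_union_right.trans subset_union_left

variable {E : Type*} [NormedAddCommGroup E] [NormedSpace ℝ E] [FiniteDimensional ℝ E]

/-- A Peano curve: extend a surjection of the Cantor set onto the ball to the unit interval. -/
theorem exists_surjective_unitInterval_closedBall (x : E) {r : ℝ} (hr : 0 < r) :
    ∃ f : C(unitInterval, Metric.closedBall x r), Function.Surjective f := by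
  have : ProperSpace E := FiniteDimensional.proper ℝ E
  have : CompactSpace (Metric.closedBall x r) :=
    isCompact_iff_compactSpace.mp (isCompact_closedBall x r)
  have : Nonempty (Metric.closedBall x r) := ⟨⟨x, Metric.mem_closedBall_self hr.le⟩⟩
  have : TietzeExtension.{0} (Metric.closedBall x r) := Metric.instTietzeExtensionClosedBall ℝ x hr
  obtain ⟨g, hg, hg_surj⟩ :=
    exists_nat_bool_continuous_surjective_of_compact (Metric.closedBall x r)
  let f : C(cantorSet, Metric.closedBall x r) :=
    ⟨g ∘ cantorSetHomeomorphNatToBool, hg.comp cantorSetHomeomorphNatToBool.continuous⟩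
  obtain ⟨F, hF⟩ := f.exists_restrict_eq isClosed_cantorSet
  refine ⟨⟨fun t => F t, by fun_prop⟩, fun y => ?_⟩
  obtain ⟨c, hc⟩ := (hg_surj.comp cantorSetHomeomorphNatToBool.surjective) y
  exact ⟨⟨c, cantorSet_subset_unitInterval c.2⟩, (DFunLike.congr_fun hF c).trans hc⟩

theorem joinedThrough_closedBall (x : E) {r : ℝ} (hr : 0 < r) :
    JoinedThrough (Metric.closedBall x r) (Metric.closedBall x r) x x := by
  obtain ⟨f, hf⟩ := exists_surjective_unitInterval_closedBall x hr
  have hjoin (y z : Metric.closedBall x r) : JoinedIn (Metric.closedBall x r) (y : E) z :=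
    .of_segment_subset ((convex_closedBall x r).segment_subset y.2 z.2)
  let p : Path (f 0 : E) (f 1) := ⟨⟨fun t => f t, by fun_prop⟩, rfl, rfl⟩
  let x' : Metric.closedBall x r := ⟨x, Metric.mem_closedBall_self hr.le⟩
  refine JoinedThrough.extend_ends ⟨p, ?_, fun y hy => ?_⟩ (hjoin x' (f 0)) (hjoin (f 1) x')
  · exact range_subset_iff.2 fun t => (f t).2
  · exact (hf ⟨y, hy⟩).imp fun t ht => congrArg Subtype.val ht

theorem joinedThrough_of_isCompact {V O K : Set E} (hO : IsOpen O) (hOV : O ⊆ V)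
    (hjoin : ∀ x ∈ O, ∀ y ∈ O, JoinedIn V x y) (hK : IsCompact K) (hKO : K ⊆ O) {a b : E}
    (ha : a ∈ O) (hb : b ∈ O) : JoinedThrough V K a b := by
  suffices h : JoinedThrough V K a a from
    h.extend_ends (.refl (hOV ha)) (hjoin a ha b hb)
  refine hK.induction_on (p := fun K => JoinedThrough V K a a) ?_ ?_ ?_ ?_
  · exact .of_joinedIn (.refl (hOV ha))
  · exact fun s t hst => .mono subset_rfl hst
  · exact fun s t => .trans
  · intro x hx
    obtain ⟨r, hr, hrO⟩ := Metric.nhds_basis_closedBall.mem_iff.mp (hO.mem_nhds (hKO hx))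
    refine ⟨_, mem_nhdsWithin_of_mem_nhds (Metric.closedBall_mem_nhds x hr), ?_⟩
    exact ((joinedThrough_closedBall x hr).mono (hrO.trans hOV) subset_rfl).extend_ends
      (hjoin a ha x (hKO hx)) (hjoin x (hKO hx) a ha)

theorem exists_path_measure_diff_range_le [MeasurableSpace E] [BorelSpace E] {μ : Measure E}
    [μ.InnerRegularCompactLTTop] {V O : Set E} (hO : IsOpen O) (hμO : μ O ≠ ⊤) (hOV : O ⊆ V)
    (hjoin : ∀ x ∈ O, ∀ y ∈ O, JoinedIn V x y) {a b : E} (ha : a ∈ O) (hb : b ∈ O)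
    {ε : ENNReal} (hε : ε ≠ 0) :
    ∃ p : Path a b, range p ⊆ V ∧ μ (O \ range p) ≤ ε := by
  obtain ⟨K, hKO, hK, hμK⟩ := hO.measurableSet.exists_isCompact_sdiff_lt hμO hε
  obtain ⟨p, hpV, hKp⟩ := joinedThrough_of_isCompact hO hOV hjoin hK hKO ha hb
  exact ⟨p, hpV, (measure_mono (sdiff_subset_sdiff_right hKp)).trans hμK.le⟩

end SweepingPaths

/-! ### Loops -/

section Loops

theorem exists_continuous_concat {E : Type*} [TopologicalSpace E] {d : ℕ → E}
    (p : ∀ j, Path (d j) (d (j + 1))) (M : ℕ) :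
    ∃ f : ℝ → E, Continuous f ∧ f M = d M ∧ ∀ j < M, ∀ s : unitInterval, f (j + s) = p j s := by
  induction M with
  | zero => exact ⟨fun _ => d 0, continuous_const, rfl, by simp⟩
  | succ M ih =>
    obtain ⟨f, hf, hfM, hfp⟩ := ih
    let g : ℝ → E := fun t => if t ≤ M then f t else (p M).extend (t - M)
    have hg_le {t : ℝ} (ht : t ≤ M) : g t = f t := if_pos ht
    have hg_add (s : unitInterval) : g (M + s) = p M s := by
      rcases s.2.1.eq_or_lt with hs | hs
      · rw [show s = 0 from Subtype.ext hs.symm]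
        simp [g, hfM]
      · simp [g, hs]
    refine ⟨g, ?_, by simpa using hg_add 1, fun j hj s => ?_⟩
    · refine hf.if_le ((p M).continuous_extend.comp (by fun_prop)) continuous_id
        continuous_const fun t ht => ?_
      simp [ht, hfM]
    · obtain hj | rfl := Nat.lt_succ_iff_lt_or_eq.mp hj
      · have : (j : ℝ) + 1 ≤ M := by exact_mod_cast hj
        rw [hg_le (by linarith [s.2.2]), hfp j hj]
      · exact hg_add s

/-- Parametrization of the `j`-th of `M` consecutive arcs of equal length of the circle. -/
def subarc (M j : ℕ) : C(unitInterval, UnitAddCircle) where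
  toFun s := (((j : ℝ) + s) / M : ℝ)
  continuous_toFun := (AddCircle.continuous_mk' 1).comp
    (by fun_prop : Continuous fun s : unitInterval => ((j : ℝ) + s) / M)

theorem subarc_apply (M j : ℕ) (s : unitInterval) :
    subarc M j s = ((((j : ℝ) + s) / M : ℝ) : UnitAddCircle) :=
  rfl

theorem subarc_one (M j : ℕ) : subarc M j 1 = subarc M (j + 1) 0 := by
  simp [subarc_apply]

theorem subarc_self_zero {M : ℕ} (hM : 0 < M) : subarc M M 0 = subarc M 0 0 := by
  simp [subarc_apply, hM.ne', AddCircle.coe_period]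

theorem dist_subarc_le (M j : ℕ) (s s' : unitInterval) :
    dist (subarc M j s) (subarc M j s') ≤ 1 / M := by
  rw [dist_eq_norm, subarc_apply, subarc_apply, ← AddCircle.coe_sub, ← sub_div,
    add_sub_add_left_eq_sub]
  refine (QuotientAddGroup.norm_mk_le_norm).trans ?_
  rw [norm_div, Real.norm_natCast, Real.norm_eq_abs]
  gcongr
  exact abs_le.2 ⟨by linarith [s.2.1, s'.2.2], by linarith [s.2.2, s'.2.1]⟩

theorem exists_eq_subarc {M : ℕ} (hM : 0 < M) (t : UnitAddCircle) :
    ∃ j < M, ∃ s, t = subarc M j s := by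
  have hM' : (0 : ℝ) < M := by exact_mod_cast hM
  obtain ⟨x, ⟨hx0, hx1⟩, rfl⟩ := AddCircle.coe_image_Ico_eq (1 : ℝ) 0 ▸ mem_univ t
  rw [zero_add] at hx1
  have hx : 0 ≤ x * M := by positivity
  refine ⟨⌊x * M⌋₊, (Nat.floor_lt hx).2 (by nlinarith), ⟨x * M - ⌊x * M⌋₊, ?_, ?_⟩, ?_⟩
  · linarith [Nat.floor_le hx]
  · linarith [Nat.lt_floor_add_one (x * M)]
  · simp [subarc_apply, hM'.ne']

theorem exists_loop_concat {E : Type*} [TopologicalSpace E] {d : ℕ → E}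
    (p : ∀ j, Path (d j) (d (j + 1))) {M : ℕ} (hM : 0 < M) (hd : d M = d 0) :
    ∃ γ : C(UnitAddCircle, E), ∀ j < M, ∀ s, γ (subarc M j s) = p j s := by
  obtain ⟨f, hf, hfM, hfp⟩ := exists_continuous_concat p M
  have hM' : (0 : ℝ) < M := by exact_mod_cast hM
  have hf0 : f 0 = f M := by simpa [hfM, hd] using hfp 0 hM 0
  let g : ℝ → E := fun t => f (M * t)
  refine ⟨⟨AddCircle.liftIco 1 0 g, AddCircle.liftIco_continuous (by simp [g, hf0])
    (Continuous.continuousOn (by fun_prop))⟩, fun j hj s => ?_⟩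
  have hj' : (j : ℝ) + 1 ≤ M := by exact_mod_cast hj
  have hg : g ((j + s) / M) = p j s := by
    simp only [g, mul_div_cancel₀ _ hM'.ne', hfp j hj s]
  rw [ContinuousMap.coe_mk, ← hg, subarc_apply]
  have h0 : 0 ≤ ((j : ℝ) + s) / M := div_nonneg (by linarith [s.2.1, j.cast_nonneg (α := ℝ)]) hM'.le
  rcases ((div_le_one hM').2 (by linarith [s.2.2] : (j : ℝ) + s ≤ M)).lt_or_eq with h1 | h1
  · exact AddCircle.liftIco_coe_apply ⟨h0, by simpa using h1⟩
  · rw [h1, AddCircle.coe_period, ← AddCircle.coe_zero, AddCircle.liftIco_coe_apply (by simp)]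
    simp [g, hf0]

end Loops

section Subdivision

theorem exists_subdivision {E : Type*} [PseudoMetricSpace E] (γ : C(UnitAddCircle, E))
    {I₁ I₂ : Set UnitAddCircle} (hI₁ : IsClosed I₁) (hI₂ : IsClosed I₂) (hI : Disjoint I₁ I₂)
    {r : ℝ} (hr : 0 < r) :
    ∃ M : ℕ, 0 < M ∧ (∀ x ∈ I₁, ∀ y ∈ I₂, 2 * (1 / M : ℝ) < dist x y) ∧
      ∀ j s s', dist (γ (subarc M j s)) (γ (subarc M j s')) < r := by
  obtain ⟨η, hη, hsep⟩ := Metric.exists_pos_forall_lt_edist hI₁.isCompact hI₂ hI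
  have hγ : UniformContinuous γ := CompactSpace.uniformContinuous_of_continuous γ.continuous
  obtain ⟨s, hs, hγs⟩ := Metric.uniformContinuous_iff.mp hγ r hr
  obtain ⟨n, hn⟩ := exists_nat_one_div_lt (lt_min (half_pos (NNReal.coe_pos.2 hη)) hs)
  rw [← Nat.cast_succ, lt_min_iff] at hn
  refine ⟨n.succ, n.succ_pos, fun x hx y hy => ?_,
    fun j t t' => hγs ((dist_subarc_le _ j t t').trans_lt hn.2)⟩
  have := ENNReal.toReal_strict_mono (edist_ne_top x y) (hsep x hx y hy)
  rw [ENNReal.coe_toReal, ← dist_edist] at this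
  linarith [hn.1]

theorem exists_node_value {E : Type*} [PseudoMetricSpace E] {γ : UnitAddCircle → E}
    {I₁ I₂ : Set UnitAddCircle} {D : Set E} {r s : ℝ} (hr : 0 < r)
    (hI : ∀ x ∈ I₁, ∀ y ∈ I₂, 2 * s < dist x y) (t : UnitAddCircle)
    (hmeet : (D ∩ Metric.ball (γ t) r).Nonempty) :
    ∃ d ∈ Metric.ball (γ t) r, (∀ u ∈ I₁, dist t u ≤ s → d = γ t) ∧
      ∀ u ∈ I₂, dist t u ≤ s → d ∈ D := by
  by_cases h : ∃ u ∈ I₂, dist t u ≤ s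
  · obtain ⟨u, hu, htu⟩ := h
    obtain ⟨d, hdD, hd⟩ := hmeet
    refine ⟨d, hd, fun v hv htv => absurd (hI v hv u hu) ?_, fun _ _ _ => hdD⟩
    linarith [dist_triangle_left v u t]
  · exact ⟨γ t, Metric.mem_ball_self hr, fun _ _ _ => rfl, fun u hu htu => (h ⟨u, hu, htu⟩).elim⟩

theorem measure_range_inter_diff_range_le {E : Type*} [TopologicalSpace E] [MeasurableSpace E]
    {μ : Measure E} {γ γ' : C(UnitAddCircle, E)} {I : Set UnitAddCircle} (hI : EqOn γ' γ I)
    {D : Set E} {ε : ENNReal} {M : ℕ} (hM : 0 < M)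
    (h : ∀ j < M, μ ((range (γ.comp (subarc M j)) ∩ D) \ range (γ'.comp (subarc M j))) ≤ ε / M) :
    μ ((range γ ∩ (D ∪ γ '' I)) \ range γ') ≤ ε := by
  let A (j : ℕ) := (range (γ.comp (subarc M j)) ∩ D) \ range (γ'.comp (subarc M j))
  have hsub : (range γ ∩ (D ∪ γ '' I)) \ range γ' ⊆ ⋃ j ∈ Finset.range M, A j := by
    rintro _ ⟨⟨⟨t, rfl⟩, hD | ⟨u, hu, hut⟩⟩, hγ'⟩
    · obtain ⟨j, hj, s, rfl⟩ := exists_eq_subarc hM t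
      refine mem_biUnion (Finset.mem_range.2 hj) ⟨⟨mem_range_self s, hD⟩, fun ⟨s', hs'⟩ => hγ' ?_⟩
      exact ⟨_, hs'⟩
    · exact (hγ' ⟨u, (hI hu).trans hut⟩).elim
  calc μ ((range γ ∩ (D ∪ γ '' I)) \ range γ') ≤ ∑ j ∈ Finset.range M, μ (A j) :=
        (measure_mono hsub).trans (measure_biUnion_finset_le _ _)
    _ ≤ ∑ _j ∈ Finset.range M, ε / M := Finset.sum_le_sum fun j hj => h j (Finset.mem_range.1 hj)
    _ = M * (ε / M) := by simp
    _ ≤ ε := ENNReal.mul_div_le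

end Subdivision

section Pushing

variable {E : Type*} [NormedAddCommGroup E] [NormedSpace ℝ E] [FiniteDimensional ℝ E]
  [MeasurableSpace E] [BorelSpace E] {μ : Measure E} [IsFiniteMeasureOnCompacts μ]

theorem exists_path_push {σ : C(unitInterval, E)} {S₁ S₂ : Set unitInterval}
    (hS : S₁ = ∅ ∨ S₂ = ∅) {X D : Set E} (hD : IsOpen D) (hDX : D ⊆ X) {c : E} {r δ : ℝ}
    (hrδ : r ≤ δ) (hσ : range σ ⊆ Metric.ball c r)
    (hjoin : ∀ x ∈ D ∩ Metric.ball c r, ∀ y ∈ D ∩ Metric.ball c r,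
      JoinedIn (X ∩ Metric.ball c δ) x y)
    {a b : E} (ha : a ∈ Metric.ball c r) (hb : b ∈ Metric.ball c r)
    (h₁ : S₁.Nonempty → σ 0 = a ∧ σ 1 = b) (h₂ : S₂.Nonempty → a ∈ D ∧ b ∈ D)
    {ε : ENNReal} (hε : ε ≠ 0) :
    ∃ p : Path a b, EqOn p σ S₁ ∧ MapsTo p S₂ X ∧ range p ⊆ Metric.ball c δ ∧
      μ ((range σ ∩ D) \ range p) ≤ ε := by
  have : ProperSpace E := FiniteDimensional.proper ℝ E
  have hball : Metric.ball c r ⊆ Metric.ball c δ := Metric.ball_subset_ball hrδ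
  have hfin {A : Set E} (hA : A ⊆ Metric.ball c r) : μ A ≠ ⊤ :=
    ((measure_mono hA).trans_lt Metric.isBounded_ball.measure_lt_top).ne
  rcases S₁.eq_empty_or_nonempty with rfl | hS₁
  · rcases S₂.eq_empty_or_nonempty with rfl | hS₂
    · obtain ⟨p, hp, hμp⟩ := exists_path_measure_diff_range_le Metric.isOpen_ball
        (hfin subset_rfl) hball (fun x hx y hy => JoinedIn.of_segment_subset
          (((convex_ball c r).segment_subset hx hy).trans hball)) ha hb hε
      exact ⟨p, eqOn_empty _ _, mapsTo_empty _ _, hp, (measure_mono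
        (sdiff_subset_sdiff_left (inter_subset_left.trans hσ))).trans hμp⟩
    · obtain ⟨p, hp, hμp⟩ := exists_path_measure_diff_range_le (hD.inter Metric.isOpen_ball)
        (hfin inter_subset_right) (inter_subset_inter hDX hball) hjoin ⟨(h₂ hS₂).1, ha⟩
        ⟨(h₂ hS₂).2, hb⟩ hε
      refine ⟨p, eqOn_empty _ _, fun s _ => (hp (mem_range_self s)).1,
        hp.trans inter_subset_right, (measure_mono (sdiff_subset_sdiff_left ?_)).trans hμp⟩
      exact fun x hx => ⟨hx.2, hσ hx.1⟩
  · obtain rfl := hS.resolve_left hS₁.ne_empty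
    let p : Path a b := ⟨σ, (h₁ hS₁).1, (h₁ hS₁).2⟩
    have hp : (p : unitInterval → E) = σ := rfl
    refine ⟨p, fun s _ => rfl, mapsTo_empty _ _, hp ▸ hσ.trans hball, ?_⟩
    rw [hp, sdiff_eq_empty.2 inter_subset_left, measure_empty]
    exact zero_le

theorem exists_loop_push {γ : C(UnitAddCircle, E)} {I₁ I₂ : Set UnitAddCircle}
    (hI₁ : IsClosed I₁) (hI₂ : IsClosed I₂) (hI : Disjoint I₁ I₂) {X D : Set E} (hD : IsOpen D)
    (hDX : D ⊆ X) {r δ : ℝ} (hr : 0 < r) (hrδ : r ≤ δ)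
    (hmeet : ∀ t, (D ∩ Metric.ball (γ t) (r / 2)).Nonempty)
    (hjoin : ∀ t, ∀ x ∈ D ∩ Metric.ball (γ t) r, ∀ y ∈ D ∩ Metric.ball (γ t) r,
      JoinedIn (X ∩ Metric.ball (γ t) δ) x y)
    {ε : ENNReal} (hε : ε ≠ 0) :
    ∃ γ' : C(UnitAddCircle, E), EqOn γ' γ I₁ ∧ MapsTo γ' I₂ X ∧
      (∀ t, dist (γ' t) (γ t) < 2 * δ) ∧
      μ ((range γ ∩ (D ∪ γ '' I₁)) \ range γ') ≤ ε := by
  obtain ⟨M, hM, hsep, hMγ⟩ := exists_subdivision γ hI₁ hI₂ hI (half_pos hr)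
  choose d hdball hd₁ hd₂ using fun t => exists_node_value (half_pos hr) hsep t (hmeet t)
  have hdball' (j : ℕ) : d (subarc M j 1) ∈ Metric.ball (γ (subarc M j 0)) r := by
    refine Metric.mem_ball.2 ?_
    linarith [dist_triangle (d (subarc M j 1)) (γ (subarc M j 1)) (γ (subarc M j 0)),
      Metric.mem_ball.1 (hdball (subarc M j 1)), hMγ j 1 0]
  have harc (j : ℕ) : ∃ p : Path (d (subarc M j 0)) (d (subarc M (j + 1) 0)),
      EqOn p (γ ∘ subarc M j) (subarc M j ⁻¹' I₁) ∧ MapsTo p (subarc M j ⁻¹' I₂) X ∧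
      range p ⊆ Metric.ball (γ (subarc M j 0)) δ ∧
      μ ((range (γ.comp (subarc M j)) ∩ D) \ range p) ≤ ε / M := by
    rw [← subarc_one]
    refine exists_path_push (σ := γ.comp (subarc M j)) ?_ hD hDX hrδ ?_ (hjoin (subarc M j 0))
      (Metric.ball_subset_ball (half_le_self hr.le) (hdball _)) (hdball' j) ?_ ?_
      (ENNReal.div_ne_zero.2 ⟨hε, ENNReal.natCast_ne_top M⟩)
    · by_contra! h
      obtain ⟨⟨s, hs⟩, s', hs'⟩ := h
      linarith [hsep _ hs _ hs', dist_subarc_le M j s s',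
        (by positivity : (0 : ℝ) ≤ 1 / M)]
    · exact range_subset_iff.2 fun s => (hMγ j s 0).trans (half_lt_self hr)
    · exact fun ⟨s, hs⟩ => ⟨(hd₁ _ _ hs (dist_subarc_le M j 0 s)).symm,
        (hd₁ _ _ hs (dist_subarc_le M j 1 s)).symm⟩
    · exact fun ⟨s, hs⟩ => ⟨hd₂ _ _ hs (dist_subarc_le M j 0 s),
        hd₂ _ _ hs (dist_subarc_le M j 1 s)⟩
  choose p hp₁ hp₂ hpball hμp using harc
  obtain ⟨γ', hγ'⟩ := exists_loop_concat p hM (congrArg d (subarc_self_zero hM))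
  have hcases {P : UnitAddCircle → Prop} (h : ∀ j < M, ∀ s, P (subarc M j s)) (t) : P t := by
    obtain ⟨j, hj, s, rfl⟩ := exists_eq_subarc hM t
    exact h j hj s
  have hEq : EqOn γ' γ I₁ := hcases fun j hj s hs => (hγ' j hj s).trans (hp₁ j hs)
  refine ⟨γ', hEq, hcases fun j hj s hs => hγ' j hj s ▸ hp₂ j hs, hcases fun j hj s => ?_,
    measure_range_inter_diff_range_le hEq hM fun j hj => ?_⟩
  · have h := Metric.mem_ball.1 (hpball j (mem_range_self s))
    rw [hγ' j hj]
    linarith [dist_triangle_right (p j s) (γ (subarc M j s)) (γ (subarc M j 0)), hMγ j s 0]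
  · convert hμp j using 3
    exact congrArg range (funext (hγ' j hj))

theorem exists_loop_push_dist_lt {γ : C(UnitAddCircle, E)} {I₁ I₂ : Set UnitAddCircle}
    (hI₁ : IsClosed I₁) (hI₂ : IsClosed I₂) (hI : Disjoint I₁ I₂) {X D : Set E} (hD : IsOpen D)
    (hDX : D ⊆ X) {r ε : ℝ} (hε : 0 < ε) (hr : 0 < r) (hrε : r ≤ ε / 2)
    (hmeet : ∀ t, (D ∩ Metric.ball (γ t) (r / 2)).Nonempty)
    (hjoin : ∀ t, ∀ x ∈ D ∩ Metric.ball (γ t) r, ∀ y ∈ D ∩ Metric.ball (γ t) r,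
      JoinedIn (X ∩ Metric.ball (γ t) (ε / 2)) x y)
    (hloss : μ (range γ \ (D ∪ γ '' I₁)) ≤ ENNReal.ofReal (ε / 2)) :
    ∃ γ' : C(UnitAddCircle, E), EqOn γ' γ I₁ ∧ MapsTo γ' I₂ X ∧ dist γ' γ < ε ∧
      μ (range γ) ≤ μ (range γ') + ENNReal.ofReal ε := by
  obtain ⟨γ', h₁, h₂, hdist, hμ⟩ := exists_loop_push hI₁ hI₂ hI hD hDX hr hrε hmeet hjoin
    (μ := μ) (ENNReal.ofReal_pos.2 (half_pos hε)).ne'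
  refine ⟨γ', h₁, h₂, (ContinuousMap.dist_lt_iff hε).2 fun t => by linarith [hdist t], ?_⟩
  calc μ (range γ) ≤ μ (range γ') + (μ ((range γ ∩ (D ∪ γ '' I₁)) \ range γ') +
        μ (range γ \ (D ∪ γ '' I₁))) := by
        refine (measure_mono fun x hx => ?_).trans ((measure_union_le _ _).trans
          (add_le_add_right (measure_union_le _ _) _))
        by_cases hx' : x ∈ range γ' <;> by_cases hxD : x ∈ D ∪ γ '' I₁ <;> simp_all
    _ ≤ μ (range γ') + ENNReal.ofReal ε := by
        grw [hμ, hloss, ← ENNReal.ofReal_add (half_pos hε).le (half_pos hε).le, add_halves]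

end Pushing

section VolumeDense

theorem isOpen_setOf_forall_mem {E : Type*} [TopologicalSpace E] {X : Set E} (hX : IsOpen X) :
    IsOpen {γ : C(UnitAddCircle, E) | ∀ t, γ t ∈ X} := by
  simpa only [MapsTo, mem_univ, true_implies] using
    ContinuousMap.isOpen_setOfPred_mapsTo isCompact_univ hX

variable {E : Type*} [MetricSpace E] [MeasurableSpace E] {μ : Measure E}

/-- A set of loops is volume dense if every loop is a uniform limit of loops from the set whose
ranges asymptotically lose no measure. Unlike density, this notion lets one find, inside a countable
intersection, loops that still sweep out almost all of a given open set. -/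
def VolumeDense (μ : Measure E) (U : Set C(UnitAddCircle, E)) : Prop :=
  ∀ γ : C(UnitAddCircle, E), ∀ ε > 0, ∃ γ' ∈ U,
    dist γ' γ < ε ∧ μ (range γ) ≤ μ (range γ') + ENNReal.ofReal ε

theorem VolumeDense.mono {U V : Set C(UnitAddCircle, E)} (hU : VolumeDense μ U) (hUV : U ⊆ V) :
    VolumeDense μ V := fun γ ε hε =>
  let ⟨γ', hγ', h⟩ := hU γ ε hε
  ⟨γ', hUV hγ', h⟩

theorem VolumeDense.trans {U V : Set C(UnitAddCircle, E)} (hU : VolumeDense μ U)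
    (hV : ∀ γ ∈ U, ∀ ε > 0, ∃ γ' ∈ V,
      dist γ' γ < ε ∧ μ (range γ) ≤ μ (range γ') + ENNReal.ofReal ε) :
    VolumeDense μ V := fun γ ε hε => by
  obtain ⟨γ₁, hγ₁, hd₁, hμ₁⟩ := hU γ (ε / 2) (half_pos hε)
  obtain ⟨γ₂, hγ₂, hd₂, hμ₂⟩ := hV γ₁ hγ₁ (ε / 2) (half_pos hε)
  refine ⟨γ₂, hγ₂, by linarith [dist_triangle γ₂ γ₁ γ], ?_⟩
  calc μ (range γ) ≤ μ (range γ₂) + ENNReal.ofReal (ε / 2) + ENNReal.ofReal (ε / 2) := by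
        grw [hμ₁, hμ₂]
    _ = μ (range γ₂) + ENNReal.ofReal ε := by
        rw [add_assoc, ← ENNReal.ofReal_add (half_pos hε).le (half_pos hε).le, add_halves]

theorem upperSemicontinuous_measure_range [BorelSpace E] [μ.OuterRegular] :
    UpperSemicontinuous fun γ : C(UnitAddCircle, E) => μ (range γ) := by
  intro γ c hc
  obtain ⟨O, hγO, hO, hμO⟩ := (range γ).exists_isOpen_lt_of_lt c hc
  filter_upwards [(ContinuousMap.isOpen_setOfPred_mapsTo isCompact_univ hO).mem_nhds
    (mapsTo_univ_iff_range_subset.2 hγO)] with γ' hγ'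
  exact (measure_mono (mapsTo_univ_iff_range_subset.1 hγ')).trans_lt hμO

/-- Baire's theorem on the closed set of pairs of a loop and a bound for the measure lost so far. -/
theorem volumeDense_iInter [CompleteSpace E] [BorelSpace E] [μ.OuterRegular]
    {ι : Type*} [Countable ι] {U : ι → Set C(UnitAddCircle, E)} (hUo : ∀ i, IsOpen (U i))
    (hUd : ∀ i, VolumeDense μ (U i)) : VolumeDense μ (⋂ i, U i) := by
  intro γ ε hε
  let S : Set (C(UnitAddCircle, E) × ℝ) :=
    {x | μ (range γ) ≤ μ (range x.1) + ENNReal.ofReal x.2} ∩ {x | 0 ≤ x.2}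
  have hS : IsClosed S := by
    refine IsClosed.inter (UpperSemicontinuous.isClosed_preimage (f := fun x :
      C(UnitAddCircle, E) × ℝ => μ (range x.1) + ENNReal.ofReal x.2) ?_ _)
      (isClosed_le continuous_const continuous_snd)
    exact (upperSemicontinuous_measure_range.comp continuous_fst).add
      (ENNReal.continuous_ofReal.comp continuous_snd).upperSemicontinuous
  have : CompleteSpace S := hS.completeSpace_coe
  have hdense (i : ι) : Dense {x : S | x.1.1 ∈ U i} := by
    refine Metric.dense_iff.2 fun ⟨⟨β, s⟩, hβ, hs⟩ r hr => ?_
    obtain ⟨β', hβ'U, hd, hμ⟩ := hUd i β (r / 2) (half_pos hr)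
    refine ⟨⟨(β', s + r / 2), ?_, add_nonneg hs (half_pos hr).le⟩, ?_, hβ'U⟩
    · calc μ (range γ) ≤ μ (range β) + ENNReal.ofReal s := hβ
        _ ≤ μ (range β') + ENNReal.ofReal (r / 2) + ENNReal.ofReal s := by gcongr
        _ = μ (range β') + ENNReal.ofReal (s + r / 2) := by
          rw [add_assoc, add_comm s, ENNReal.ofReal_add (half_pos hr).le hs]
    · refine max_lt (hd.trans (half_lt_self hr)) ?_
      simpa [abs_of_pos hr] using hr
  obtain ⟨⟨⟨γ', s⟩, hμ, _⟩, hball, hmem⟩ := Metric.dense_iff.1 (dense_iInter_of_isOpen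
    (fun i => (hUo i).preimage (continuous_fst.comp continuous_subtype_val)) hdense)
    ⟨(γ, 0), by simp [S]⟩ ε hε
  obtain ⟨hd, hs⟩ := max_lt_iff.1 (Metric.mem_ball.1 hball)
  refine ⟨γ', mem_iInter.2 fun i => mem_iInter.1 hmem i, hd, hμ.trans ?_⟩
  gcongr
  exact (le_abs_self s).trans (by simpa using hs.le)

/-- A set of loops is volume residual if it contains a countable intersection of open volume dense
sets. -/
def VolumeResidual (μ : Measure E) (U : Set C(UnitAddCircle, E)) : Prop :=
  ∃ S : Set (Set C(UnitAddCircle, E)), S.Countable ∧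
    (∀ V ∈ S, IsOpen V ∧ VolumeDense μ V) ∧ ⋂₀ S ⊆ U

theorem VolumeDense.volumeResidual {U : Set C(UnitAddCircle, E)} (hU : VolumeDense μ U)
    (hUo : IsOpen U) : VolumeResidual μ U :=
  ⟨{U}, countable_singleton U, forall_eq.2 ⟨hUo, hU⟩, (sInter_singleton U).subset⟩

theorem VolumeResidual.mono {U V : Set C(UnitAddCircle, E)} (hU : VolumeResidual μ U)
    (hUV : U ⊆ V) : VolumeResidual μ V :=
  let ⟨S, hSc, hS, hSU⟩ := hU
  ⟨S, hSc, hS, hSU.trans hUV⟩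

theorem VolumeResidual.iInter {ι : Type*} [Countable ι] {U : ι → Set C(UnitAddCircle, E)}
    (hU : ∀ i, VolumeResidual μ (U i)) : VolumeResidual μ (⋂ i, U i) := by
  choose S hSc hS hSU using hU
  refine ⟨⋃ i, S i, countable_iUnion hSc, fun V hV => ?_, ?_⟩
  · obtain ⟨i, hi⟩ := mem_iUnion.1 hV
    exact hS i V hi
  · exact subset_iInter fun i => (sInter_subset_sInter (subset_iUnion S i)).trans (hSU i)

theorem VolumeResidual.inter {U V : Set C(UnitAddCircle, E)} (hU : VolumeResidual μ U)
    (hV : VolumeResidual μ V) : VolumeResidual μ (U ∩ V) :=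
  inter_eq_iInter (s₁ := U) ▸ .iInter (Bool.forall_bool.2 ⟨hV, hU⟩)

theorem VolumeResidual.volumeDense [CompleteSpace E] [BorelSpace E] [μ.OuterRegular]
    {U : Set C(UnitAddCircle, E)} (hU : VolumeResidual μ U) : VolumeDense μ U := by
  obtain ⟨S, hSc, hS, hSU⟩ := hU
  have : Countable S := hSc.to_subtype
  rw [sInter_eq_iInter] at hSU
  exact (volumeDense_iInter (U := fun V : S => (V : Set C(UnitAddCircle, E)))
    (fun V => (hS V V.2).1) fun V => (hS V V.2).2).mono hSU

end VolumeDense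

/-! ### Avoiding the zero set of a polynomial -/

section PolynomialZeros

/-- For fixed `a` and `v`, the segments from `a` to `a + (1/2 + i s) v` only meet in `a`. -/
theorem eq_of_mem_segment {a v f : ℂ} {s : ℝ} (hv : v ≠ 0) (hfa : f ≠ a)
    (hf : f ∈ segment ℝ a (a + (1 / 2 + s * Complex.I) * v)) :
    s = ((f - a) / v).im / (2 * ((f - a) / v).re) := by
  rw [segment_eq_image'] at hf
  obtain ⟨θ, -, rfl⟩ := hf
  have hθ : θ ≠ 0 := by
    rintro rfl
    simp at hfa
  have h : (a + θ • (a + (1 / 2 + s * Complex.I) * v - a) - a) / v =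
      θ * (1 / 2 + s * Complex.I) := by
    rw [Complex.real_smul]
    field_simp
    ring
  rw [h]
  simp only [one_div, Complex.mul_im, Complex.ofReal_re, Complex.add_im, Complex.inv_im,
    Complex.im_ofNat, neg_zero, Complex.normSq_ofNat, zero_div, Complex.I_im, mul_one,
    Complex.ofReal_im, Complex.I_re, mul_zero, add_zero, zero_add, Complex.add_re, Complex.inv_re,
    Complex.re_ofNat, div_self_mul_self', Complex.mul_re, sub_self, zero_mul, sub_zero]
  field_simp

theorem joinedIn_convex_diff_finite {V F : Set ℂ} (hV : IsOpen V) (hVc : Convex ℝ V)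
    (hF : F.Finite) {x y : ℂ} (hx : x ∈ V \ F) (hy : y ∈ V \ F) : JoinedIn (V \ F) x y := by
  obtain rfl | hxy := eq_or_ne x y
  · exact JoinedIn.refl hx
  have hv : y - x ≠ 0 := sub_ne_zero.2 hxy.symm
  let z (s : ℝ) : ℂ := x + (1 / 2 + s * Complex.I) * (y - x)
  have hz (s : ℝ) : z s = y + (1 / 2 + (-s : ℝ) * Complex.I) * (x - y) := by
    simp only [z, Complex.ofReal_neg]
    ring
  have hzV : z ⁻¹' V ∈ 𝓝 0 := by
    refine (hV.preimage (by fun_prop)).mem_nhds ?_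
    have : z 0 = midpoint ℝ x y := by
      rw [midpoint_eq_smul_add, Complex.real_smul, invOf_eq_inv]
      push_cast [z]
      ring
    exact mem_preimage.2 (this ▸ hVc.midpoint_mem hx.1 hy.1)
  let slope (a v f : ℂ) : ℝ := ((f - a) / v).im / (2 * ((f - a) / v).re)
  have hbad : (slope x (y - x) '' F ∪ (fun f => -slope y (x - y) f) '' F).Finite :=
    (hF.image _).union (hF.image _)
  obtain ⟨s, hsV, hs⟩ := (infinite_of_mem_nhds 0 hzV).exists_notMem_finite hbad
  have hxz : segment ℝ x (z s) ⊆ V \ F := fun f hf =>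
    ⟨hVc.segment_subset hx.1 hsV hf, fun hfF => hs <| .inl
      ⟨f, hfF, (eq_of_mem_segment hv (ne_of_mem_of_not_mem hfF hx.2) hf).symm⟩⟩
  have hyz : segment ℝ y (z s) ⊆ V \ F := fun f hf =>
    ⟨hVc.segment_subset hy.1 hsV hf, fun hfF => hs <| .inr ⟨f, hfF, neg_eq_iff_eq_neg.2
      (eq_of_mem_segment (sub_ne_zero.2 hxy) (ne_of_mem_of_not_mem hfF hy.2) (hz s ▸ hf)).symm⟩⟩
  exact (JoinedIn.of_segment_subset hxz).trans (JoinedIn.of_segment_subset hyz).symm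

variable {σ : Type*}

theorem exists_polynomial_eval_line (p : MvPolynomial σ ℂ) (x v : σ → ℂ) :
    ∃ q : Polynomial ℂ, ∀ ζ : ℂ, q.eval ζ = eval (x + ζ • v) p := by
  refine ⟨aeval (fun i => Polynomial.C (x i) + Polynomial.X * Polynomial.C (v i)) p, fun ζ => ?_⟩
  induction p using MvPolynomial.induction_on with
  | C a => simp
  | add p q hp hq => rw [map_add, map_add, Polynomial.eval_add, hp, hq]
  | mul_X p i hp => rw [map_mul, map_mul, Polynomial.eval_mul, hp]; simp [mul_comm (v i)]

theorem joinedIn_eval_ne_zero_inter_convex (p : MvPolynomial σ ℂ) {B : Set (σ → ℂ)}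
    (hB : IsOpen B) (hBc : Convex ℝ B) {x y : σ → ℂ} (hx : x ∈ B) (hy : y ∈ B)
    (hpx : eval x p ≠ 0) (hpy : eval y p ≠ 0) : JoinedIn ({z | eval z p ≠ 0} ∩ B) x y := by
  obtain ⟨q, hq⟩ := exists_polynomial_eval_line p x (y - x)
  let line : ℂ →ᵃ[ℝ] (σ → ℂ) :=
    ((LinearMap.toSpanSingleton ℂ (σ → ℂ) (y - x)).restrictScalars ℝ).toAffineMap +
      AffineMap.const ℝ ℂ x
  have hline (ζ : ℂ) : line ζ = x + ζ • (y - x) := by simp [line, add_comm]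
  have hline_cont : Continuous line := by
    simp only [funext hline]
    fun_prop
  have hq0 : q ≠ 0 := by
    rintro rfl
    exact hpx (by simpa using (hq 0).symm)
  have hjoin : JoinedIn (line ⁻¹' B \ q.rootSet ℂ) 0 1 := by
    refine joinedIn_convex_diff_finite (hB.preimage hline_cont) (hBc.affine_preimage line)
      (q.rootSet_finite ℂ) ?_ ?_ <;>
      simp [hline, Polynomial.mem_rootSet, hq, hx, hy, hpx, hpy]
  rw [show x = line 0 by simp [hline], show y = line 1 by simp [hline]]
  refine (hjoin.map hline_cont).mono ?_
  rintro _ ⟨ζ, ⟨hζB, hζ⟩, rfl⟩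
  refine ⟨fun h => hζ (Polynomial.mem_rootSet.2 ⟨hq0, ?_⟩), hζB⟩
  rwa [Polynomial.coe_aeval_eq_eval, hq, ← hline]

theorem exists_volume_eval_add_C_eq_zero [Fintype σ] (p : MvPolynomial σ ℂ) {e : ℝ} (he : 0 < e) :
    ∃ c : ℂ, ‖c‖ < e ∧ volume {z : σ → ℂ | eval z (p + C c) = 0} = 0 := by
  have hcount := Measure.countable_meas_level_set_pos (μ := (volume : Measure (σ → ℂ)))
    (MvPolynomial.continuous_eval p).measurable
  obtain ⟨c, hc, hce⟩ := (hcount.dense_compl ℝ).exists_dist_lt 0 he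
  refine ⟨-c, by simpa using hce, ?_⟩
  simpa [add_neg_eq_zero] using hc

theorem volumeDense_eval_ne_zero [Fintype σ] {p : MvPolynomial σ ℂ}
    (hp : volume {z : σ → ℂ | eval z p = 0} = 0) :
    VolumeDense volume {γ : C(UnitAddCircle, σ → ℂ) | ∀ t, eval (γ t) p ≠ 0} := by
  have hopen : IsOpen {z : σ → ℂ | eval z p ≠ 0} :=
    isOpen_ne_fun p.continuous_eval continuous_const
  have hdense : Dense {z : σ → ℂ | eval z p ≠ 0} :=
    Measure.dense_of_ae (ae_iff.2 (by simpa using hp))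
  intro γ ε hε
  have hloss : volume (range γ \ ({z | eval z p ≠ 0} ∪ γ '' ∅)) ≤ ENNReal.ofReal (ε / 2) := by
    refine (measure_mono_null (fun z hz => ?_) hp).trans_le zero_le
    simpa using hz.2
  obtain ⟨γ', -, hγ', h⟩ := exists_loop_push_dist_lt
    isClosed_empty isClosed_univ (empty_disjoint _) hopen subset_rfl hε (half_pos hε) le_rfl
    (fun t => inter_comm _ _ ▸ hdense.inter_open_nonempty _ Metric.isOpen_ball
      (Metric.nonempty_ball.2 (half_pos (half_pos hε))))
    (fun t x hx y hy => joinedIn_eval_ne_zero_inter_convex p Metric.isOpen_ball (convex_ball _ _)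
      hx.2 hy.2 hx.1 hy.1) hloss
  exact ⟨γ', fun t => hγ' (mem_univ t), h⟩

end PolynomialZeros

/-! ### Injectivity -/

section Injectivity

theorem isOpen_setOf_disjoint_image {X E : Type*} [TopologicalSpace X] [CompactSpace X]
    [TopologicalSpace E] [T2Space E] {I₁ I₂ : Set X} (hI₁ : IsClosed I₁) (hI₂ : IsClosed I₂) :
    IsOpen {γ : C(X, E) | Disjoint (γ '' I₁) (γ '' I₂)} := by
  refine isOpen_iff_mem_nhds.2 fun γ hγ => ?_
  obtain ⟨U₁, U₂, hU₁, hU₂, hγ₁, hγ₂, hU⟩ := SeparatedNhds.of_isCompact_isCompact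
    (hI₁.isCompact.image γ.continuous) (hI₂.isCompact.image γ.continuous) hγ
  filter_upwards [(ContinuousMap.isOpen_setOfPred_mapsTo hI₁.isCompact hU₁).mem_nhds
    (mapsTo_iff_image_subset.2 hγ₁),
    (ContinuousMap.isOpen_setOfPred_mapsTo hI₂.isCompact hU₂).mem_nhds
    (mapsTo_iff_image_subset.2 hγ₂)] with γ' h₁ h₂
  exact hU.mono h₁.image_subset h₂.image_subset

theorem joinedIn_inter_of_dense {E : Type*} [NormedAddCommGroup E] [NormedSpace ℝ E]
    {S U B : Set E} (hU : IsOpen U) (hB : IsOpen B) (hS : Dense S) (hSU : S ⊆ U)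
    (hjoin : ∀ x ∈ S ∩ B, ∀ y ∈ S ∩ B, JoinedIn (S ∩ B) x y) {x y : E} (hx : x ∈ U ∩ B)
    (hy : y ∈ U ∩ B) : JoinedIn (U ∩ B) x y := by
  have hnear {x : E} (hx : x ∈ U ∩ B) : ∃ x' ∈ S ∩ B, JoinedIn (U ∩ B) x x' := by
    obtain ⟨r, hr, hball⟩ := Metric.isOpen_iff.1 (hU.inter hB) x hx
    obtain ⟨x', hx'S, hx'⟩ := hS.exists_dist_lt x hr
    rw [dist_comm] at hx'
    exact ⟨x', ⟨hx'S, (hball hx').2⟩, JoinedIn.of_segment_subset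
      (((convex_ball x r).segment_subset (Metric.mem_ball_self hr) hx').trans hball)⟩
  obtain ⟨x', hx', hxx'⟩ := hnear hx
  obtain ⟨y', hy', hyy'⟩ := hnear hy
  exact (hxx'.trans ((hjoin x' hx' y' hy').mono (inter_subset_inter_left B hSU))).trans hyy'.symm

variable {σ : Type*} [Fintype σ]

theorem update_mem_ball [DecidableEq σ] {c x : σ → ℂ} {r : ℝ} (hx : x ∈ Metric.ball c r) {i : σ}
    {l : ℂ} (hl : l ∈ Metric.ball (c i) r) : Function.update x i l ∈ Metric.ball c r := by
  have hr : 0 < r := Metric.pos_of_mem_ball hx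
  rw [ball_pi c hr] at hx ⊢
  exact (update_mem_pi_iff_of_mem hx).2 fun _ => hl

theorem joinedIn_of_apply_eq {c x y : σ → ℂ} {r : ℝ} {S : Set (σ → ℂ)} {i : σ}
    (hS : ∀ z : σ → ℂ, z i = x i → z ∈ S) (hx : x ∈ Metric.ball c r) (hy : y ∈ Metric.ball c r)
    (hxy : y i = x i) : JoinedIn (S ∩ Metric.ball c r) x y := by
  refine JoinedIn.of_segment_subset fun z hz =>
    ⟨hS z ?_, (convex_ball c r).segment_subset hx hy hz⟩
  have := image_segment ℝ (LinearMap.proj (R := ℝ) i).toAffineMap x y ▸ mem_image_of_mem _ hz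
  simpa [hxy] using this

/-- Both points are joined to a point that has both coordinates in `Λ`. -/
theorem joinedIn_coord_mem_inter_ball {i j : σ} (hij : i ≠ j) {Λ : Set ℂ} (hΛ : Dense Λ)
    {c x y : σ → ℂ} {r : ℝ} (hx : x ∈ {z | z i ∈ Λ ∨ z j ∈ Λ} ∩ Metric.ball c r)
    (hy : y ∈ {z | z i ∈ Λ ∨ z j ∈ Λ} ∩ Metric.ball c r) :
    JoinedIn ({z | z i ∈ Λ ∨ z j ∈ Λ} ∩ Metric.ball c r) x y := by
  classical
  have hr : 0 < r := Metric.pos_of_mem_ball hx.2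
  obtain ⟨l, hl, hlc⟩ := hΛ.exists_dist_lt (c i) hr
  obtain ⟨l', hl', hlc'⟩ := hΛ.exists_dist_lt (c j) hr
  rw [dist_comm] at hlc hlc'
  have hub {x : σ → ℂ} (hx : x ∈ {z | z i ∈ Λ ∨ z j ∈ Λ} ∩ Metric.ball c r) :
      JoinedIn ({z | z i ∈ Λ ∨ z j ∈ Λ} ∩ Metric.ball c r) x
        (Function.update (Function.update c i l) j l') := by
    have hubc := update_mem_ball (update_mem_ball (Metric.mem_ball_self hr) hlc) hlc'
    obtain ⟨hxi | hxj, hxc⟩ := hx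
    · have hxj := update_mem_ball hxc hlc'
      refine (joinedIn_of_apply_eq (i := i) (fun z hz => .inl (hz ▸ hxi)) hxc hxj
        (by simp [hij])).trans (joinedIn_of_apply_eq (i := j) (fun z hz => .inr ?_) hxj hubc
        (by simp))
      simpa [hz] using hl'
    · have hxi := update_mem_ball hxc hlc
      refine (joinedIn_of_apply_eq (i := j) (fun z hz => .inr (hz ▸ hxj)) hxc hxi
        (by simp [hij.symm])).trans (joinedIn_of_apply_eq (i := i) (fun z hz => .inl ?_) hxi hubc
        (by simp [hij]))
      simpa [hz] using hl
  exact (hub hx).trans (hub hy).symm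

theorem volumeResidual_coord_notMem {i j : σ} {Λ : Set ℂ} (hΛ : Λ.Countable) :
    VolumeResidual volume {γ : C(UnitAddCircle, σ → ℂ) | ∀ t, γ t i ∉ Λ ∧ γ t j ∉ Λ} := by
  have : Countable Λ := hΛ.to_subtype
  have hnull (k : σ) (l : ℂ) : volume {z : σ → ℂ | eval z (X k - C l) = 0} = 0 := by
    simpa [sub_eq_zero, volume_pi] using
      Measure.pi_hyperplane (fun _ : σ => (volume : Measure ℂ)) k l
  have havoid (k : σ) (l : ℂ) := (volumeDense_eval_ne_zero (hnull k l)).volumeResidual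
    (isOpen_setOf_forall_mem (isOpen_ne_fun (MvPolynomial.continuous_eval _) continuous_const))
  refine (VolumeResidual.iInter fun l : Λ => (havoid i l).inter (havoid j l)).mono fun γ hγ t => ?_
  simp only [mem_iInter, mem_inter_iff, mem_ofPred_eq, map_sub, eval_X, eval_C, sub_ne_zero] at hγ
  exact ⟨fun h => (hγ ⟨_, h⟩).1 t rfl, fun h => (hγ ⟨_, h⟩).2 t rfl⟩

theorem volumeDense_disjoint_image {i j : σ} (hij : i ≠ j) {I₁ I₂ : Set UnitAddCircle}
    (hI₁ : IsClosed I₁) (hI₂ : IsClosed I₂) (hI : Disjoint I₁ I₂) :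
    VolumeDense volume {γ : C(UnitAddCircle, σ → ℂ) | Disjoint (γ '' I₁) (γ '' I₂)} := by
  obtain ⟨Λ, hΛc, hΛ⟩ := TopologicalSpace.exists_countable_dense ℂ
  refine (volumeResidual_coord_notMem (i := i) (j := j) hΛc).volumeDense.trans fun γ hγ ε hε => ?_
  have hD : IsOpen (γ '' I₁)ᶜ := (hI₁.isCompact.image γ.continuous).isClosed.isOpen_compl
  have hS : Dense {z : σ → ℂ | z i ∈ Λ ∨ z j ∈ Λ} :=
    (hΛ.preimage (isOpenMap_eval i)).mono fun _ => .inl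
  have hSD : {z : σ → ℂ | z i ∈ Λ ∨ z j ∈ Λ} ⊆ (γ '' I₁)ᶜ := by
    rintro _ hz ⟨t, -, rfl⟩
    exact hz.elim (hγ t).1 (hγ t).2
  obtain ⟨γ', hγ'₁, hγ'₂, h⟩ := exists_loop_push_dist_lt (μ := volume) (γ := γ) hI₁ hI₂ hI hD
    subset_rfl hε (half_pos hε) le_rfl
    (fun t => inter_comm _ _ ▸ (hS.mono hSD).inter_open_nonempty _
      Metric.isOpen_ball (Metric.nonempty_ball.2 (half_pos (half_pos hε))))
    (fun t x hx y hy => joinedIn_inter_of_dense hD Metric.isOpen_ball hS hSD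
      (fun _ hx _ hy => joinedIn_coord_mem_inter_ball hij hΛ hx hy) hx hy) (by simp)
  refine ⟨γ', ?_, h⟩
  rw [mem_ofPred_eq, hγ'₁.image_eq]
  exact disjoint_compl_right.mono_right hγ'₂.image_subset

theorem volumeResidual_injective {i j : σ} (hij : i ≠ j) :
    VolumeResidual volume {γ : C(UnitAddCircle, σ → ℂ) | Function.Injective γ} := by
  let ℬ := TopologicalSpace.countableBasis UnitAddCircle
  have hℬ : TopologicalSpace.IsTopologicalBasis ℬ := TopologicalSpace.isBasis_countableBasis _
  have : Countable ℬ := (TopologicalSpace.countable_countableBasis UnitAddCircle).to_subtype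
  let ι := {U : ℬ × ℬ // Disjoint (closure (U.1 : Set UnitAddCircle)) (closure U.2)}
  refine (VolumeResidual.iInter fun U : ι => (volumeDense_disjoint_image hij isClosed_closure
    isClosed_closure U.2).volumeResidual (isOpen_setOf_disjoint_image isClosed_closure
    isClosed_closure)).mono fun γ hγ s t hst => ?_
  by_contra hne
  obtain ⟨U, hsU, hU, V, htV, hV, hUV⟩ := exists_open_nhds_disjoint_closure hne
  obtain ⟨U', hU', hsU', hUU'⟩ := hℬ.exists_subset_of_mem_open hsU hU
  obtain ⟨V', hV', htV', hVV'⟩ := hℬ.exists_subset_of_mem_open htV hV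
  refine disjoint_left.1 (mem_iInter.1 hγ ⟨⟨⟨U', hU'⟩, V', hV'⟩,
    hUV.mono (closure_mono hUU') (closure_mono hVV')⟩) (mem_image_of_mem γ (subset_closure hsU')) ?_
  exact hst ▸ mem_image_of_mem γ (subset_closure htV')

end Injectivity

/-! ### Polynomial approximation of step functions -/

section StepPolynomial

theorem coe_aeval_apply {K : Type*} [TopologicalSpace K] {B : Subalgebra ℂ C(K, ℂ)} (f : B)
    (p : Polynomial ℂ) (z : K) :
    (Polynomial.aeval f p : C(K, ℂ)) z = p.eval ((f : C(K, ℂ)) z) := by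
  have := Polynomial.aeval_algHom_apply B.val f p
  rw [Subalgebra.coe_val] at this
  rw [← this, Polynomial.aeval_continuousMap_apply]

/-- A case of Runge's theorem. -/
theorem exists_polynomial_norm_eval_sub_inv_lt {K : Set ℂ} (hK : IsCompact K)
    (hKc : IsPreconnected Kᶜ) {p : Polynomial ℂ} (hp : ∀ z ∈ K, p.eval z ≠ 0) {e : ℝ} (he : 0 < e) :
    ∃ q : Polynomial ℂ, ∀ z ∈ K, ‖q.eval z - (p.eval z)⁻¹‖ < e := by
  obtain rfl | hne := K.eq_empty_or_nonempty
  · exact ⟨0, by simp⟩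
  have : Nonempty K := hne.to_subtype
  have : CompactSpace K := isCompact_iff_compactSpace.1 hK
  let B := (polynomialFunctions K).topologicalClosure
  have : IsClosed (B : Set C(K, ℂ)) := (polynomialFunctions K).isClosed_topologicalClosure
  have hX : Polynomial.X.toContinuousMapOn K ∈ B :=
    (polynomialFunctions K).le_topologicalClosure ⟨Polynomial.X, by simp⟩
  have : CompleteSpace B := this.completeSpace_coe
  let x : B := ⟨Polynomial.X.toContinuousMapOn K, hX⟩
  have hx : spectrum ℂ x = K := by
    have h : spectrum ℂ (x : C(K, ℂ)) = K := by
      rw [ContinuousMap.spectrum_eq_range]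
      ext z
      simp [x]
    rw [Subalgebra.spectrum_eq_of_isPreconnected_compl B x (h.symm ▸ hKc), h]
  have hunit : IsUnit (Polynomial.aeval x p) := by
    rw [← spectrum.zero_notMem_iff ℂ, spectrum.map_polynomial_aeval, hx]
    rintro ⟨z, hz, hz0⟩
    exact hp z hz hz0
  obtain ⟨b, hb⟩ := hunit.exists_right_inv
  obtain ⟨_, ⟨q, -, rfl⟩, hq⟩ := Metric.mem_closure_iff.1 b.2 e he
  refine ⟨q, fun z hz => ?_⟩
  have hbz : p.eval z * (b : C(K, ℂ)) ⟨z, hz⟩ = 1 := by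
    have := congrArg (fun f : B => (f : C(K, ℂ)) ⟨z, hz⟩) hb
    simpa [x, coe_aeval_apply] using this
  rw [← eq_inv_of_mul_eq_one_right hbz, ← dist_eq_norm, dist_comm]
  exact (ContinuousMap.dist_lt_iff he).1 hq ⟨z, hz⟩

theorem isPreconnected_compl_norm_le_inter_le_abs_re (R : ℝ) {η : ℝ} (hη : 0 < η) :
    IsPreconnected {w : ℂ | ‖w‖ ≤ R ∧ η ≤ |w.re|}ᶜ := by
  have hout : IsPreconnected {w : ℂ | R < ‖w‖} := by
    have h : {w : ℂ | R < ‖w‖} = (fun x : ℝ × ℝ => x.1 * Complex.exp (x.2 * Complex.I)) ''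
        ((Ioi R ∩ Ici 0) ×ˢ univ) := by
      ext w
      constructor
      · exact fun hw => ⟨(‖w‖, w.arg), ⟨⟨hw, norm_nonneg w⟩, mem_univ _⟩, w.norm_mul_exp_arg_mul_I⟩
      · rintro ⟨⟨r, θ⟩, ⟨⟨hr, hr0⟩, -⟩, rfl⟩
        simpa [Complex.norm_exp_ofReal_mul_I, abs_of_nonneg (mem_Ici.1 hr0)] using hr
    exact h ▸ ((ordConnected_Ioi.inter ordConnected_Ici).isPreconnected.prod
      isPreconnected_univ).image _ (by fun_prop)
  have hin : IsPreconnected {w : ℂ | |w.re| < η} := by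
    have : {w : ℂ | |w.re| < η} = Complex.reLm ⁻¹' Ioo (-η) η := by
      ext w
      simp [abs_lt]
    exact this ▸ ((convex_Ioo _ _).linear_preimage _).isPreconnected
  have hunion : {w : ℂ | ‖w‖ ≤ R ∧ η ≤ |w.re|}ᶜ = {w | R < ‖w‖} ∪ {w | |w.re| < η} := by
    ext w
    simp [imp_iff_not_or]
  rw [hunion]
  refine hout.union ((|R| + 1 : ℝ) * Complex.I) ?_ ?_ hin
  · rw [mem_ofPred_eq, norm_mul, Complex.norm_I, mul_one, Complex.norm_real]
    exact (lt_add_of_le_of_pos (le_abs_self R) one_pos).trans_le (le_abs_self _)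
  · simpa using hη

theorem isCompact_norm_le_inter_le_abs_re (R η : ℝ) :
    IsCompact {w : ℂ | ‖w‖ ≤ R ∧ η ≤ |w.re|} := by
  refine (isCompact_closedBall (0 : ℂ) R).of_isClosed_subset ?_ fun w hw => by simpa using hw.1
  exact (isClosed_le continuous_norm continuous_const).inter
    (isClosed_le continuous_const Complex.continuous_re.abs)

theorem exists_polynomial_norm_lt_of_re {η : ℝ} (hη : 0 < η) (R : ℝ) :
    ∃ q : Polynomial ℂ, ∃ ρ < 1, ∀ w : ℂ, ‖w‖ ≤ R →
      (w.re ≤ -η → 1 ≤ ρ * ‖q.eval w‖) ∧ (η ≤ w.re → ‖q.eval w‖ ≤ ρ) := by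
  obtain ⟨t, ht, htR, htη⟩ : ∃ t : ℝ, 0 < t ∧ t * R ^ 2 ≤ η ∧ t * η ≤ 1 / 2 := by
    refine ⟨1 / (R ^ 2 / η + 2 * η), by positivity, ?_, ?_⟩ <;>
      rw [one_div_mul_eq_div, div_le_iff₀ (by positivity)]
    · rw [mul_add, mul_div_cancel₀ _ hη.ne']
      nlinarith
    · linarith [show 0 ≤ R ^ 2 / η by positivity]
  have hnorm (w : ℂ) : ‖1 - t * w‖ ^ 2 = 1 - 2 * t * w.re + t * (t * ‖w‖ ^ 2) := by
    simp only [Complex.sq_norm, Complex.normSq_apply, Complex.sub_re, Complex.sub_im,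
      Complex.one_re, Complex.one_im, Complex.re_ofReal_mul, Complex.im_ofReal_mul]
    ring
  have hρ : 0 < 1 - t * η := by linarith
  refine ⟨1 - Polynomial.C (t : ℂ) * Polynomial.X, √(1 - t * η), ?_, fun w hw => ?_⟩
  · rw [Real.sqrt_lt' one_pos]
    linarith [mul_pos ht hη]
  have hwR : t * ‖w‖ ^ 2 ≤ η := htR.trans' (by gcongr)
  simp only [Polynomial.eval_sub, Polynomial.eval_one, Polynomial.eval_mul, Polynomial.eval_C,
    Polynomial.eval_X]
  refine ⟨fun h => ?_, fun h => Real.le_sqrt_of_sq_le ?_⟩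
  · refine (one_le_sq_iff₀ (by positivity)).1 ?_
    rw [mul_pow, Real.sq_sqrt hρ.le, hnorm]
    have : 1 + 2 * (t * η) ≤ 1 - 2 * t * w.re + t * (t * ‖w‖ ^ 2) := by
      nlinarith [show 0 ≤ t * (t * ‖w‖ ^ 2) by positivity]
    nlinarith [mul_pos ht hη]
  · rw [hnorm]
    nlinarith

theorem exists_norm_inv_one_add_lt {e : ℝ} (he : 0 < e) :
    ∃ s : ℝ, 0 < s ∧ s < 1 ∧ ∀ u : ℂ,
      (‖u‖ ≤ s → ‖(1 + u)⁻¹ - 1‖ < e) ∧ (1 ≤ s * ‖u‖ → ‖(1 + u)⁻¹‖ < e) := by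
  have hcont : ContinuousAt (fun u : ℂ => (1 + u)⁻¹ - 1) 0 := by fun_prop (disch := simp)
  obtain ⟨r, hr, hcr⟩ := Metric.continuousAt_iff.1 hcont e he
  simp only [dist_zero_right, add_zero, inv_one, sub_self] at hcr
  have hs : min r 1 / 2 < min r 1 := half_lt_self (lt_min hr one_pos)
  refine ⟨min r 1 / 2, by positivity, hs.trans_le (min_le_right r 1), fun u =>
    ⟨fun hu => hcr (hu.trans_lt (hs.trans_le (min_le_left r 1))), fun hu => ?_⟩⟩
  obtain h | h := eq_or_ne (1 + u) 0
  · simpa [h] using he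
  have hu0 : u ≠ 0 := by
    rintro rfl
    norm_num at hu
  have hinv : (1 + u)⁻¹ = -((1 + u⁻¹)⁻¹ - 1) := by
    have : 1 + u⁻¹ = (1 + u) / u := by field_simp; ring
    rw [this]
    field_simp
    ring
  rw [hinv, norm_neg]
  refine hcr (lt_of_le_of_lt ?_ (hs.trans_le (min_le_left r 1)))
  rwa [norm_inv, inv_le_iff_one_le_mul₀ (norm_pos_iff.2 hu0)]

theorem exists_polynomial_step_center {η : ℝ} (hη : 0 < η) (R : ℝ) {e : ℝ} (he : 0 < e) :
    ∃ T : Polynomial ℂ, ∀ w : ℂ, ‖w‖ ≤ R →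
      (w.re ≤ -η → ‖T.eval w‖ < e) ∧ (η ≤ w.re → ‖T.eval w - 1‖ < e) := by
  obtain ⟨q, ρ, hρ1, hq⟩ := exists_polynomial_norm_lt_of_re hη R
  obtain ⟨s, hs0, hs1, hs⟩ := exists_norm_inv_one_add_lt (half_pos he)
  obtain ⟨n, hn⟩ := exists_pow_lt_of_lt_one hs0 hρ1
  have hleft (w : ℂ) (hw : ‖w‖ ≤ R) (hre : w.re ≤ -η) : 1 ≤ s * ‖q.eval w ^ n‖ := by
    rw [norm_pow]
    calc 1 ≤ (ρ * ‖q.eval w‖) ^ n := one_le_pow₀ ((hq w hw).1 hre)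
      _ ≤ s * ‖q.eval w‖ ^ n := by rw [mul_pow]; gcongr
  have hright (w : ℂ) (hw : ‖w‖ ≤ R) (hre : η ≤ w.re) : ‖q.eval w ^ n‖ ≤ s := by
    rw [norm_pow]
    exact (pow_le_pow_left₀ (norm_nonneg _) ((hq w hw).2 hre) n).trans hn.le
  have hne (w : ℂ) (hw : ‖w‖ ≤ R ∧ η ≤ |w.re|) : (1 + q ^ n).eval w ≠ 0 := by
    intro h0
    have hnorm : ‖q.eval w ^ n‖ = 1 := by
      rw [← norm_neg, ← norm_one (α := ℂ)]
      congr 1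
      simp only [Polynomial.eval_add, Polynomial.eval_one, Polynomial.eval_pow] at h0
      linear_combination -h0
    rcases le_abs.1 hw.2 with hre | hre
    · linarith [hright w hw.1 hre]
    · linarith [hnorm ▸ hleft w hw.1 (le_neg.1 hre)]
  obtain ⟨T, hT⟩ := exists_polynomial_norm_eval_sub_inv_lt (isCompact_norm_le_inter_le_abs_re R η)
    (isPreconnected_compl_norm_le_inter_le_abs_re R hη) hne (half_pos he)
  simp only [Polynomial.eval_add, Polynomial.eval_one, Polynomial.eval_pow] at hT
  refine ⟨T, fun w hw => ⟨fun hre => ?_, fun hre => ?_⟩⟩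
  · have h₁ := hT w ⟨hw, le_abs.2 (.inr (le_neg.2 hre))⟩
    have h₂ := (hs _).2 (hleft w hw hre)
    linarith [norm_le_norm_sub_add (T.eval w) (1 + q.eval w ^ n)⁻¹]
  · have h₁ := hT w ⟨hw, le_abs.2 (.inl hre)⟩
    have h₂ := (hs _).1 (hright w hw hre)
    linarith [norm_sub_le_norm_sub_add_norm_sub (T.eval w) (1 + q.eval w ^ n)⁻¹ 1]

theorem exists_polynomial_step {a b : ℝ} (hab : a < b) (R : ℝ) {e : ℝ} (he : 0 < e) :
    ∃ T : Polynomial ℂ, ∀ w : ℂ, ‖w‖ ≤ R →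
      (w.re ≤ a → ‖T.eval w‖ < e) ∧ (b ≤ w.re → ‖T.eval w - 1‖ < e) := by
  obtain ⟨T, hT⟩ := exists_polynomial_step_center (half_pos (sub_pos.2 hab))
    (R + |(a + b) / 2|) he
  refine ⟨T.comp (Polynomial.X - Polynomial.C (((a + b) / 2 : ℝ) : ℂ)), fun w hw => ?_⟩
  have hnorm : ‖w - (((a + b) / 2 : ℝ) : ℂ)‖ ≤ R + |(a + b) / 2| := by
    grw [norm_sub_le, hw, Complex.norm_real, Real.norm_eq_abs]
  have := hT _ hnorm
  simp only [Polynomial.eval_comp, Polynomial.eval_sub, Polynomial.eval_X, Polynomial.eval_C]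
  rw [Complex.sub_re, Complex.ofReal_re] at this
  exact ⟨fun h => this.1 (by linarith), fun h => this.2 (by linarith)⟩

end StepPolynomial

/-! ### Crossing a slab -/

section Crossing

theorem exists_polynomial_large_small {a b : ℝ} (ha : 0 ≤ a) (hab : a < b) (R M : ℝ) {δ : ℝ}
    (hδ : 0 < δ) :
    ∃ q : Polynomial ℂ, ∀ w : ℂ, ‖w‖ ≤ R →
      (|w.re| ≤ a → M ≤ ‖q.eval w‖) ∧ (b ≤ |w.re| → ‖q.eval w‖ ≤ δ) := by
  obtain ⟨T₁, hT₁⟩ := exists_polynomial_step (neg_lt_neg hab) R (e := 1 / 8) (by norm_num)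
  obtain ⟨T₂, hT₂⟩ := exists_polynomial_step hab R (e := 1 / 8) (by norm_num)
  obtain ⟨m, hm⟩ := pow_unbounded_of_one_lt M (show (1 : ℝ) < 3 / 2 by norm_num)
  obtain ⟨n, hn⟩ := exists_pow_lt_of_lt_one hδ (show (1 / 2 : ℝ) < 1 by norm_num)
  refine ⟨(2 * (T₁ - T₂)) ^ (m + n), fun w hw => ?_⟩
  have hnorm : ‖((2 * (T₁ - T₂)) ^ (m + n)).eval w‖ =
      (2 * ‖T₁.eval w - T₂.eval w‖) ^ (m + n) := by simp
  rw [hnorm]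
  refine ⟨fun hre => ?_, fun hre => ?_⟩
  · have h₁ := (hT₁ w hw).2 (abs_le.1 hre).1
    have h₂ := (hT₂ w hw).1 (abs_le.1 hre).2
    have hlarge : 3 / 2 ≤ 2 * ‖T₁.eval w - T₂.eval w‖ := by
      have htri := norm_le_norm_sub_add 1 (T₁.eval w - T₂.eval w)
      rw [norm_one, show 1 - (T₁.eval w - T₂.eval w) = T₂.eval w - (T₁.eval w - 1) by ring] at htri
      linarith [norm_sub_le (T₂.eval w) (T₁.eval w - 1)]
    calc M ≤ (3 / 2) ^ m := hm.le
      _ ≤ (3 / 2) ^ (m + n) := pow_le_pow_right₀ (by norm_num) (by omega)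
      _ ≤ _ := by gcongr
  · have hsmall : 2 * ‖T₁.eval w - T₂.eval w‖ ≤ 1 / 2 := by
      rcases le_abs.1 hre with hre | hre
      · have h₁ := (hT₁ w hw).2 (by linarith)
        have h₂ := (hT₂ w hw).2 hre
        have := norm_sub_le (T₁.eval w - 1) (T₂.eval w - 1)
        rw [sub_sub_sub_cancel_right] at this
        linarith
      · have h₁ := (hT₁ w hw).1 (le_neg.1 hre)
        have h₂ := (hT₂ w hw).1 (by linarith)
        linarith [norm_sub_le (T₁.eval w) (T₂.eval w)]
    calc _ ≤ (1 / 2 : ℝ) ^ (m + n) := by gcongr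
      _ ≤ (1 / 2) ^ n := pow_le_pow_of_le_one (by norm_num) (by norm_num) (by omega)
      _ ≤ δ := hn.le

theorem exists_local_section {S : Polynomial ℂ} {l : ℂ} (h0 : S.eval l = 0)
    (h1 : S.derivative.eval l ≠ 0) {r : ℝ} (hr : 0 < r) :
    ∃ ρ > 0, ∃ G : ℂ → ℂ, ContinuousOn G (Metric.ball 0 ρ) ∧
      ∀ ν ∈ Metric.ball (0 : ℂ) ρ, S.eval (G ν) = ν ∧ ‖G ν - l‖ < r := by
  have hS := (S.hasStrictDerivAt l).hasStrictFDerivAt_equiv h1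
  let H := hS.toOpenPartialHomeomorph (fun z => S.eval z)
  have hl : l ∈ H.source := hS.mem_toOpenPartialHomeomorph_source
  have hHl : H l = 0 := h0
  have hG0 : H.symm 0 = l := hHl ▸ H.left_inv hl
  have hopen : IsOpen (H.target ∩ H.symm ⁻¹' Metric.ball l r) :=
    H.symm.continuousOn.isOpen_inter_preimage H.open_target Metric.isOpen_ball
  obtain ⟨ρ, hρ, hsub⟩ := Metric.isOpen_iff.1 hopen 0
    ⟨hHl ▸ H.map_source hl, by simpa [hG0] using hr⟩
  exact ⟨ρ, hρ, H.symm, H.symm.continuousOn.mono fun ν hν => (hsub hν).1, fun ν hν =>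
    ⟨H.right_inv (hsub hν).1, mem_ball_iff_norm.1 (hsub hν).2⟩⟩

theorem exists_polynomial_local_sections (L : Finset ℂ) {r : ℝ} (hr : 0 < r) :
    ∃ S : Polynomial ℂ, ∃ ρ > 0, ∀ l ∈ L, ∃ G : ℂ → ℂ,
      ContinuousOn G (Metric.ball 0 ρ) ∧
        ∀ ν ∈ Metric.ball (0 : ℂ) ρ, S.eval (G ν) = ν ∧ ‖G ν - l‖ < r := by
  let S : Polynomial ℂ := ∏ l ∈ L, (Polynomial.X - Polynomial.C l)
  have hroot (l : ℂ) (hl : l ∈ L) : S.eval l = 0 := by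
    rw [Polynomial.eval_prod]
    exact Finset.prod_eq_zero hl (by simp)
  have hsep : S.Separable := Polynomial.separable_prod_X_sub_C_iff'.2 fun _ _ _ _ h => h
  have hderiv (l : ℂ) (hl : l ∈ L) : S.derivative.eval l ≠ 0 := by
    have := hsep.eval₂_derivative_ne_zero (RingHom.id ℂ) (x := l)
    simpa only [Polynomial.eval₂_id, hroot l hl, true_imp_iff] using this
  have hlocal (l : L) := exists_local_section (hroot l l.2) (hderiv l l.2) hr
  choose ρ hρ G hGc hG using hlocal
  obtain ⟨ρ₀, hρ₀, hle⟩ : ∃ ρ₀ > 0, ∀ l, ρ₀ ≤ ρ l :=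
    (((Filter.eventually_all.2 fun l => eventually_le_nhds (hρ l)).filter_mono
      nhdsWithin_le_nhds).and self_mem_nhdsWithin).exists (f := 𝓝[>] 0) |>.imp fun _ h => ⟨h.2, h.1⟩
  have hsub (l : L) : Metric.ball (0 : ℂ) ρ₀ ⊆ Metric.ball 0 (ρ l) :=
    Metric.ball_subset_ball (hle l)
  exact ⟨S, ρ₀, hρ₀, fun l hl => ⟨G ⟨l, hl⟩, (hGc _).mono (hsub _),
    fun ν hν => hG _ ν (hsub _ hν)⟩⟩

theorem exists_continuous_add_mul_mem {T Q : ℝ → ℂ} (hT : Continuous T) (hQ : Continuous Q)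
    {a b ρ B : ℝ} (ha : 0 < a) (hab : a ≤ b) {C : Set ℂ} (hC : Convex ℝ C)
    (hTC : ∀ u ∈ Icc (-b) b, a ≤ |u| → T u ∈ C) (hTB : ∀ u ∈ Icc (-b) b, ‖T u‖ ≤ B)
    (hQB : ∀ u ∈ Icc (-a) a, 2 * B < ρ * ‖Q u‖) :
    ∃ ν : ℝ → ℂ, Continuous ν ∧ (∀ u, ν u ∈ Metric.ball 0 ρ) ∧
      ∀ u ∈ Icc (-b) b, T u + Q u * ν u ∈ C := by
  let p (u : ℝ) : ℂ := AffineMap.lineMap (T (-a)) (T a) ((u + a) / (2 * a))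
  let ν (u : ℝ) : ℂ := (p u - T u) / Q u
  have haa : -a ≤ a := neg_le_self ha.le
  have hsub : Icc (-a) a ⊆ Icc (-b) b := Icc_subset_Icc (neg_le_neg hab) hab
  have hneg := hsub (left_mem_Icc.2 haa)
  have hpos := hsub (right_mem_Icc.2 haa)
  have hp {D : Set ℂ} (hD : Convex ℝ D) (h₁ : T (-a) ∈ D) (h₂ : T a ∈ D) (u : ℝ)
      (hu : u ∈ Icc (-a) a) : p u ∈ D :=
    hD.lineMap_mem h₁ h₂ ⟨div_nonneg (by linarith [hu.1]) (by positivity), by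
      rw [div_le_one (by positivity)]; linarith [hu.2]⟩
  have hQ0 (u : ℝ) (hu : u ∈ Icc (-a) a) : Q u ≠ 0 := fun h => by
    have := hQB u hu
    rw [h, norm_zero, mul_zero] at this
    linarith [norm_nonneg (T a), hTB a hpos]
  have hν (u : ℝ) (hu : u ∈ Icc (-a) a) : ν u ∈ Metric.ball 0 ρ := by
    have hpB : ‖p u‖ ≤ B := mem_closedBall_zero_iff.1 (hp (convex_closedBall 0 B)
      (mem_closedBall_zero_iff.2 (hTB _ hneg)) (mem_closedBall_zero_iff.2 (hTB _ hpos)) u hu)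
    rw [mem_ball_zero_iff, norm_div, div_lt_iff₀ (norm_pos_iff.2 (hQ0 u hu))]
    linarith [norm_sub_le (p u) (T u), hTB u (hsub hu), hQB u hu]
  have hνc : ContinuousOn ν (Icc (-a) a) :=
    ContinuousOn.div (by simp only [p, AffineMap.lineMap_apply]; fun_prop) hQ.continuousOn hQ0
  refine ⟨IccExtend haa ((Icc (-a) a).domRestrict ν), hνc.domRestrict.Icc_extend',
    fun u => hν _ (projIcc _ _ _ u).2, fun u hu => ?_⟩
  by_cases hua : u ∈ Icc (-a) a
  · rw [IccExtend_of_mem _ _ hua, domRestrict_apply, mul_div_cancel₀ _ (hQ0 u hua), add_sub_cancel]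
    exact hp hC (hTC _ hneg (by simp [abs_of_pos ha])) (hTC _ hpos (le_abs_self a)) u hua
  · have hν0 : IccExtend haa ((Icc (-a) a).domRestrict ν) u = 0 := by
      rcases le_or_gt u (-a) with h | h
      · simp [IccExtend_of_le_left _ _ h, ν, p]
      · have h' : a ≤ u := (not_le.1 fun h' => hua ⟨h.le, h'⟩).le
        have : (a + a) / (2 * a) = 1 := by field_simp; norm_num
        simp [IccExtend_of_right_le _ _ h', ν, p, this]
    rw [hν0, mul_zero, add_zero]
    exact hTC u hu (not_lt.1 fun h => hua (abs_le.1 h.le))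

theorem exists_continuous_add_mul_mem_thickening {T Q : Polynomial ℂ} {a b e ρ B R y : ℝ}
    (ha : 0 < a) (hab : a ≤ b)
    (hT : ∀ w : ℂ, ‖w‖ ≤ R + b →
      (w.re ≤ -a → ‖T.eval w‖ < e) ∧ (a ≤ w.re → ‖T.eval w - 1‖ < e))
    (hTB : ∀ w : ℂ, ‖w‖ ≤ R + b → ‖T.eval w‖ ≤ B)
    (hQB : ∀ w : ℂ, ‖w‖ ≤ R + b → |w.re| ≤ a → 2 * B < ρ * ‖Q.eval w‖) (hy : |y| ≤ R) :
    ∃ ν : ℝ → ℂ, Continuous ν ∧ (∀ u, ν u ∈ Metric.ball 0 ρ) ∧ ∀ u ∈ Icc (-b) b,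
      T.eval (u + y * Complex.I) + Q.eval (u + y * Complex.I) * ν u ∈
        Metric.thickening e (segment ℝ 0 1) := by
  have hre (u : ℝ) : (u + y * Complex.I : ℂ).re = u := by simp
  have hnorm (u : ℝ) (hu : u ∈ Icc (-b) b) : ‖(u + y * Complex.I : ℂ)‖ ≤ R + b := by
    grw [norm_add_le, norm_mul, Complex.norm_I, mul_one, Complex.norm_real, Complex.norm_real,
      Real.norm_eq_abs, Real.norm_eq_abs, abs_le.2 hu, hy, add_comm]
  refine exists_continuous_add_mul_mem (by fun_prop) (by fun_prop) ha hab
    ((convex_segment (0 : ℂ) 1).thickening e) (fun u hu hu' => ?_) (fun u hu => hTB _ (hnorm u hu))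
    (fun u hu => hQB _ (hnorm u (Icc_subset_Icc (neg_le_neg hab) hab hu)) ?_)
  · rcases le_abs.1 hu' with h | h
    · exact Metric.mem_thickening_iff.2 ⟨1, right_mem_segment ℝ 0 1, by
        simpa only [dist_eq_norm] using (hT _ (hnorm u hu)).2 (by rwa [hre])⟩
    · exact Metric.mem_thickening_iff.2 ⟨0, left_mem_segment ℝ 0 1, by
        simpa only [dist_zero_right] using (hT _ (hnorm u hu)).1 (by rwa [hre, le_neg])⟩
  · rwa [hre, abs_le]

theorem exists_finset_forall_norm_le_dist_lt (R : ℝ) {r : ℝ} (hr : 0 < r) :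
    ∃ L : Finset ℂ, ∀ v : ℂ, ‖v‖ ≤ R → ∃ l ∈ L, dist v l < r := by
  obtain ⟨t, -, ht, hcover⟩ := finite_cover_balls_of_compact (isCompact_closedBall (0 : ℂ) R) hr
  refine ⟨ht.toFinset, fun v hv => ?_⟩
  simpa using hcover (mem_closedBall_zero_iff.2 hv)

theorem exists_pos_norm_eval_le (T : Polynomial ℂ) (R : ℝ) :
    ∃ B > 0, ∀ w : ℂ, ‖w‖ ≤ R → ‖T.eval w‖ ≤ B := by
  obtain ⟨B, hB⟩ := (isCompact_closedBall (0 : ℂ) R).exists_bound_of_continuousOn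
    T.continuous.continuousOn
  exact ⟨max B 1, by positivity, fun w hw =>
    (hB w (mem_closedBall_zero_iff.2 hw)).trans (le_max_left B 1)⟩

/-- Off the slab `|Re w| ≤ η` the term `Q * S` is negligible and `T` is a step function. On the
slab `Q` is huge, so that a tiny value of `S`, attained near any prescribed `v`, moves
`T + Q * S` to the segment `[0, 1]`. -/
theorem exists_crossing_polynomial {η e r : ℝ} (hη : 0 < η) (he : 0 < e) (hr : 0 < r) (R : ℝ) :
    ∃ T Q S : Polynomial ℂ,
      (∀ w v : ℂ, ‖w‖ ≤ R → ‖v‖ ≤ R →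
        (w.re ≤ -η → ‖T.eval w + Q.eval w * S.eval v‖ < e) ∧
        (η ≤ w.re → ‖T.eval w + Q.eval w * S.eval v - 1‖ < e)) ∧
      ∀ (v : ℂ) (y : ℝ), ‖v‖ ≤ R → |y| ≤ R → ∃ H : ℝ → ℂ, Continuous H ∧
        ∀ u ∈ Icc (-η) η, dist (H u) v < r ∧
          T.eval (u + y * Complex.I) + Q.eval (u + y * Complex.I) * S.eval (H u) ∈
            Metric.thickening e (segment ℝ 0 1) := by
  obtain ⟨L, hL⟩ := exists_finset_forall_norm_le_dist_lt R (half_pos hr)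
  obtain ⟨S, ρ, hρ, hS⟩ := exists_polynomial_local_sections L (half_pos hr)
  obtain ⟨T, hT⟩ := exists_polynomial_step (neg_lt_self (half_pos hη)) (R + η) (half_pos he)
  obtain ⟨B, hB, hTB⟩ := exists_pos_norm_eval_le T (R + η)
  obtain ⟨M, hM, hSM⟩ := exists_pos_norm_eval_le S R
  obtain ⟨Q, hQ⟩ := exists_polynomial_large_small (half_pos hη).le (half_lt_self hη) (R + η)
    (3 * B / ρ) (show 0 < e / 2 / M by positivity)
  refine ⟨T, Q, S, fun w v hw hv => ?_, fun v y hv hy => ?_⟩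
  · have hQS (h : η ≤ |w.re|) : ‖Q.eval w * S.eval v‖ ≤ e / 2 := by
      rw [norm_mul, ← div_mul_cancel₀ (e / 2) hM.ne']
      gcongr
      exacts [(hQ w (by linarith)).2 h, hSM v hv]
    refine ⟨fun h => ?_, fun h => ?_⟩
    · linarith [norm_add_le (T.eval w) (Q.eval w * S.eval v), hQS (le_abs.2 (.inr (le_neg.2 h))),
        (hT w (by linarith)).1 (by linarith)]
    · rw [add_sub_right_comm]
      linarith [norm_add_le (T.eval w - 1) (Q.eval w * S.eval v), hQS (le_abs.2 (.inl h)),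
        (hT w (by linarith)).2 (by linarith)]
  · obtain ⟨l, hl, hvl⟩ := hL v hv
    obtain ⟨G, hGc, hG⟩ := hS l hl
    have hQB (w : ℂ) (hw : ‖w‖ ≤ R + η) (hre : |w.re| ≤ η / 2) : 2 * B < ρ * ‖Q.eval w‖ := by
      linarith [(div_le_iff₀' hρ).1 ((hQ w hw).1 hre)]
    obtain ⟨ν, hνc, hν, hνe⟩ := exists_continuous_add_mul_mem_thickening (half_pos hη)
      (half_le_self hη.le) hT hTB hQB hy
    refine ⟨fun u => G (ν u), hGc.comp_continuous hνc hν, fun u hu => ⟨?_, ?_⟩⟩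
    · linarith [dist_triangle_right (G (ν u)) v l, dist_eq_norm (G (ν u)) l, (hG _ (hν u)).2]
    · rw [(hG _ (hν u)).1]
      exact Metric.thickening_mono (half_le_self he.le) _ (hνe u hu)

end Crossing

/-! ### Approximating step functions along a loop -/

section Step

variable {σ : Type*}

/-- The affine polynomial `ζ zᵢ - g`. For `‖ζ‖ = 1`, the zero set of its real part is the real
hyperplane across which the step functions below jump. -/
def levelPoly (i : σ) (ζ : ℂ) (g : ℝ) : MvPolynomial σ ℂ := C ζ * X i - C (g : ℂ)

@[simp]
theorem eval_levelPoly (z : σ → ℂ) (i : σ) (ζ : ℂ) (g : ℝ) :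
    eval z (levelPoly i ζ g) = ζ * z i - g := by
  simp [levelPoly]

theorem exists_affineMap_eq_levelPoly_re (i : σ) (ζ : ℂ) (g : ℝ) :
    ∃ L : (σ → ℂ) →ᵃ[ℝ] ℝ, ∀ z, L z = (eval z (levelPoly i ζ g)).re :=
  ⟨(Complex.reLm ∘ₗ LinearMap.mulLeft ℝ ζ ∘ₗ LinearMap.proj i).toAffineMap -
    AffineMap.const ℝ _ g, fun z => by simp⟩

theorem convex_setOf_levelPoly_re_mem (i : σ) (ζ : ℂ) (g : ℝ) {s : Set ℝ} (hs : Convex ℝ s) :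
    Convex ℝ {z | (eval z (levelPoly i ζ g)).re ∈ s} := by
  obtain ⟨L, hL⟩ := exists_affineMap_eq_levelPoly_re i ζ g
  simpa only [preimage, hL] using hs.affine_preimage L

theorem volume_levelPoly_re_eq_zero [Fintype σ] (i : σ) {ζ : ℂ} (hζ : ζ ≠ 0) (g : ℝ) :
    volume {z : σ → ℂ | (eval z (levelPoly i ζ g)).re = 0} = 0 := by
  obtain ⟨L, hL⟩ := exists_affineMap_eq_levelPoly_re i ζ g
  have hcoe : {z : σ → ℂ | (eval z (levelPoly i ζ g)).re = 0} =
      ((AffineSubspace.mk' (0 : ℝ) ⊥).comap L : Set (σ → ℂ)) := by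
    ext z
    simp [hL]
  rw [hcoe]
  refine Measure.addHaar_affineSubspace _ _ fun htop => ?_
  have hmem : (fun _ => ζ⁻¹ * (g + 1) : σ → ℂ) ∈ (AffineSubspace.mk' (0 : ℝ) ⊥).comap L :=
    htop ▸ AffineSubspace.mem_top _ _ _
  simp [hL, hζ] at hmem

theorem eval_aeval_polynomial (z : σ → ℂ) (P : MvPolynomial σ ℂ) (T : Polynomial ℂ) :
    eval z (Polynomial.aeval P T) = T.eval (eval z P) := by
  rw [← coe_aeval_eq_eval, RingHom.coe_coe, ← Polynomial.aeval_algHom_apply,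
    Polynomial.coe_aeval_eq_eval]

theorem exists_pos_measure_inter_abs_le {E : Type*} [TopologicalSpace E] [MeasurableSpace E]
    [T2Space E] [OpensMeasurableSpace E]
    {μ : Measure E} [μ.OuterRegular] {K : Set E} (hK : IsCompact K) {f : E → ℝ} (hf : Continuous f)
    (hμ : μ (K ∩ {x | f x = 0}) = 0) {c : ℝ} (hc : 0 < c) {δ : ENNReal} (hδ : δ ≠ 0) :
    ∃ η, 0 < η ∧ η < c ∧ μ (K ∩ {x | |f x| ≤ η}) ≤ δ := by
  obtain ⟨V, hKV, hVo, hV⟩ := Set.exists_isOpen_lt_of_lt _ _ (hμ.trans_lt hδ.bot_lt)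
  obtain ⟨η, hη, hle⟩ := (hK.diff hVo).exists_forall_le' (f := fun x => |f x|) (a := 0)
    (by fun_prop) fun x hx => abs_pos.2 fun h => hx.2 (hKV ⟨hx.1, h⟩)
  refine ⟨min (η / 2) (c / 2), by positivity, (min_le_right _ _).trans_lt (half_lt_self hc),
    (measure_mono fun x hx => ?_).trans hV.le⟩
  by_contra hxV
  have hle' := hle x ⟨hx.1, hxV⟩
  have hx' : |f x| ≤ min (η / 2) (c / 2) := hx.2
  linarith [hx'.trans (min_le_left _ _)]

theorem exists_joinedIn_crossing [Fintype σ] {i j : σ} (hij : i ≠ j) {ζ : ℂ} (hζ : ‖ζ‖ = 1)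
    (g : ℝ) {η ρ : ℝ} (hη : 0 ≤ η) {a : σ → ℂ} {Y : Set (σ → ℂ)}
    (haη : (eval a (levelPoly i ζ g)).re ≤ -η)
    (haρ : η < (eval a (levelPoly i ζ g)).re + ρ) {H : ℝ → ℂ} (hH : Continuous H)
    (hHa : ∀ u ∈ Icc (-η) η, H u ∈ Metric.ball (a j) ρ)
    (hY : ∀ u ∈ Icc (-η) η, ∀ z ∈ Metric.ball a ρ,
      eval z (levelPoly i ζ g) = u + (eval a (levelPoly i ζ g)).im * Complex.I →
      z j = H u → z ∈ Y) :
    ∃ b ∈ Metric.ball a ρ, ∃ b' ∈ Metric.ball a ρ, (eval b (levelPoly i ζ g)).re = -η ∧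
      (eval b' (levelPoly i ζ g)).re = η ∧ JoinedIn Y b b' := by
  classical
  have hζ0 : ζ ≠ 0 := fun h => by simp [h] at hζ
  set w : (σ → ℂ) → ℂ := fun z => eval z (levelPoly i ζ g) with hw
  set P : ℝ → σ → ℂ := fun u => Function.update
    (Function.update a i (ζ⁻¹ * (u + (w a).im * Complex.I + g))) j (H u) with hP
  have hρ : 0 < ρ := by linarith
  have hPi (u : ℝ) : P u i = ζ⁻¹ * (u + (w a).im * Complex.I + g) := by
    simp only [hP, Function.update_of_ne hij, Function.update_self]
  have hwP (u : ℝ) : w (P u) = u + (w a).im * Complex.I := by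
    simp only [hw, eval_levelPoly, hPi]
    rw [mul_inv_cancel_left₀ hζ0, add_sub_cancel_right]
  have hwP_re (u : ℝ) : (w (P u)).re = u := by simp [hwP]
  have hPa : ∀ u ∈ Icc (-η) η, P u ∈ Metric.ball a ρ := by
    intro u hu
    refine update_mem_ball (update_mem_ball (Metric.mem_ball_self hρ) ?_) (hHa u hu)
    have hsub : ζ⁻¹ * (u + (w a).im * Complex.I + g) - a i = ζ⁻¹ * ((u - (w a).re : ℝ) : ℂ) := by
      rw [Complex.ofReal_sub]
      have hwa : (w a).re + (w a).im * Complex.I = ζ * a i - g :=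
        (Complex.re_add_im (w a)).trans (eval_levelPoly ..)
      field_simp
      linear_combination hwa
    rw [Metric.mem_ball, dist_eq_norm, hsub, norm_mul, norm_inv, hζ, inv_one, one_mul,
      Complex.norm_real, Real.norm_eq_abs, abs_lt]
    constructor <;> linarith [hu.1, hu.2]
  have hPc : Continuous P := by fun_prop
  have hη' : -η ≤ η := by linarith
  have hl : -η ∈ Icc (-η) η := left_mem_Icc.2 hη'
  have hr : η ∈ Icc (-η) η := right_mem_Icc.2 hη'
  refine ⟨P (-η), hPa _ hl, P η, hPa _ hr, hwP_re _, hwP_re _, ?_⟩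
  have hjoin := ((convex_Icc (-η) η).isPathConnected ⟨_, hl⟩).image hPc
  refine (hjoin.joinedIn _ (mem_image_of_mem P hl) _ (mem_image_of_mem P hr)).mono ?_
  rintro _ ⟨u, hu, rfl⟩
  exact hY u hu _ (hPa u hu) (hwP u) (Function.update_self ..)

theorem joinedIn_inter_ball_of_slab [Fintype σ] {i j : σ} (hij : i ≠ j) {ζ : ℂ} (hζ : ‖ζ‖ = 1)
    (g : ℝ) {η r : ℝ} (hη : 0 < η) {X : Set (σ → ℂ)} {c x y : σ → ℂ}
    (hside : ∀ z ∈ Metric.ball c (3 * r), η ≤ |(eval z (levelPoly i ζ g)).re| → z ∈ X)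
    (hcross : ∀ z ∈ Metric.ball c r, ∃ H : ℝ → ℂ, Continuous H ∧ ∀ u ∈ Icc (-η) η,
      H u ∈ Metric.ball (z j) (2 * r) ∧ ∀ z' ∈ Metric.ball c (3 * r),
        eval z' (levelPoly i ζ g) = u + (eval z (levelPoly i ζ g)).im * Complex.I →
        z' j = H u → z' ∈ X)
    (hx : x ∈ Metric.ball c r) (hy : y ∈ Metric.ball c r)
    (hxη : η < |(eval x (levelPoly i ζ g)).re|) (hyη : η < |(eval y (levelPoly i ζ g)).re|) :
    JoinedIn (X ∩ Metric.ball c (3 * r)) x y := by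
  have hr : 0 < r := Metric.pos_of_mem_ball hx
  have hball : Metric.ball c r ⊆ Metric.ball c (3 * r) := Metric.ball_subset_ball (by linarith)
  set w : (σ → ℂ) → ℂ := fun z => eval z (levelPoly i ζ g) with hw
  have hseg {s : Set ℝ} (hs : Convex ℝ s) (hsη : ∀ u ∈ s, η ≤ |u|) {a b : σ → ℂ}
      (ha : a ∈ Metric.ball c (3 * r)) (hb : b ∈ Metric.ball c (3 * r)) (has : (w a).re ∈ s)
      (hbs : (w b).re ∈ s) : JoinedIn (X ∩ Metric.ball c (3 * r)) a b :=
    .of_segment_subset fun z hz =>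
      have hzb := (convex_ball c (3 * r)).segment_subset ha hb hz
      ⟨hside z hzb (hsη _ ((convex_setOf_levelPoly_re_mem i ζ g hs).segment_subset has hbs hz)),
        hzb⟩
  have hleft (u : ℝ) (hu : u ∈ Iic (-η)) : η ≤ |u| := le_abs.2 (.inr (le_neg.1 hu))
  have hright (u : ℝ) (hu : u ∈ Ici η) : η ≤ |u| := le_abs.2 (.inl hu)
  have hpass {a b : σ → ℂ} (ha : a ∈ Metric.ball c r) (hb : b ∈ Metric.ball c r)
      (haη : (w a).re < -η) (hbη : η < (w b).re) : JoinedIn (X ∩ Metric.ball c (3 * r)) a b := by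
    have hab : (w b).re - (w a).re < 2 * r := by
      have hdist : ‖w b - w a‖ = dist (b i) (a i) := by simp [hw, dist_eq_norm, ← mul_sub, hζ]
      have hre := Complex.re_le_norm (w b - w a)
      rw [Complex.sub_re, hdist] at hre
      linarith [dist_le_pi_dist b a i, dist_triangle_right b a c, Metric.mem_ball.1 ha,
        Metric.mem_ball.1 hb]
    have hac : Metric.ball a (2 * r) ⊆ Metric.ball c (3 * r) :=
      Metric.ball_subset_ball' (by linarith [Metric.mem_ball.1 ha])
    obtain ⟨H, hH, hHa⟩ := hcross a ha
    obtain ⟨p, hp, p', hp', hpη, hp'η, hjoin⟩ := exists_joinedIn_crossing hij hζ g (ρ := 2 * r)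
      (Y := X ∩ Metric.ball c (3 * r)) hη.le haη.le
      (by linarith : η < (w a).re + 2 * r) hH (fun u hu => (hHa u hu).1)
      fun u hu z hz hwz hzj => ⟨(hHa u hu).2 z (hac hz) hwz hzj, hac hz⟩
    exact ((hseg (convex_Iic _) hleft (hball ha) (hac hp) haη.le hpη.le).trans hjoin).trans
      (hseg (convex_Ici _) hright (hac hp') (hball hb) hp'η.ge hbη.le)
  rcases lt_abs.1 hxη with hxη | hxη <;> rcases lt_abs.1 hyη with hyη | hyη
  · exact hseg (convex_Ici _) hright (hball hx) (hball hy) hxη.le hyη.le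
  · exact (hpass hy hx (lt_neg.1 hyη) hxη).symm
  · exact hpass hx hy (lt_neg.1 hxη) hyη
  · exact hseg (convex_Iic _) hleft (hball hx) (hball hy) (lt_neg.1 hxη).le (lt_neg.1 hyη).le

/-- The pairs `(u, v)` for which `v` is an `e`-approximation to the value at `u` of the multivalued
step function that is `0` for `u < 0`, `[0, 1]` at `0`, and `1` for `u > 0`. -/
def stepNhd (e : ℝ) : Set (ℝ × ℂ) :=
  {p | (p.1 ≤ -e → p.2 ∈ Metric.ball 0 e) ∧ (e ≤ p.1 → p.2 ∈ Metric.ball 1 e) ∧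
    p.2 ∈ Metric.thickening e (segment ℝ 0 1)}

theorem isOpen_stepNhd (e : ℝ) : IsOpen (stepNhd e) := by
  simp only [stepNhd, imp_iff_not_or, not_le]
  exact (((isOpen_lt continuous_const continuous_fst).union
    (Metric.isOpen_ball.preimage continuous_snd)).inter
    (((isOpen_lt continuous_fst continuous_const).union
    (Metric.isOpen_ball.preimage continuous_snd)).inter
    (Metric.isOpen_thickening.preimage continuous_snd)))

/-- The loops along which some polynomial is `e`-close to the step function that jumps where the
real part of `ζ zᵢ` crosses the level `g`. -/
def stepLoops (i : σ) (ζ : ℂ) (g e : ℝ) : Set C(UnitAddCircle, σ → ℂ) :=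
  {γ | ∃ F : MvPolynomial σ ℂ,
    ∀ t, ((eval (γ t) (levelPoly i ζ g)).re, eval (γ t) F) ∈ stepNhd e}

theorem isOpen_stepLoops (i : σ) (ζ : ℂ) (g e : ℝ) : IsOpen (stepLoops i ζ g e) := by
  simp only [stepLoops, ofPred_exists]
  exact isOpen_iUnion fun F => isOpen_setOf_forall_mem
    ((isOpen_stepNhd e).preimage ((Complex.continuous_re.comp
      (continuous_eval _)).prodMk (continuous_eval F)))

theorem mem_stepNhd_of_lt_abs {η e u : ℝ} {v : ℂ} (hη : 0 < η) (hηe : η < e)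
    (hneg : u ≤ -η → ‖v‖ < e) (hpos : η ≤ u → ‖v - 1‖ < e) (hu : η ≤ |u|) : (u, v) ∈ stepNhd e := by
  rcases le_abs.1 hu with hu | hu
  · have hv : v ∈ Metric.ball 1 e := mem_ball_iff_norm.2 (hpos hu)
    exact ⟨fun hle => by linarith, fun _ => hv,
      Metric.mem_thickening_iff.2 ⟨1, right_mem_segment ℝ 0 1, hv⟩⟩
  · have hv : v ∈ Metric.ball 0 e := mem_ball_zero_iff.2 (hneg (le_neg.1 hu))
    exact ⟨fun _ => hv, fun hle => by linarith,
      Metric.mem_thickening_iff.2 ⟨0, left_mem_segment ℝ 0 1, hv⟩⟩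

theorem exists_slab_polynomial [Finite σ] {B : Set (σ → ℂ)} (hB : Bornology.IsBounded B) (i j : σ)
    (ζ : ℂ) (g : ℝ) {η e r : ℝ} (hη : 0 < η) (hηe : η < e) (hr : 0 < r) :
    ∃ F : MvPolynomial σ ℂ,
      (∀ z ∈ B, η ≤ |(eval z (levelPoly i ζ g)).re| →
        ((eval z (levelPoly i ζ g)).re, eval z F) ∈ stepNhd e) ∧
      ∀ z ∈ B, ∃ H : ℝ → ℂ, Continuous H ∧ ∀ u ∈ Icc (-η) η, H u ∈ Metric.ball (z j) r ∧
        ∀ z' : σ → ℂ,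
          eval z' (levelPoly i ζ g) = u + (eval z (levelPoly i ζ g)).im * Complex.I → z' j = H u →
          ((eval z' (levelPoly i ζ g)).re, eval z' F) ∈ stepNhd e := by
  cases nonempty_fintype σ
  obtain ⟨R, hR⟩ : ∃ R, ∀ z ∈ B, ‖eval z (levelPoly i ζ g)‖ ≤ R ∧ ‖z j‖ ≤ R := by
    have hcont : Continuous fun z : σ → ℂ => (eval z (levelPoly i ζ g), z j) :=
      (continuous_eval _).prodMk (continuous_apply j)
    obtain ⟨R, hR⟩ := (hB.isCompact_closure.image hcont).isBounded.exists_norm_le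
    exact ⟨R, fun z hz => norm_prod_le_iff.1 (hR _ (mem_image_of_mem _ (subset_closure hz)))⟩
  obtain ⟨T, Q, S, hside, hcross⟩ := exists_crossing_polynomial hη (hη.trans hηe) hr R
  set F : MvPolynomial σ ℂ := Polynomial.aeval (levelPoly i ζ g) T +
    Polynomial.aeval (levelPoly i ζ g) Q * Polynomial.aeval (X j) S with hF
  have hFz (z : σ → ℂ) : eval z F = T.eval (eval z (levelPoly i ζ g)) +
      Q.eval (eval z (levelPoly i ζ g)) * S.eval (z j) := by
    simp only [hF, map_add, map_mul, eval_aeval_polynomial, eval_X]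
  refine ⟨F, fun z hz hzη => ?_, fun z hz => ?_⟩
  · obtain ⟨hneg, hpos⟩ := hside _ _ (hR z hz).1 (hR z hz).2
    exact hFz z ▸ mem_stepNhd_of_lt_abs hη hηe hneg hpos hzη
  · obtain ⟨H, hH, hHu⟩ := hcross (z j) _ (hR z hz).2
      ((Complex.abs_im_le_norm _).trans (hR z hz).1)
    refine ⟨H, hH, fun u hu => ⟨(hHu u hu).1, fun z' hz' hz'j => ?_⟩⟩
    have hre : (eval z' (levelPoly i ζ g)).re = u := by simp only [hz']; simp
    rw [hre, hFz, hz', hz'j]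
    exact ⟨fun h => by linarith [hu.1], fun h => by linarith [hu.2], (hHu u hu).2⟩

theorem nonempty_inter_ball_of_lt_levelPoly [Fintype σ] (i : σ) {ζ : ℂ} (hζ : ‖ζ‖ = 1)
    (g : ℝ) {η ρ : ℝ} (hη : 0 ≤ η) (hηρ : η < ρ) (z : σ → ℂ) :
    ({z | η < |(eval z (levelPoly i ζ g)).re|} ∩ Metric.ball z ρ).Nonempty := by
  classical
  obtain ⟨h, hηh, hhρ⟩ := exists_between hηρ
  have hζ0 : ζ ≠ 0 := fun h => by simp [h] at hζ
  have hmove (s : ℝ) (hs : |s| = h) :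
      Function.update z i (z i + ζ⁻¹ * s) ∈ Metric.ball z ρ ∧
      (eval (Function.update z i (z i + ζ⁻¹ * s)) (levelPoly i ζ g)).re =
        (eval z (levelPoly i ζ g)).re + s := by
    refine ⟨update_mem_ball (Metric.mem_ball_self (hη.trans_lt hηρ)) ?_, ?_⟩
    · simpa [hζ, hs] using hhρ
    · simp only [eval_levelPoly, Function.update_self, mul_add, mul_inv_cancel_left₀ hζ0,
        Complex.sub_re, Complex.add_re, Complex.ofReal_re]
      ring
  have hh : |h| = h := abs_of_nonneg (hη.trans hηh.le)
  rcases le_total 0 (eval z (levelPoly i ζ g)).re with hz | hz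
  · obtain ⟨hball, hre⟩ := hmove h hh
    refine ⟨_, ?_, hball⟩
    rw [mem_ofPred_eq, hre]
    exact lt_abs.2 (.inl (by linarith))
  · obtain ⟨hball, hre⟩ := hmove (-h) ((abs_neg h).trans hh)
    refine ⟨_, ?_, hball⟩
    rw [mem_ofPred_eq, hre]
    exact lt_abs.2 (.inr (by linarith))

theorem volumeDense_stepLoops [Fintype σ] {i j : σ} (hij : i ≠ j) {ζ : ℂ} (hζ : ‖ζ‖ = 1) (g : ℝ)
    {e : ℝ} (he : 0 < e) : VolumeDense volume (stepLoops i ζ g e) := by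
  intro γ ε hε
  have hζ0 : ζ ≠ 0 := fun h => by simp [h] at hζ
  have hwc : Continuous fun z : σ → ℂ => (eval z (levelPoly i ζ g)).re :=
    Complex.continuous_re.comp (continuous_eval _)
  have hγc : IsCompact (range γ) := isCompact_range γ.continuous
  obtain ⟨η, hη, hηlt, hηloss⟩ := exists_pos_measure_inter_abs_le (μ := volume) hγc hwc
    (measure_mono_null inter_subset_right (volume_levelPoly_re_eq_zero i hζ0 g))
    (lt_min he (by positivity : 0 < ε / 12)) (ENNReal.ofReal_pos.2 (half_pos hε)).ne'
  obtain ⟨hηe, hηε⟩ := lt_min_iff.1 hηlt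
  set D : Set (σ → ℂ) := {z | η < |(eval z (levelPoly i ζ g)).re|}
  have hD : IsOpen D := isOpen_lt continuous_const hwc.abs
  set B : Set (σ → ℂ) := Metric.thickening ε (range γ)
  have hballB (t : UnitAddCircle) {ρ : ℝ} (hρ : ρ ≤ ε) : Metric.ball (γ t) ρ ⊆ B :=
    (Metric.ball_subset_ball hρ).trans (Metric.ball_subset_thickening (mem_range_self t) ε)
  obtain ⟨F, hside, hcross⟩ := exists_slab_polynomial hγc.isBounded.thickening i j ζ g hη hηe
    (by positivity : 0 < 2 * (ε / 6))
  set V : Set (σ → ℂ) := {z | z ∈ B → ((eval z (levelPoly i ζ g)).re, eval z F) ∈ stepNhd e}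
  have hloss : volume (range γ \ (D ∪ γ '' ∅)) ≤ ENNReal.ofReal (ε / 2) := by
    refine (measure_mono ?_).trans hηloss
    rintro z ⟨hzγ, hzD⟩
    exact ⟨hzγ, not_lt.1 fun h : η < |(eval z (levelPoly i ζ g)).re| => hzD (.inl h)⟩
  obtain ⟨γ', -, hγ'V, hγ'γ, hvol⟩ := exists_loop_push_dist_lt (μ := volume) (X := V) (r := ε / 6)
    isClosed_empty isClosed_univ (empty_disjoint _) hD (fun z hz hzB => hside z hzB (le_of_lt hz))
    hε (by positivity) (by linarith)
    (fun t => nonempty_inter_ball_of_lt_levelPoly i hζ g hη.le (by linarith) (γ t))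
    (fun t x hx y hy => by
      rw [show ε / 2 = 3 * (ε / 6) by ring]
      refine joinedIn_inter_ball_of_slab hij hζ g hη (fun z _ hzη hzB => hside z hzB hzη)
        (fun z hz => ?_) hx.2 hy.2 hx.1 hy.1
      obtain ⟨H, hH, hHu⟩ := hcross z (hballB t (by linarith) hz)
      exact ⟨H, hH, fun u hu => ⟨(hHu u hu).1, fun z' _ hz' hz'j _ => (hHu u hu).2 z' hz' hz'j⟩⟩)
    hloss
  refine ⟨γ', ⟨F, fun t => hγ'V (mem_univ t) (hballB t le_rfl ?_)⟩, hγ'γ, hvol⟩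
  exact (ContinuousMap.dist_apply_le_dist t).trans_lt hγ'γ

end Step

/-! ### Approximating complex conjugation along a loop -/

section Conj

theorem abs_sum_range_sub_le_two {s : ℕ → ℝ} {y : ℝ} {M : ℕ} (hy : 0 ≤ y) (hyM : y ≤ M)
    (hs : ∀ k, s k ∈ Icc 0 1) (hone : ∀ k : ℕ, (k : ℝ) + 1 ≤ y → s k = 1)
    (hzero : ∀ k : ℕ, y + 1 ≤ k → s k = 0) : |∑ k ∈ Finset.range M, s k - y| ≤ 2 := by
  have hlower : (⌊y⌋₊ : ℝ) ≤ ∑ k ∈ Finset.range M, s k :=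
    calc (⌊y⌋₊ : ℝ) = ∑ k ∈ Finset.range ⌊y⌋₊, s k := by
          rw [Finset.sum_congr rfl fun k hk => hone k ?_]
          · simp
          · exact_mod_cast (Nat.le_floor_iff hy).1 (Finset.mem_range.1 hk)
      _ ≤ _ := Finset.sum_le_sum_of_subset_of_nonneg
        (Finset.range_subset_range.2 (Nat.floor_le_of_le hyM)) fun k _ _ => (hs k).1
  have hupper : ∑ k ∈ Finset.range M, s k ≤ ⌈y + 1⌉₊ :=
    calc ∑ k ∈ Finset.range M, s k ≤ ∑ k ∈ Finset.range (M + ⌈y + 1⌉₊), s k :=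
          Finset.sum_le_sum_of_subset_of_nonneg (Finset.range_subset_range.2 le_self_add)
            fun k _ _ => (hs k).1
      _ = ∑ k ∈ Finset.range ⌈y + 1⌉₊, s k := (Finset.sum_subset
          (Finset.range_subset_range.2 le_add_self) fun k _ hk =>
            hzero k (Nat.ceil_le.1 (not_lt.1 fun h => hk (Finset.mem_range.2 h)))).symm
      _ ≤ ⌈y + 1⌉₊ := (Finset.sum_le_card_nsmul _ _ 1 fun k _ => (hs k).2).trans_eq (by simp)
  rw [abs_le]
  constructor <;> linarith [Nat.lt_floor_add_one y, Nat.ceil_lt_add_one (by linarith : 0 ≤ y + 1)]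

theorem exists_mem_Icc_of_mem_stepNhd {u e : ℝ} {v : ℂ} (he : 0 < e) (h : (u, v) ∈ stepNhd e) :
    ∃ s ∈ Icc (0 : ℝ) 1, ‖v - s‖ < e ∧ (e ≤ u → s = 1) ∧ (u ≤ -e → s = 0) := by
  obtain ⟨hneg, hpos, hseg⟩ := h
  rcases le_or_gt e u with hu | hu
  · exact ⟨1, right_mem_Icc.2 zero_le_one, by simpa using mem_ball_iff_norm.1 (hpos hu),
      fun _ => rfl, fun h => by linarith⟩
  rcases le_or_gt u (-e) with hu' | hu'
  · exact ⟨0, left_mem_Icc.2 zero_le_one, by simpa using hneg hu', fun h => by linarith,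
      fun _ => rfl⟩
  · obtain ⟨_, hp, hvp⟩ := Metric.mem_thickening_iff.1 hseg
    rw [segment_eq_image] at hp
    obtain ⟨s, hs, rfl⟩ := hp
    exact ⟨s, hs, by simpa [dist_eq_norm] using hvp, fun h => by linarith, fun h => by linarith⟩

theorem norm_average_sub_le {n m : ℕ} (hn : 0 < n) {h e : ℝ} (he : 0 < e) (hh : |n * h| ≤ m)
    (hne : e ≤ 1 / n) (hme : 2 * m * e ≤ 1) {v : ℕ → ℂ}
    (hv : ∀ k : ℕ, (h - (k - m) / n, v k) ∈ stepNhd e) :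
    ‖(1 / n : ℂ) * (∑ k ∈ Finset.range (2 * m), v k - m) - h‖ ≤ 3 / n := by
  choose s hs hvs hone hzero using fun k => exists_mem_Icc_of_mem_stepNhd he (hv k)
  set y : ℝ := n * h + m with hy
  have hlevel (k : ℕ) : h - (k - m) / n = (y - k) / n := by rw [hy]; field_simp; ring
  have hsum : |∑ k ∈ Finset.range (2 * m), s k - y| ≤ 2 := by
    refine abs_sum_range_sub_le_two (by linarith [(abs_le.1 hh).1])
      (by push_cast; linarith [(abs_le.1 hh).2]) hs (fun k hk => hone k ?_) fun k hk => hzero k ?_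
    · exact hne.trans (by rw [hlevel]; gcongr; linarith)
    · rw [hlevel, le_neg, ← neg_div]
      exact hne.trans (by gcongr; linarith)
  have hvsum : ‖∑ k ∈ Finset.range (2 * m), (v k - s k)‖ ≤ 1 :=
    (norm_sum_le_of_le _ fun k _ => (hvs k).le).trans (by simpa using hme)
  have hsplit : (1 / n : ℂ) * (∑ k ∈ Finset.range (2 * m), v k - m) - h =
      (∑ k ∈ Finset.range (2 * m), (v k - s k) +
        ((∑ k ∈ Finset.range (2 * m), s k - y : ℝ) : ℂ)) / n := by
    have hnC : (n : ℂ) ≠ 0 := Nat.cast_ne_zero.2 hn.ne'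
    rw [Finset.sum_sub_distrib, hy]
    push_cast
    field_simp
    ring
  rw [hsplit, norm_div, Complex.norm_natCast]
  gcongr
  calc _ ≤ 1 + 2 := norm_add_le_of_le hvsum (by rwa [Complex.norm_real])
    _ = 3 := by norm_num

theorem exists_polynomial_norm_sub_re_lt {σ : Type*} {i : σ} {ζ : ℂ} {γ : C(UnitAddCircle, σ → ℂ)}
    (hγ : ∀ (g : ℚ) (n : ℕ), γ ∈ stepLoops i ζ g (1 / ((n : ℝ) + 1))) {e : ℝ} (he : 0 < e) :
    ∃ P : MvPolynomial σ ℂ, ∀ t, ‖eval (γ t) P - (ζ * γ t i).re‖ < e := by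
  obtain ⟨R, hR⟩ : ∃ R, ∀ t, |(ζ * γ t i).re| ≤ R := by
    obtain ⟨R, hR⟩ := isCompact_univ.exists_bound_of_continuousOn
      (f := fun t => (ζ * γ t i).re) (by fun_prop)
    exact ⟨R, fun t => hR t (mem_univ t)⟩
  obtain ⟨n, hn⟩ := exists_nat_gt (3 / e)
  obtain ⟨m, hm⟩ := exists_nat_ge (n * R)
  have hn0 : (0 : ℝ) < n := (by positivity : 0 < 3 / e).trans hn
  choose F hF using fun k : ℕ => hγ ((k - m) / n) (n + 2 * m)
  refine ⟨C (1 / (n : ℂ)) * (∑ k ∈ Finset.range (2 * m), F k - C (m : ℂ)), fun t => ?_⟩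
  have hcast : (((n + 2 * m : ℕ) : ℝ) + 1) = n + 2 * m + 1 := by push_cast; ring
  rw [map_mul, map_sub, map_sum, eval_C, eval_C]
  refine (norm_average_sub_le (Nat.cast_pos.1 hn0) (e := 1 / ((n + 2 * m : ℕ) + 1))
    (by positivity) ?_ ?_ ?_ fun k => ?_).trans_lt (div_lt_comm₀ he hn0 |>.1 hn)
  · rw [abs_mul, Nat.abs_cast]
    exact (mul_le_mul_of_nonneg_left (hR t) hn0.le).trans hm
  · exact one_div_le_one_div_of_le hn0 (by rw [hcast]; linarith [m.cast_nonneg (α := ℝ)])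
  · rw [mul_one_div, div_le_one (by positivity), hcast]
    linarith
  · simpa using hF k t

theorem exists_polynomial_norm_sub_conj_lt {σ : Type*} {i : σ} {γ : C(UnitAddCircle, σ → ℂ)}
    (hre : ∀ (g : ℚ) (n : ℕ), γ ∈ stepLoops i 1 g (1 / ((n : ℝ) + 1)))
    (him : ∀ (g : ℚ) (n : ℕ), γ ∈ stepLoops i (-Complex.I) g (1 / ((n : ℝ) + 1))) {e : ℝ}
    (he : 0 < e) :
    ∃ P : MvPolynomial σ ℂ, ∀ t, ‖eval (γ t) P - starRingEnd ℂ (γ t i)‖ < e := by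
  obtain ⟨P, hP⟩ := exists_polynomial_norm_sub_re_lt hre (half_pos he)
  obtain ⟨Q, hQ⟩ := exists_polynomial_norm_sub_re_lt him (half_pos he)
  refine ⟨P - C Complex.I * Q, fun t => ?_⟩
  have hsplit : eval (γ t) (P - C Complex.I * Q) - starRingEnd ℂ (γ t i) =
      (eval (γ t) P - ((1 * γ t i).re : ℂ)) -
        Complex.I * (eval (γ t) Q - ((-Complex.I * γ t i).re : ℂ)) := by
    rw [map_sub, map_mul, eval_C]
    apply Complex.ext <;> simp <;> ring
  calc _ ≤ ‖eval (γ t) P - ((1 * γ t i).re : ℂ)‖ +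
        ‖Complex.I * (eval (γ t) Q - ((-Complex.I * γ t i).re : ℂ))‖ := hsplit ▸ norm_sub_le _ _
    _ < e / 2 + e / 2 := by
      rw [norm_mul, Complex.norm_I, one_mul ‖_‖]
      exact add_lt_add (hP t) (hQ t)
    _ = e := add_halves e

end Conj

/-! ### Polynomial approximation on compact sets -/

section PolyRestrict

variable {σ : Type*}

/-- The restriction of polynomial functions to `K ⊆ ℂ^σ`; when `K` is compact, the closure of the
range of this algebra homomorphism is the uniform algebra `P(K)`. -/
def polyRestrict (K : Set (σ → ℂ)) : MvPolynomial σ ℂ →ₐ[ℂ] C(K, ℂ) :=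
  aeval fun i => ⟨fun x => (x : σ → ℂ) i, (continuous_apply i).comp continuous_subtype_val⟩

@[simp]
theorem polyRestrict_apply (K : Set (σ → ℂ)) (p : MvPolynomial σ ℂ) (x : K) :
    polyRestrict K p x = eval (x : σ → ℂ) p := by
  induction p using MvPolynomial.induction_on with
  | C a => simp [polyRestrict]
  | add p q hp hq => simp [hp, hq]
  | mul_X p j hp => rw [map_mul, ContinuousMap.mul_apply, hp, map_mul, eval_X]; simp [polyRestrict]

variable {K : Set (σ → ℂ)}

theorem mem_closure_range_polyRestrict [CompactSpace K] {f : C(K, ℂ)} :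
    f ∈ closure (range (polyRestrict K)) ↔
      ∀ e > 0, ∃ p : MvPolynomial σ ℂ, ∀ x : K, ‖f x - eval (x : σ → ℂ) p‖ < e := by
  rw [Metric.mem_closure_range_iff]
  refine forall₂_congr fun e he => exists_congr fun p => ?_
  rw [ContinuousMap.dist_lt_iff he]
  simp only [dist_eq_norm, polyRestrict_apply]

theorem polyRestrict_range_topologicalClosure_eq_top [CompactSpace K]
    (h : ∀ i, ∀ e > 0, ∃ P : MvPolynomial σ ℂ, ∀ x ∈ K, ‖eval x P - starRingEnd ℂ (x i)‖ < e) :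
    (polyRestrict K).range.topologicalClosure = ⊤ := by
  set A : StarSubalgebra ℂ C(K, ℂ) := StarAlgebra.adjoin ℂ (range fun i => polyRestrict K (X i))
  have hA : A.toSubalgebra ≤ (polyRestrict K).range.topologicalClosure := by
    rw [StarAlgebra.adjoin_toSubalgebra]
    refine Algebra.adjoin_le ?_
    rintro g (⟨i, rfl⟩ | ⟨i, hi⟩)
    · exact subset_closure ⟨X i, rfl⟩
    · refine mem_closure_range_polyRestrict.2 fun e he => (h i e he).imp fun P hP x => ?_
      rw [← star_star g, ← hi, norm_sub_rev]
      simpa using hP x x.2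
  have hsep : A.SeparatesPoints := fun x y hxy => by
    obtain ⟨i, hi⟩ := Function.ne_iff.1 (Subtype.coe_injective.ne hxy)
    exact ⟨_, ⟨_, StarAlgebra.subset_adjoin ℂ _ (mem_range_self i), rfl⟩, by simpa using hi⟩
  have htop := ContinuousMap.starSubalgebra_topologicalClosure_eq_top_of_separatesPoints A hsep
  refine eq_top_iff.2 fun g _ => ?_
  exact closure_minimal hA (polyRestrict K).range.isClosed_topologicalClosure
    (show g ∈ A.topologicalClosure by rw [htop]; trivial)

end PolyRestrict

section Hull

variable {N : ℕ} {K : Set (Fin N → ℂ)}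

theorem polyEqContinuous_of_conj (hK : IsCompact K)
    (h : ∀ i, ∀ e > 0, ∃ P : MvPolynomial (Fin N) ℂ,
      ∀ x ∈ K, ‖eval x P - starRingEnd ℂ (x i)‖ < e) : PolyEqContinuous K := by
  intro f hf δ hδ
  have : CompactSpace K := isCompact_iff_compactSpace.1 hK
  have hmem : (⟨K.domRestrict f, hf.domRestrict⟩ : C(K, ℂ)) ∈
      (polyRestrict K).range.topologicalClosure := by
    rw [polyRestrict_range_topologicalClosure_eq_top h]
    trivial
  obtain ⟨p, hp⟩ := mem_closure_range_polyRestrict.1 hmem δ hδ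
  exact ⟨p, fun x hx => hp ⟨x, hx⟩⟩

theorem subset_polyHull (hK : IsCompact K) : K ⊆ polyHull K := by
  intro z hz p
  obtain ⟨B, hB⟩ := hK.exists_bound_of_continuousOn (continuous_eval p).continuousOn
  have hbdd : BddAbove (range fun x => ⨆ _ : x ∈ K, ‖eval x p‖) := by
    refine ⟨max B 0, ?_⟩
    rintro _ ⟨x, rfl⟩
    exact Real.iSup_le (fun hx => (hB x hx).trans (le_max_left _ _)) (le_max_right _ _)
  simpa only [ciSup_pos hz] using le_ciSup hbdd z

theorem not_mem_polyHull_of_norm_eval_le {z : Fin N → ℂ} {p : MvPolynomial (Fin N) ℂ} {r : ℝ}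
    (hr : 0 ≤ r) (hp : ∀ x ∈ K, ‖eval x p‖ ≤ r) (hz : r < ‖eval z p‖) : z ∉ polyHull K :=
  fun h => hz.not_ge <| (h p).trans <| Real.iSup_le (fun x => Real.iSup_le (hp x) hr) hr

theorem exists_continuousOn_sum_sub_mul_eq_one {z : Fin N → ℂ} (hz : z ∉ K) :
    ∃ q : Fin N → (Fin N → ℂ) → ℂ, (∀ i, ContinuousOn (q i) K) ∧
      ∀ x ∈ K, ∑ i, (x i - z i) * q i x = 1 := by
  have hsum (x : Fin N → ℂ) : ∑ i, (x i - z i) * starRingEnd ℂ (x i - z i) =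
      ((∑ i, ‖x i - z i‖ ^ 2 : ℝ) : ℂ) := by
    push_cast
    exact Finset.sum_congr rfl fun i _ => Complex.mul_conj' _
  have hne : ∀ x ∈ K, ((∑ i, ‖x i - z i‖ ^ 2 : ℝ) : ℂ) ≠ 0 := by
    intro x hx h0
    rw [Complex.ofReal_eq_zero, Finset.sum_eq_zero_iff_of_nonneg fun _ _ => by positivity] at h0
    refine hz ((funext fun i => ?_ : x = z) ▸ hx)
    simpa [sub_eq_zero] using h0 i (Finset.mem_univ i)
  refine ⟨fun i x => starRingEnd ℂ (x i - z i) / ((∑ i, ‖x i - z i‖ ^ 2 : ℝ) : ℂ),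
    fun i => ContinuousOn.div ?_ ?_ hne, fun x hx => ?_⟩
  · exact (Complex.continuous_conj.comp (by fun_prop)).continuousOn
  · exact (Complex.continuous_ofReal.comp (by fun_prop)).continuousOn
  · simp only [← mul_div_assoc]
    rw [← Finset.sum_div, hsum, div_self (hne x hx)]

theorem PolyEqContinuous.isPolynomiallyConvex (hK : IsCompact K) (h : PolyEqContinuous K) :
    IsPolynomiallyConvex K := by
  refine (subset_polyHull hK).antisymm' fun z hz => by_contra fun hzK => ?_
  obtain ⟨q, hq, hsum⟩ := exists_continuousOn_sum_sub_mul_eq_one hzK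
  obtain ⟨B, hB0, hB⟩ : ∃ B > 0, ∀ x ∈ K, ‖x - z‖ ≤ B :=
    (hK.isBounded.sub (Bornology.isBounded_singleton (x := z))).exists_pos_norm_le.imp
      fun B hB => ⟨hB.1, fun x hx => hB.2 _ (sub_mem_sub hx rfl)⟩
  choose P hP using fun i => h (q i) (hq i) (1 / (2 * (N + 1) * B)) (by positivity)
  refine not_mem_polyHull_of_norm_eval_le (p := 1 - ∑ i, (X i - C (z i)) * P i) (r := 1 / 2)
    (by norm_num) (fun x hx => ?_) ?_ hz
  · have hdiff : eval x (1 - ∑ i, (X i - C (z i)) * P i) =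
        ∑ i, (x i - z i) * (q i x - eval x (P i)) := by
      simp [mul_sub (α := ℂ), Finset.sum_sub_distrib, hsum x hx]
    calc ‖eval x (1 - ∑ i, (X i - C (z i)) * P i)‖
        ≤ ∑ _i : Fin N, B * (1 / (2 * (N + 1) * B)) := by
          rw [hdiff]
          refine norm_sum_le_of_le _ fun i _ => ?_
          rw [norm_mul]
          gcongr
          · exact (norm_le_pi_norm (x - z) i).trans (hB x hx)
          · exact (hP i x hx).le
      _ = N / (2 * (N + 1)) := by
          rw [Finset.sum_const, Finset.card_univ, Fintype.card_fin, nsmul_eq_mul]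
          field_simp
      _ ≤ 1 / 2 := by rw [div_le_div_iff₀ (by positivity) two_pos]; linarith
  · simp only [map_sub, map_one, map_sum, map_mul, eval_X, eval_C, sub_self, zero_mul,
      Finset.sum_const_zero, sub_zero, norm_one]
    norm_num

end Hull

section Translation

theorem exists_eval_eq_eval_add {σ R : Type*} [CommSemiring R] (v : σ → R)
    (p : MvPolynomial σ R) : ∃ q : MvPolynomial σ R, ∀ z, eval z q = eval (z + v) p := by
  refine ⟨bind₁ (fun i => X i + C (v i)) p, fun z => ?_⟩
  rw [eval, eval₂Hom_bind₁]
  simp only [map_add, coe_eval₂Hom, eval₂_X, eval₂_C, RingHom.id_apply]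
  rfl

theorem PolyEqContinuous.image_add_right {N : ℕ} {K : Set (Fin N → ℂ)} (h : PolyEqContinuous K)
    (v : Fin N → ℂ) : PolyEqContinuous ((· + v) '' K) := by
  intro f hf δ hδ
  obtain ⟨p, hp⟩ := h (fun x => f (x + v))
    (hf.comp (continuous_add_const v).continuousOn (mapsTo_image _ K)) δ hδ
  obtain ⟨q, hq⟩ := exists_eval_eq_eval_add (-v) p
  refine ⟨q, forall_mem_image.2 fun x hx => ?_⟩
  rw [hq, add_neg_cancel_right]
  exact hp x hx

end Translation

/-! ### Density of zero-free polynomials -/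

section ZeroFree

variable {σ : Type*}

/-- The polynomials without zeros on `J` are dense among all polynomials, for uniform convergence
on compact sets. Quantifying over all compact sets makes the notion invariant under translations
of `J`. -/
def ZeroFreeDense (J : Set (σ → ℂ)) : Prop :=
  ∀ K : Set (σ → ℂ), IsCompact K → ∀ p : MvPolynomial σ ℂ, ∀ δ > 0,
    ∃ q : MvPolynomial σ ℂ, (∀ z ∈ J, eval z q ≠ 0) ∧ ∀ z ∈ K, ‖eval z p - eval z q‖ < δ

theorem ZeroFreeDense.image_add_right {J : Set (σ → ℂ)} (h : ZeroFreeDense J) (v : σ → ℂ) :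
    ZeroFreeDense ((· + v) '' J) := by
  intro K hK p δ hδ
  obtain ⟨p', hp'⟩ := exists_eval_eq_eval_add v p
  obtain ⟨q', hq'J, hq'K⟩ := h ((· + -v) '' K) (hK.image (continuous_add_const _)) p' δ hδ
  obtain ⟨q, hq⟩ := exists_eval_eq_eval_add (-v) q'
  refine ⟨q, forall_mem_image.2 fun x hx => ?_, fun z hz => ?_⟩
  · rw [hq, add_neg_cancel_right]
    exact hq'J x hx
  · simpa only [hp', hq, neg_add_cancel_right] using hq'K _ (mem_image_of_mem _ hz)

theorem exists_countable_dense_polynomials [Finite σ] {K : Set (σ → ℂ)} (hK : IsCompact K) :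
    ∃ S : Set (MvPolynomial σ ℂ), S.Countable ∧
      ∀ p : MvPolynomial σ ℂ, ∀ δ > 0, ∃ q ∈ S, ∀ z ∈ K, ‖eval z p - eval z q‖ < δ := by
  cases nonempty_fintype σ
  have : CompactSpace K := isCompact_iff_compactSpace.1 hK
  obtain ⟨T, hT, hTc, hTdense⟩ := (TopologicalSpace.IsSeparable.of_separableSpace
    (range (polyRestrict K))).exists_countable_dense_subset
  choose! g hg using fun f (hf : f ∈ T) => mem_range.1 (hT hf)
  refine ⟨g '' T, hTc.image g, fun p δ hδ => ?_⟩
  obtain ⟨f, hfT, hf⟩ := Metric.mem_closure_iff.1 (hTdense (mem_range_self p)) δ hδ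
  refine ⟨g f, mem_image_of_mem g hfT, fun z hz => ?_⟩
  rw [← hg f hfT, ContinuousMap.dist_lt_iff hδ] at hf
  simpa only [polyRestrict_apply, dist_eq_norm] using hf ⟨z, hz⟩

variable [Fintype σ]

theorem volumeResidual_zeroFreeDense :
    VolumeResidual volume {γ : C(UnitAddCircle, σ → ℂ) | ZeroFreeDense (range γ)} := by
  choose S hSc hS using fun R : ℕ =>
    exists_countable_dense_polynomials (isCompact_closedBall (0 : σ → ℂ) R)
  have (R : ℕ) : Countable (S R) := (hSc R).to_subtype
  choose c hc hnull using fun (p : MvPolynomial σ ℂ) (n : ℕ) =>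
    exists_volume_eval_add_C_eq_zero p (Nat.one_div_pos_of_nat (α := ℝ) (n := n))
  refine (VolumeResidual.iInter fun k : Σ R, S R × ℕ =>
    (volumeDense_eval_ne_zero (hnull k.2.1 k.2.2)).volumeResidual (isOpen_setOf_forall_mem
      (isOpen_ne_fun (continuous_eval _) continuous_const))).mono fun γ hγ K hK p δ hδ => ?_
  obtain ⟨r, hr⟩ := hK.isBounded.subset_closedBall 0
  obtain ⟨R, hR⟩ := exists_nat_ge r
  obtain ⟨q, hqS, hq⟩ := hS R p (δ / 2) (half_pos hδ)
  obtain ⟨n, hn⟩ := exists_nat_one_div_lt (half_pos hδ)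
  refine ⟨q + C (c q n), forall_mem_range.2 (mem_iInter.1 hγ ⟨R, ⟨q, hqS⟩, n⟩), fun z hz => ?_⟩
  rw [map_add, eval_C, ← sub_sub]
  calc _ ≤ ‖eval z p - eval z q‖ + ‖c q n‖ := norm_sub_le _ _
    _ < δ / 2 + δ / 2 := add_lt_add
      (hq z (Metric.closedBall_subset_closedBall hR (hr hz))) ((hc q n).trans hn)
    _ = δ := add_halves δ

end ZeroFree

section Residual

theorem volumeResidual_polyEqContinuous {N : ℕ} (hN : 2 ≤ N) :
    VolumeResidual volume {γ : C(UnitAddCircle, Fin N → ℂ) | PolyEqContinuous (range γ)} := by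
  have : Nontrivial (Fin N) := Fin.nontrivial_iff_two_le.2 hN
  have hstep (i : Fin N) {ζ : ℂ} (hζ : ‖ζ‖ = 1) (g : ℚ) (n : ℕ) :
      VolumeResidual volume (stepLoops i ζ g (1 / ((n : ℝ) + 1))) :=
    let ⟨_, hj⟩ := exists_ne i
    (volumeDense_stepLoops hj.symm hζ g (by positivity)).volumeResidual (isOpen_stepLoops ..)
  refine (VolumeResidual.iInter fun k : Fin N × ℚ × ℕ =>
    (hstep k.1 norm_one k.2.1 k.2.2).inter
      (hstep k.1 (ζ := -Complex.I) (by simp) k.2.1 k.2.2)).mono fun γ hγ => ?_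
  rw [mem_iInter] at hγ
  refine polyEqContinuous_of_conj (isCompact_range γ.continuous) fun i e he => ?_
  obtain ⟨P, hP⟩ := exists_polynomial_norm_sub_conj_lt (i := i) (fun g n => (hγ (i, g, n)).1)
    (fun g n => (hγ (i, g, n)).2) he
  exact ⟨P, forall_mem_range.2 hP⟩

end Residual

/-! ### Loops filling a domain -/

section Filling

theorem isSimpleClosedCurve_range {E : Type*} [TopologicalSpace E] {γ : C(UnitAddCircle, E)}
    (hγ : Function.Injective γ) : IsSimpleClosedCurve (range γ) := by
  let h : UnitAddCircle ≃ₜ Circle := AddCircle.homeomorphCircle one_ne_zero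
  exact ⟨γ ∘ h.symm, γ.continuous.comp h.symm.continuous, hγ.comp h.symm.injective,
    h.symm.surjective.range_comp γ⟩

theorem exists_loop_range_eq {E : Type*} [TopologicalSpace E] {a : E} (p : Path a a) :
    ∃ γ : C(UnitAddCircle, E), γ 0 = a ∧ range γ = range p := by
  obtain ⟨γ, hγ⟩ := exists_loop_concat (d := fun _ => a) (fun _ => p) one_pos rfl
  have hγp : γ ∘ subarc 1 0 = p := funext (hγ 0 one_pos)
  refine ⟨γ, ?_, ?_⟩
  · simpa [subarc_apply] using hγ 0 one_pos 0
  · refine hγp ▸ (range_comp_subset_range _ _).antisymm' (range_subset_iff.2 fun t => ?_)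
    obtain ⟨j, hj, s, rfl⟩ := exists_eq_subarc one_pos t
    exact ⟨s, by simp [Nat.lt_one_iff.1 hj]⟩

theorem measure_diff_le_add {α : Type*} [MeasurableSpace α] {μ : Measure α} {A B Ω : Set α}
    {a b : ENNReal} (hB : MeasurableSet B) (hBΩ : B ⊆ Ω) (hμB : μ B ≠ ⊤) (hA : μ (Ω \ A) ≤ a)
    (hAB : μ A ≤ μ B + b) : μ (Ω \ B) ≤ a + b := by
  rw [measure_sdiff hBΩ hB.nullMeasurableSet hμB, tsub_le_iff_right]
  calc μ Ω ≤ μ (Ω \ A) + μ A := (measure_mono (by simp)).trans (measure_union_le _ _)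
    _ ≤ a + (μ B + b) := add_le_add hA hAB
    _ = a + b + μ B := by rw [add_comm (μ B), add_assoc]

theorem range_add_const {X E : Type*} [TopologicalSpace X] [TopologicalSpace E] [Add E]
    [ContinuousAdd E] (γ : C(X, E)) (v : E) :
    range (γ + ContinuousMap.const X v) = (· + v) '' range γ := by
  rw [← range_comp]
  rfl

variable {E : Type*} [NormedAddCommGroup E] [MeasurableSpace E] {μ : Measure E}
  [MeasurableAdd E] [μ.IsAddRightInvariant] {U : Set C(UnitAddCircle, E)}

theorem VolumeDense.exists_apply_eq (hU : VolumeDense μ U)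
    (hUadd : ∀ γ ∈ U, ∀ v, γ + ContinuousMap.const _ v ∈ U) {γ : C(UnitAddCircle, E)} {Ω : Set E}
    (hΩ : IsOpen Ω) (hγ : range γ ⊆ Ω) (t₀ : UnitAddCircle) {ε : ℝ} (hε : 0 < ε) :
    ∃ γ' ∈ U, γ' t₀ = γ t₀ ∧ range γ' ⊆ Ω ∧ μ (range γ) ≤ μ (range γ') + ENNReal.ofReal ε := by
  obtain ⟨η, hη, hηΩ⟩ := (isCompact_range γ.continuous).exists_thickening_subset_open hΩ hγ
  obtain ⟨γ', hγ'U, hdist, hμ⟩ := hU γ (min (η / 2) ε) (lt_min (half_pos hη) hε)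
  have hd (t) : ‖γ' t - γ t‖ < η / 2 := by
    rw [← dist_eq_norm]
    exact (ContinuousMap.dist_apply_le_dist t).trans_lt (hdist.trans_le (min_le_left _ _))
  refine ⟨γ' + ContinuousMap.const _ (γ t₀ - γ' t₀), hUadd γ' hγ'U _, by simp,
    range_subset_iff.2 fun t => hηΩ (Metric.mem_thickening_iff.2 ⟨γ t, mem_range_self t, ?_⟩), ?_⟩
  · calc dist (γ' t + (γ t₀ - γ' t₀)) (γ t) = ‖(γ' t - γ t) - (γ' t₀ - γ t₀)‖ := by
          rw [dist_eq_norm]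
          congr 1
          abel
      _ < η / 2 + η / 2 := (norm_sub_le _ _).trans_lt (add_lt_add (hd t) (hd t₀))
      _ = η := add_halves η
  · rw [range_add_const, image_add_right, measure_preimage_add_right]
    exact hμ.trans (by gcongr; exact min_le_right _ _)

theorem VolumeDense.exists_measure_diff_range_le [NormedSpace ℝ E] [FiniteDimensional ℝ E]
    [BorelSpace E] [μ.InnerRegularCompactLTTop] [IsFiniteMeasureOnCompacts μ]
    (hU : VolumeDense μ U) (hUadd : ∀ γ ∈ U, ∀ v, γ + ContinuousMap.const _ v ∈ U) {Ω : Set E}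
    (hΩ : IsOpen Ω) (hΩconn : IsConnected Ω) (hμΩ : μ Ω ≠ ⊤) {x₀ : E} (hx₀ : x₀ ∈ Ω) {ε : ℝ}
    (hε : 0 < ε) : ∃ γ ∈ U, γ 0 = x₀ ∧ range γ ⊆ Ω ∧ μ (Ω \ range γ) ≤ ENNReal.ofReal ε := by
  have hjoin := (hΩ.isConnected_iff_isPathConnected.1 hΩconn).joinedIn
  obtain ⟨p, hpΩ, hp⟩ := exists_path_measure_diff_range_le hΩ hμΩ subset_rfl hjoin hx₀ hx₀
    (ENNReal.ofReal_pos.2 (half_pos hε)).ne'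
  obtain ⟨γ₀, hγ₀x₀, hγ₀p⟩ := exists_loop_range_eq p
  obtain ⟨γ, hγU, hγγ₀, hγΩ, hμγ⟩ :=
    hU.exists_apply_eq hUadd hΩ (hγ₀p.trans_subset hpΩ) 0 (half_pos hε)
  have hc : IsCompact (range γ) := isCompact_range γ.continuous
  refine ⟨γ, hγU, hγγ₀.trans hγ₀x₀, hγΩ, ?_⟩
  rw [← add_halves ε, ENNReal.ofReal_add (half_pos hε).le (half_pos hε).le]
  exact measure_diff_le_add hc.measurableSet hγΩ hc.measure_lt_top.ne (hγ₀p ▸ hp) hμγ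

end Filling

section GoodLoops

variable {N : ℕ}

/-- The injective loops whose range `J` satisfies `P(J) = C(J)` and on whose range zero-free
polynomials are dense. -/
def goodLoops (N : ℕ) : Set C(UnitAddCircle, Fin N → ℂ) :=
  {γ | Function.Injective γ ∧ PolyEqContinuous (range γ) ∧ ZeroFreeDense (range γ)}

theorem add_const_mem_goodLoops {γ : C(UnitAddCircle, Fin N → ℂ)} (hγ : γ ∈ goodLoops N)
    (v : Fin N → ℂ) : γ + ContinuousMap.const _ v ∈ goodLoops N := by
  obtain ⟨hinj, hpoly, hzero⟩ := hγ
  refine ⟨(add_left_injective v).comp hinj, ?_⟩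
  rw [range_add_const]
  exact ⟨hpoly.image_add_right v, hzero.image_add_right v⟩

theorem volumeDense_goodLoops (hN : 2 ≤ N) : VolumeDense volume (goodLoops N) := by
  have : Nontrivial (Fin N) := Fin.nontrivial_iff_two_le.2 hN
  obtain ⟨i, j, hij⟩ := exists_pair_ne (Fin N)
  exact ((volumeResidual_injective hij).inter
    ((volumeResidual_polyEqContinuous hN).inter volumeResidual_zeroFreeDense)).volumeDense

end GoodLoops

/-- Simple closed curve version (`N ≥ 2`) of the big-arc theorem. -/
theorem stmt_6 (N : ℕ) (hN : 2 ≤ N) (Ω : Set (Fin N → ℂ)) (hΩopen : IsOpen Ω)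
    (hΩconn : IsConnected Ω) (hΩbdd : Bornology.IsBounded Ω)
    (x₀ : Fin N → ℂ) (hx₀ : x₀ ∈ Ω) (ε : ℝ) (hε : 0 < ε) :
    ∃ J : Set (Fin N → ℂ), IsSimpleClosedCurve J ∧ IsPolynomiallyConvex J ∧
      x₀ ∈ J ∧ J ⊆ Ω ∧
      volume (Ω \ J) < ENNReal.ofReal ε ∧ PolyEqContinuous J ∧
      ∀ (p : MvPolynomial (Fin N) ℂ) (δ : ℝ), 0 < δ →
        ∃ q : MvPolynomial (Fin N) ℂ, (∀ z ∈ J, eval z q ≠ 0) ∧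
          ∀ z ∈ closure Ω, ‖eval z p - eval z q‖ < δ := by
  obtain ⟨γ, ⟨hinj, hpoly, hzero⟩, hγ0, hγΩ, hμ⟩ :=
    (volumeDense_goodLoops hN).exists_measure_diff_range_le
      (fun _ => add_const_mem_goodLoops) hΩopen hΩconn hΩbdd.measure_lt_top.ne hx₀ (half_pos hε)
  exact ⟨range γ, isSimpleClosedCurve_range hinj,
    hpoly.isPolynomiallyConvex (isCompact_range γ.continuous), ⟨0, hγ0⟩, hγΩ,
    hμ.trans_lt ((ENNReal.ofReal_lt_ofReal_iff hε).2 (half_lt_self hε)), hpoly,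
    hzero _ hΩbdd.isCompact_closure⟩

end
end

section
/- Let N ≥ 3, let λ be a closed subset of ℝ^N that is contained in the union of an at most countable family of arcs in ℝ^N, let a and a' be two distinct points of λ, and let Ω be a connected open subset of ℝ^N containing a and a'. Then there is an arc J ⊆ Ω with endpoints a and a' such that J ∩ λ = {a, a'} and the open arc J \ {a, a'} is a C^∞-smooth open arc. -/
open Set MvPolynomial Topology MeasureTheory

noncomputable section

/-!
Maps from an arc into a space `G` of dimension at least `2` can be perturbed to avoid `0`, and by
Baire's theorem the same holds for a countable union of arcs. If `λ` separated a connected open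
set, some continuous `h` would take opposite signs at two points of a small ball, inside which it
vanishes only on `λ`. Let `w` be half the difference of the points and `g` a perturbation of the
orthogonal projection onto `G = w^⊥` without zeros on `λ`. By the no-retraction theorem the field
`h • w + g` has a zero in the ball, which is a zero of `h` outside `λ`: a contradiction.

Hence `Ω \ λ` contains a path `ℝ → Ω \ λ` tending to `a` and `a'` at the two ends, obtained from
chains of shrinking connected neighbourhoods of `a` and `a'`. A general position argument replaces
it by an injective smooth immersion whose distance to it is less than the distance to the
complement of `Ω \ λ`, so that the limits at the ends survive.
-/

lemma exists_polynomial_eval_eq_det_add_smul {R M : Type*} [CommRing R] [AddCommGroup M]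
    [Module R M] [Module.Free R M] [Module.Finite R M] (A B : M →ₗ[R] M) :
    ∃ p : Polynomial R, p.natDegree ≤ Module.finrank R M ∧
      ∀ t : R, p.eval t = LinearMap.det (A + t • B) := by
  classical
  nontriviality R
  let b := Module.Free.chooseBasis R M
  let toMat := LinearMap.toMatrix b b
  refine ⟨((Polynomial.X : Polynomial R) • (toMat B).map Polynomial.C
    + (toMat A).map Polynomial.C).det, ?_, fun t => ?_⟩
  · exact (Polynomial.natDegree_det_X_add_C_le _ _).trans_eq
      (Module.finrank_eq_card_chooseBasisIndex R M).symm
  · rw [← LinearMap.det_toMatrix b, ← Polynomial.coe_evalRingHom, RingHom.map_det]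
    congr 1
    ext i j
    simp only [toMat, RingHom.mapMatrix_apply, Polynomial.coe_evalRingHom, Matrix.map_apply,
      Matrix.add_apply, Matrix.smul_apply, smul_eq_mul, Polynomial.X_mul_C, Polynomial.eval_mul,
      Polynomial.eval_C, Polynomial.eval_X, map_add, map_smul]
    ring

lemma exists_polynomial_eval_eq_integral {α : Type*} [MeasurableSpace α] {μ : Measure α} {n : ℕ}
    (P : α → Polynomial ℝ) (hdeg : ∀ x, (P x).natDegree ≤ n)
    (hint : ∀ t, Integrable (fun x => (P x).eval t) μ) :
    ∃ p : Polynomial ℝ, ∀ t, p.eval t = ∫ x, (P x).eval t ∂μ := by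
  -- Lagrange interpolation at `0, …, n` commutes with integration.
  let node : ℕ → ℝ := Nat.cast
  let nodes := Finset.range (n + 1)
  have hnode : InjOn node nodes := Nat.cast_injective.injOn
  refine ⟨Lagrange.interpolate nodes node fun i => ∫ x, (P x).eval (node i) ∂μ, fun t => ?_⟩
  have heval : ∀ x, (P x).eval t =
      ∑ i ∈ nodes, (P x).eval (node i) * (Lagrange.basis nodes node i).eval t := fun x => by
    have hlt : (P x).degree < nodes.card := by
      rw [Finset.card_range]
      exact Polynomial.degree_le_natDegree.trans_lt
        (Nat.cast_lt.mpr (Nat.lt_succ_of_le (hdeg x)))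
    conv_lhs => rw [Lagrange.eq_interpolate hnode hlt]
    simp [Lagrange.interpolate_apply, Polynomial.eval_finsetSum]
  simp_rw [heval]
  rw [integral_finsetSum _ fun i _ => (hint (node i)).mul_const _]
  simp [Lagrange.interpolate_apply, Polynomial.eval_finsetSum, integral_mul_const]

lemma image_eq_self_of_isOpen_image {X : Type*} [TopologicalSpace X] [T2Space X] {s : Set X}
    {f : X → X} (hs : IsPreconnected s) (hne : s.Nonempty) (hcpt : IsCompact (closure s))
    (hf : ContinuousOn f (closure s)) (hopen : IsOpen (f '' s)) (hmaps : MapsTo f s s)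
    (hboundary : ∀ x ∈ closure s \ s, f x ∉ s) : f '' s = s := by
  refine hmaps.image_subset.antisymm <|
    hs.subset_left_of_subset_union hopen (hcpt.image_of_continuousOn hf).isClosed.isOpen_compl
      (disjoint_compl_right_iff_subset.mpr (image_mono subset_closure)) (fun y hy => ?_) ?_
  · by_cases hy' : y ∈ f '' closure s
    · obtain ⟨x, hx, rfl⟩ := hy'
      exact Or.inl ⟨x, by_contra fun hxs => hboundary x ⟨hx, hxs⟩ hy, rfl⟩
    · exact Or.inr hy'
  · obtain ⟨x, hx⟩ := hne
    exact ⟨f x, hmaps hx, mem_image_of_mem f hx⟩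

section NormedSpace

variable {E : Type*} [NormedAddCommGroup E] [NormedSpace ℝ E]

lemma injOn_add_smul_of_lipschitzOnWith {w : E → E} {s : Set E} {L : NNReal}
    (hw : LipschitzOnWith L w s) {t : ℝ} (ht : |t| * L < 1) : InjOn (fun x => x + t • w x) s := by
  intro x hx y hy hxy
  have hsub : x - y = t • (w y - w x) := by
    rw [smul_sub, sub_eq_sub_iff_add_eq_add, add_comm (t • w y)]
    exact hxy
  have hle : ‖x - y‖ ≤ |t| * L * ‖x - y‖ := calc
    ‖x - y‖ = |t| * ‖w y - w x‖ := by rw [hsub, norm_smul, Real.norm_eq_abs]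
    _ ≤ |t| * (L * ‖y - x‖) := by gcongr; exact hw.norm_sub_le hy hx
    _ = |t| * L * ‖x - y‖ := by rw [norm_sub_rev, mul_assoc]
  rw [← sub_eq_zero, ← norm_le_zero_iff]
  nlinarith

lemma fderiv_add_smul {w : E → E} (hw : Differentiable ℝ w) (t : ℝ) (x : E) :
    fderiv ℝ (fun y => y + t • w y) x = ContinuousLinearMap.id ℝ E + t • fderiv ℝ w x :=
  ((hasFDerivAt_id x).add ((hw x).hasFDerivAt.const_smul t)).fderiv

lemma add_smul_mem_ball {w : E → E} (hmaps : ∀ x ∈ Metric.ball (0 : E) 1, ‖x + w x‖ ≤ 1)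
    {t : ℝ} (ht : t ∈ Ioo (0 : ℝ) 1) {x : E} (hx : x ∈ Metric.ball (0 : E) 1) :
    x + t • w x ∈ Metric.ball (0 : E) 1 := by
  have hcombo : x + t • w x = (1 - t) • x + t • (x + w x) := by module
  rw [mem_ball_zero_iff, hcombo]
  have hx' := mem_ball_zero_iff.mp hx
  calc ‖(1 - t) • x + t • (x + w x)‖ ≤ (1 - t) * ‖x‖ + t * ‖x + w x‖ := by
        refine (norm_add_le _ _).trans_eq ?_
        rw [norm_smul_of_nonneg (sub_nonneg.mpr ht.2.le), norm_smul_of_nonneg ht.1.le]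
    _ < 1 := by nlinarith [hmaps x hx, ht.1, ht.2]

lemma eventually_det_id_add_smul_pos {X : Type*} [TopologicalSpace X] {K : Set X}
    (hK : IsCompact K) {A : X → E →L[ℝ] E} (hA : Continuous A) :
    ∀ᶠ t in 𝓝 (0 : ℝ), ∀ x ∈ K, 0 < (ContinuousLinearMap.id ℝ E + t • A x).det := by
  refine hK.eventually_forall_of_forall_eventually fun x _ => ?_
  have hcont : Continuous fun p : ℝ × X =>
      (ContinuousLinearMap.id ℝ E + p.1 • A p.2).det :=
    ContinuousLinearMap.continuous_det.comp (by fun_prop)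
  exact hcont.continuousAt.eventually_const_lt (by simp [ContinuousLinearMap.det])

variable [FiniteDimensional ℝ E]

lemma surjective_of_det_ne_zero {A : E →L[ℝ] E} (hA : A.det ≠ 0) : Function.Surjective A :=
  ((Module.End.isUnit_iff _).mp ((LinearMap.isUnit_iff_isUnit_det _).mpr hA.isUnit)).2

lemma isOpen_image_of_det_fderiv_ne_zero {f : E → E} {s : Set E} (hs : IsOpen s)
    (hf : ContDiff ℝ 1 f) (hdet : ∀ x ∈ s, (fderiv ℝ f x).det ≠ 0) : IsOpen (f '' s) := by
  rw [isOpen_iff_mem_nhds]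
  rintro _ ⟨x, hx, rfl⟩
  have hstrict := hf.contDiffAt.hasStrictFDerivAt (x := x) one_ne_zero
  rw [← hstrict.map_nhds_eq_of_surj
    (LinearMap.range_eq_top.mpr (surjective_of_det_ne_zero (hdet x hx)))]
  exact Filter.image_mem_map (hs.mem_nhds hx)

lemma setIntegral_det_fderiv_eq_measureReal [MeasurableSpace E] [BorelSpace E] {μ : Measure E}
    [μ.IsAddHaarMeasure] {f : E → E} {s : Set E} (hs : MeasurableSet s)
    (hf : Differentiable ℝ f) (hinj : InjOn f s) (hdet : ∀ x ∈ s, 0 ≤ (fderiv ℝ f x).det) :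
    ∫ x in s, (fderiv ℝ f x).det ∂μ = μ.real (f '' s) := by
  calc ∫ x in s, (fderiv ℝ f x).det ∂μ = ∫ x in s, |(fderiv ℝ f x).det| • (1 : ℝ) ∂μ :=
        setIntegral_congr_fun hs fun x hx => by simp [abs_of_nonneg (hdet x hx)]
    _ = ∫ _ in f '' s, (1 : ℝ) ∂μ :=
        (integral_image_eq_integral_abs_det_fderiv_smul μ hs
          (fun x _ => (hf x).hasFDerivAt.hasFDerivWithinAt) hinj fun _ => 1).symm
    _ = μ.real (f '' s) := by simp

lemma eventually_setIntegral_det_id_add_smul_fderiv [MeasurableSpace E] [BorelSpace E]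
    (μ : Measure E) [μ.IsAddHaarMeasure] {w : E → E} (hw : ContDiff ℝ 1 w)
    (hsphere : ∀ x, ‖x‖ = 1 → w x = 0) (hmaps : ∀ x ∈ Metric.ball (0 : E) 1, ‖x + w x‖ ≤ 1) :
    ∀ᶠ t in 𝓝[>] (0 : ℝ), ∫ x in Metric.ball (0 : E) 1,
      (ContinuousLinearMap.id ℝ E + t • fderiv ℝ w x).det ∂μ = μ.real (Metric.ball (0 : E) 1) := by
  have hwdiff : Differentiable ℝ w := hw.differentiable one_ne_zero
  have hball_subset := Metric.ball_subset_closedBall (x := (0 : E)) (ε := 1)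
  obtain ⟨L, hL⟩ := hw.locallyLipschitz.locallyLipschitzOn
    |>.exists_lipschitzOnWith_of_compact (isCompact_closedBall (0 : E) 1)
  have hlip : ∀ᶠ t : ℝ in 𝓝 0, |t| * L < 1 :=
    (by fun_prop : Continuous fun t : ℝ => |t| * (L : ℝ)).continuousAt.eventually_lt_const (by simp)
  have hdet := eventually_det_id_add_smul_pos (isCompact_closedBall (0 : E) 1)
    (hw.continuous_fderiv one_ne_zero)
  filter_upwards [nhdsWithin_le_nhds hlip, nhdsWithin_le_nhds hdet,
    Ioo_mem_nhdsGT (zero_lt_one' ℝ)] with t htL htdet ht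
  have hf : ContDiff ℝ 1 fun x => x + t • w x := by fun_prop
  simp_rw [← fderiv_add_smul hwdiff t] at htdet ⊢
  rw [setIntegral_det_fderiv_eq_measureReal measurableSet_ball (hf.differentiable one_ne_zero)
    ((injOn_add_smul_of_lipschitzOnWith hL htL).mono hball_subset)
    fun x hx => (htdet x (hball_subset hx)).le]
  congr 1
  refine image_eq_self_of_isOpen_image (convex_ball _ _).isPreconnected
    (Metric.nonempty_ball.mpr one_pos) ?_ hf.continuous.continuousOn
    (isOpen_image_of_det_fderiv_ne_zero Metric.isOpen_ball hf
      fun x hx => (htdet x (hball_subset hx)).ne')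
    (fun x hx => add_smul_mem_ball hmaps ht hx) fun x hx => ?_
  · rw [closure_ball _ one_ne_zero]
    exact isCompact_closedBall _ _
  · rw [closure_ball _ one_ne_zero, Metric.closedBall_sdiff_ball, mem_sphere_zero_iff_norm] at hx
    simp [hsphere x hx, hx]

-- The integral of `det (1 + t • D w)` is a polynomial in `t`. For small `t > 0` the map `1 + t • w`
-- is a bijection of the ball, so this polynomial is constant.
theorem setIntegral_ball_det_fderiv_eq [MeasurableSpace E] [BorelSpace E]
    (μ : Measure E) [μ.IsAddHaarMeasure] {h : E → E} (hh : ContDiff ℝ 1 h)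
    (hsphere : ∀ x, ‖x‖ = 1 → h x = x) (hmaps : ∀ x ∈ Metric.ball (0 : E) 1, ‖h x‖ ≤ 1) :
    ∫ x in Metric.ball (0 : E) 1, (fderiv ℝ h x).det ∂μ = μ.real (Metric.ball (0 : E) 1) := by
  let w : E → E := fun x => h x - x
  have hw : ContDiff ℝ 1 w := by fun_prop
  have hfderiv : ∀ x, fderiv ℝ h x = ContinuousLinearMap.id ℝ E + (1 : ℝ) • fderiv ℝ w x :=
    fun x => by
      rw [← fderiv_add_smul (hw.differentiable one_ne_zero)]
      simp [w]
  choose P hdeg hP using fun x => exists_polynomial_eval_eq_det_add_smul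
    (LinearMap.id : E →ₗ[ℝ] E) (fderiv ℝ w x : E →ₗ[ℝ] E)
  have hPdet : ∀ t x, (P x).eval t = (ContinuousLinearMap.id ℝ E + t • fderiv ℝ w x).det :=
    fun t x => hP x t
  have hint : ∀ t, IntegrableOn (fun x => (P x).eval t) (Metric.ball (0 : E) 1) μ := fun t => by
    have hcont : Continuous fun x => (P x).eval t := by
      have := hw.continuous_fderiv one_ne_zero
      simp_rw [hPdet]
      exact ContinuousLinearMap.continuous_det.comp (by fun_prop)
    exact (hcont.continuousOn.integrableOn_compact (isCompact_closedBall _ _)).mono_set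
      Metric.ball_subset_closedBall
  obtain ⟨p, hp⟩ := exists_polynomial_eval_eq_integral P hdeg hint
  have hsmall := eventually_setIntegral_det_id_add_smul_fderiv μ hw
    (fun x hx => sub_eq_zero.mpr (hsphere x hx)) (by simpa [w] using hmaps)
  obtain ⟨u, hu, hsub⟩ := mem_nhdsGT_iff_exists_Ioo_subset.mp hsmall
  have hconst : p = Polynomial.C (μ.real (Metric.ball (0 : E) 1)) := by
    refine Polynomial.eq_of_infinite_eval_eq _ _ ((Ioo_infinite hu).mono fun t ht => ?_)
    simp only [mem_ofPred_eq, hp, hPdet, Polynomial.eval_C]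
    exact hsub ht
  simp_rw [hfderiv, ← hPdet, ← hp, hconst, Polynomial.eval_C]

end NormedSpace

section InnerProductSpace

variable {E : Type*} [NormedAddCommGroup E] [InnerProductSpace ℝ E] [FiniteDimensional ℝ E]

lemma det_fderiv_eq_zero_of_norm_eq_one {h : E → E} (hh : Differentiable ℝ h)
    (hnorm : ∀ x, ‖h x‖ = 1) (x : E) : (fderiv ℝ h x).det = 0 := by
  by_contra hdet
  obtain ⟨v, hv⟩ := surjective_of_det_ne_zero hdet (h x)
  have hsq : HasFDerivAt (fun y => ‖h y‖ ^ 2) (2 • (innerSL ℝ (h x)).comp (fderiv ℝ h x)) x :=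
    (hh x).hasFDerivAt.norm_sq
  simp only [hnorm] at hsq
  have hzero := DFunLike.congr_fun (hsq.unique (hasFDerivAt_const ((1 : ℝ) ^ 2) x)) v
  simp [hv, hnorm] at hzero

theorem not_exists_contDiff_retraction_sphere [Nontrivial E] :
    ¬∃ h : E → E, ContDiff ℝ 1 h ∧ (∀ x, ‖h x‖ = 1) ∧ ∀ x, ‖x‖ = 1 → h x = x := by
  rintro ⟨h, hh, hnorm, hsphere⟩
  borelize E
  have hvol := setIntegral_ball_det_fderiv_eq Measure.addHaar hh hsphere fun x _ => (hnorm x).le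
  simp only [det_fderiv_eq_zero_of_norm_eq_one (hh.differentiable one_ne_zero) hnorm,
    integral_zero] at hvol
  exact (ENNReal.toReal_pos (Metric.measure_ball_pos _ 0 one_pos).ne'
    measure_ball_lt_top.ne).ne hvol

theorem exists_eq_zero_of_eventually_eq_self {H : E → E} (hH : Continuous H)
    (hinfty : ∀ᶠ x in Bornology.cobounded E, H x = x) : ∃ x, H x = 0 := by
  rcases subsingleton_or_nontrivial E with _ | _
  · exact ⟨0, Subsingleton.elim _ _⟩
  by_contra! hzero
  obtain ⟨r, -, hr⟩ := Filter.hasBasis_cobounded_norm.eventually_iff.mp hinfty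
  obtain ⟨R, hR⟩ := exists_gt (max r 0)
  have hR0 : 0 < R := (le_max_right r 0).trans_lt hR
  have hid : EqOn H id {x | r < ‖x‖} := fun x (hx : r < ‖x‖) => hr hx.le
  have hopen : IsOpen {x : E | r < ‖x‖} := isOpen_lt continuous_const continuous_norm
  obtain ⟨G, hG, hGH, hGid, -⟩ := hH.exists_contDiff_approx_and_eqOn 1 hH.norm
    (fun x => norm_pos_iff.mpr (hzero x)) (isClosed_le continuous_const continuous_norm)
    (hopen.mem_nhdsSet.mpr fun x (hx : R ≤ ‖x‖) => (le_max_left r 0).trans_lt (hR.trans_le hx))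
    (contDiffOn_id.congr hid)
  have hG0 : ∀ x, G x ≠ 0 := fun x hx => by simpa [hx] using hGH x
  have hGnorm : ContDiff ℝ 1 fun x => ‖G (R • x)‖ :=
    (hG.comp (contDiff_const_smul R)).norm ℝ fun x => hG0 _
  refine not_exists_contDiff_retraction_sphere ⟨fun x => NormedSpace.normalize (G (R • x)),
    (hGnorm.inv fun x => norm_ne_zero_iff.mpr (hG0 _)).smul (hG.comp (contDiff_const_smul R)),
    fun x => NormedSpace.norm_normalize (hG0 _), fun x hx => ?_⟩
  beta_reduce
  have hRx : ‖R • x‖ = R := by rw [norm_smul_of_nonneg hR0.le, hx, mul_one]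
  rw [hGid hRx.ge, hid ((le_max_left r 0).trans_lt (hR.trans_eq hRx.symm)), id,
    NormedSpace.normalize_smul_of_pos hR0, NormedSpace.normalize_eq_self_of_norm_eq_one hx]

lemma exists_eq_zero_of_forall_ne_neg_smul {F : E → E} (hF : Continuous F) {r : ℝ} (hr : 0 < r)
    (hne : ∀ x, r ≤ ‖x‖ → ∀ c : ℝ, 0 ≤ c → F x ≠ -(c • x)) : ∃ x, F x = 0 := by
  let s : E → ℝ := fun x => max 0 (min 1 (‖x‖ - r))
  have hs : Continuous s := by fun_prop
  obtain ⟨x, hx⟩ := exists_eq_zero_of_eventually_eq_self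
    (H := fun x => (1 - s x) • F x + s x • x) (by fun_prop) <|
    Filter.hasBasis_cobounded_norm.eventually_iff.mpr
      ⟨r + 1, trivial, fun x (hx : r + 1 ≤ ‖x‖) => by
        simp [show s x = 1 by simp [s, min_eq_left (show 1 ≤ ‖x‖ - r by linarith)]]⟩
  refine ⟨x, ?_⟩
  rcases le_or_gt ‖x‖ r with hle | hlt
  · have hs0 : s x = 0 := max_eq_left ((min_le_right _ _).trans (sub_nonpos.mpr hle))
    simpa [hs0] using hx
  · have hs_nonneg : 0 ≤ s x := le_max_left _ _
    have hs_lt : s x < 1 := by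
      refine lt_of_le_of_ne (max_le zero_le_one (min_le_left _ _)) fun hs1 => ?_
      have hx0 : x = 0 := by simpa [hs1] using hx
      rw [hx0, norm_zero] at hlt
      exact hr.not_gt hlt
    have hs' := sub_pos.mpr hs_lt
    refine (hne x hlt.le (s x / (1 - s x)) (div_nonneg hs_nonneg hs'.le) ?_).elim
    rw [← inv_smul_smul₀ hs'.ne' (F x), eq_neg_of_add_eq_zero_left hx, smul_neg, smul_smul,
      div_eq_inv_mul]

theorem exists_eq_zero_of_forall_sphere_ne_neg_smul {F : E → E} {m : E} {R : ℝ} (hR : 0 < R)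
    (hF : ContinuousOn F (Metric.closedBall m R))
    (hsphere : ∀ x ∈ Metric.sphere m R, ∀ c : ℝ, 0 ≤ c → F x ≠ -(c • (x - m))) :
    ∃ x ∈ Metric.closedBall m R, F x = 0 := by
  let ρ : E → E := fun y => m + (R / max R ‖y‖) • y
  have hmax : ∀ y : E, 0 < max R ‖y‖ := fun y => lt_max_of_lt_left hR
  have hρ_mem : ∀ y, ρ y ∈ Metric.closedBall m R := fun y => by
    rw [mem_closedBall_iff_norm, add_sub_cancel_left,
      norm_smul_of_nonneg (div_nonneg hR.le (hmax y).le), div_mul_eq_mul_div]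
    exact div_le_of_le_mul₀ (hmax y).le hR.le
      (mul_le_mul_of_nonneg_left (le_max_right _ _) hR.le)
  have hρ : Continuous ρ := by
    have : Continuous fun y : E => R / max R ‖y‖ :=
      continuous_const.div (continuous_const.max continuous_norm) fun y => (hmax y).ne'
    fun_prop
  obtain ⟨y, hy⟩ := exists_eq_zero_of_forall_ne_neg_smul (F := fun y => F (ρ y))
    (hF.comp_continuous hρ hρ_mem) hR fun y hy c hc heq => by
      have hy0 : 0 < ‖y‖ := hR.trans_le hy
      have hρ_sub : ρ y - m = (R / ‖y‖) • y := by
        simp only [ρ, add_sub_cancel_left, max_eq_right hy]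
      refine hsphere (ρ y) ?_ (c * (‖y‖ / R)) (by positivity) ?_
      · rw [mem_sphere_iff_norm, hρ_sub, norm_smul_of_nonneg (by positivity),
          div_mul_cancel₀ _ hy0.ne']
      · rw [heq, hρ_sub, smul_smul, mul_assoc, div_mul_div_cancel₀ hR.ne', div_self hy0.ne',
          mul_one]
  exact ⟨ρ y, hρ_mem y, hy⟩

end InnerProductSpace

/-- `ZeroUnstableOn G K`: arbitrarily small perturbations of a continuous map into `G` have no zero
on `K`. In dimension theory (Hurewicz and Wallman) this characterises compacta `K` of dimension
less than `dim G`; it stands in here for the topological dimension, which is defined otherwise. -/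
def ZeroUnstableOn {X : Type*} [TopologicalSpace X] (G : Type*) [NormedAddCommGroup G]
    (K : Set X) : Prop :=
  ∀ f : X → G, Continuous f → ∀ ε > 0,
    ∃ g : X → G, Continuous g ∧ (∀ x, ‖g x - f x‖ ≤ ε) ∧ ∀ x ∈ K, g x ≠ 0

namespace ZeroUnstableOn

variable {X T G : Type*} [TopologicalSpace X] [TopologicalSpace T] [NormedAddCommGroup G]

lemma mono {K L : Set X} (hL : ZeroUnstableOn G L) (hKL : K ⊆ L) : ZeroUnstableOn G K :=
  fun f hf ε hε =>
    let ⟨g, hg, hgf, hg0⟩ := hL f hf ε hε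
    ⟨g, hg, hgf, fun x hx => hg0 x (hKL hx)⟩

lemma of_leftInvOn {K : Set X} {L : Set T} (hL : ZeroUnstableOn G L) {γ : T → X} {τ : X → T}
    (hγ : Continuous γ) (hτ : Continuous τ) (hmaps : MapsTo τ K L) (hinv : LeftInvOn γ τ K) :
    ZeroUnstableOn G K := by
  intro f hf ε hε
  obtain ⟨g, hg, hgf, hg0⟩ := hL (f ∘ γ) (hf.comp hγ) ε hε
  refine ⟨fun x => f x + (g (τ x) - f (γ (τ x))), by fun_prop, fun x => ?_, fun x hx => ?_⟩
  · simpa using hgf (τ x)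
  · simpa [hinv hx] using hg0 (τ x) (hmaps hx)

lemma isOpen_setOf_add_ne_zero {K : Set X} (hK : IsCompact K) {f : X → G} (hf : Continuous f) :
    IsOpen {η : BoundedContinuousFunction X G | ∀ x ∈ K, f x + η x ≠ 0} := by
  rw [isOpen_iff_eventually]
  refine fun η hη => hK.eventually_forall_of_forall_eventually fun x hx => ?_
  have hcont : Continuous fun p : BoundedContinuousFunction X G × X => f p.2 + p.1 p.2 := by
    fun_prop
  exact hcont.continuousAt.eventually_ne (hη x hx)

lemma dense_setOf_add_ne_zero {K : Set X} (hK : ZeroUnstableOn G K) {f : X → G}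
    (hf : Continuous f) : Dense {η : BoundedContinuousFunction X G | ∀ x ∈ K, f x + η x ≠ 0} := by
  rw [Metric.dense_iff]
  intro η r hr
  obtain ⟨g, hg, hgf, hg0⟩ := hK (fun x => f x + η x) (by fun_prop) (r / 2) (half_pos hr)
  let ζ : BoundedContinuousFunction X G := .ofNormedAddCommGroup
    (fun x => g x - (f x + η x)) (by fun_prop) (r / 2) hgf
  refine ⟨η + ζ, ?_, fun x hx => ?_⟩
  · rw [Metric.mem_ball, dist_self_add_left]
    exact (BoundedContinuousFunction.norm_ofNormedAddCommGroup_le _ (half_pos hr).le hgf).trans_lt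
      (half_lt_self hr)
  · have hsum : f x + (η + ζ) x = g x := by simp [ζ, ← add_assoc]
    exact hsum ▸ hg0 x hx

lemma sUnion [CompleteSpace G] {S : Set (Set X)} (hS : S.Countable) (hcpt : ∀ K ∈ S, IsCompact K)
    (hunst : ∀ K ∈ S, ZeroUnstableOn G K) : ZeroUnstableOn G (⋃₀ S) := by
  intro f hf ε hε
  have hdense := dense_biInter_of_isOpen (fun K hK => isOpen_setOf_add_ne_zero (hcpt K hK) hf) hS
    fun K hK => (hunst K hK).dense_setOf_add_ne_zero hf
  obtain ⟨η, hη, hη0⟩ := Metric.dense_iff.mp hdense 0 ε hε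
  refine ⟨fun x => f x + η x, by fun_prop, fun x => ?_, fun x ⟨K, hK, hx⟩ => ?_⟩
  · rw [add_sub_cancel_left]
    exact (η.norm_coe_le_norm x).trans (mem_ball_zero_iff.mp hη).le
  · exact mem_iInter₂.mp hη0 K hK x hx

lemma univ_of_finrank_lt {E : Type*} [NormedAddCommGroup E] [NormedSpace ℝ E]
    [FiniteDimensional ℝ E] [NormedSpace ℝ G] [FiniteDimensional ℝ G]
    (hdim : Module.finrank ℝ E < Module.finrank ℝ G) : ZeroUnstableOn G (univ : Set E) := by
  intro f hf ε hε
  obtain ⟨g, hg, hgf, -⟩ := hf.exists_contDiff_approx 1 (continuous_const (y := ε / 2))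
    fun _ => half_pos hε
  obtain ⟨v, hv, hvg⟩ := Metric.dense_iff.mp
    (hg.dense_compl_range_of_finrank_lt_finrank hdim) 0 (ε / 2) (half_pos hε)
  rw [mem_ball_zero_iff] at hv
  refine ⟨fun x => g x - v, by have := hg.continuous; fun_prop, fun x => ?_, fun x _ hx => ?_⟩
  · calc ‖g x - v - f x‖ = ‖g x - f x - v‖ := by rw [sub_right_comm]
      _ ≤ ‖g x - f x‖ + ‖v‖ := norm_sub_le _ _
      _ ≤ ε := by linarith [hgf x, dist_eq_norm (g x) (f x)]
  · exact hvg ⟨x, sub_eq_zero.mp hx⟩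

end ZeroUnstableOn

section Arcs

variable {X : Type*} [TopologicalSpace X]

lemma IsArc.isCompact {A : Set X} (hA : IsArc A) : IsCompact A := by
  obtain ⟨_, _, γ, hγ, -, rfl, -, -⟩ := hA
  exact isCompact_Icc.image_of_continuousOn hγ

lemma IsArc.exists_leftInvOn [T2Space X] [NormalSpace X] {A : Set X} (hA : IsArc A) :
    ∃ (γ : ℝ → X) (τ : X → ℝ), Continuous γ ∧ Continuous τ ∧ LeftInvOn γ τ A := by
  obtain ⟨_, _, γ, hγ, hinj, rfl, -, -⟩ := hA
  let g : Icc (0 : ℝ) 1 → X := fun t => γ t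
  have hg : Continuous g := continuousOn_iff_continuous_domRestrict.mp hγ
  have hg_inj : Function.Injective g := fun s t h => Subtype.ext (hinj s.2 t.2 h)
  obtain ⟨τ, hτ⟩ := ContinuousMap.exists_extension (Y := ℝ) (hg.isClosedEmbedding hg_inj)
    ⟨Subtype.val, continuous_subtype_val⟩
  refine ⟨IccExtend zero_le_one g, τ, hg.Icc_extend', τ.continuous, ?_⟩
  rintro _ ⟨t, ht, rfl⟩
  have hτγ : τ (γ t) = t := DFunLike.congr_fun hτ ⟨t, ht⟩
  rw [hτγ, IccExtend_of_mem _ _ ht]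

lemma zeroUnstableOn_of_subset_sUnion_arcs [T2Space X] [NormalSpace X] {G : Type*}
    [NormedAddCommGroup G] [NormedSpace ℝ G] [FiniteDimensional ℝ G]
    (hG : 1 < Module.finrank ℝ G) {S : Set (Set X)} (hS : S.Countable) (harc : ∀ A ∈ S, IsArc A)
    {lam : Set X} (hlam : lam ⊆ ⋃₀ S) : ZeroUnstableOn G lam := by
  have := FiniteDimensional.complete ℝ G
  refine (ZeroUnstableOn.sUnion hS (fun A hA => (harc A hA).isCompact) fun A hA => ?_).mono hlam
  obtain ⟨γ, τ, hγ, hτ, hinv⟩ := (harc A hA).exists_leftInvOn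
  exact (ZeroUnstableOn.univ_of_finrank_lt (E := ℝ) (by simpa using hG)).of_leftInvOn hγ hτ
    (mapsTo_univ τ A) hinv

end Arcs

section Crossing

lemma ne_zero_of_pos_add_of_sub_neg {A : Type*} [AddGroup A] {h : A → ℝ} {m w : A}
    (hpos : 0 < h (m + w)) (hneg : h (m - w) < 0) : w ≠ 0 := by
  rintro rfl
  exact lt_asymm (by simpa using hpos) (by simpa using hneg)

variable {E : Type*} [NormedAddCommGroup E] [InnerProductSpace ℝ E]

open scoped RealInnerProductSpace

lemma eq_or_eq_neg_of_mem_span_singleton_of_norm_eq {v w : E} (hv : v ∈ Submodule.span ℝ {w})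
    (hnorm : ‖v‖ = ‖w‖) : v = w ∨ v = -w := by
  obtain ⟨c, rfl⟩ := Submodule.mem_span_singleton.mp hv
  rcases eq_or_ne w 0 with rfl | hw
  · simp
  have hc : |c| = 1 := by
    rwa [norm_smul, Real.norm_eq_abs, mul_eq_right₀ (norm_ne_zero_iff.mpr hw)] at hnorm
  rcases eq_or_eq_neg_of_abs_eq hc with rfl | rfl <;> simp

lemma smul_add_ne_neg_smul {w v : E} (hw : w ≠ 0) {s c : ℝ} (hc : 0 ≤ c)
    {y : (Submodule.span ℝ {w})ᗮ}
    (hy : s * ⟪w, v⟫ ≤ 0 → ‖y - (Submodule.span ℝ {w})ᗮ.orthogonalProjectionOnto v‖ <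
      ‖(Submodule.span ℝ {w})ᗮ.orthogonalProjectionOnto v‖) :
    s • w + (y : E) ≠ -(c • v) := by
  set P := (Submodule.span ℝ {w})ᗮ.orthogonalProjectionOnto v
  intro heq
  have hinner : s * ‖w‖ ^ 2 = -(c * ⟪w, v⟫) := by
    have := congrArg (inner ℝ w) heq
    rwa [inner_add_right, inner_smul_right, real_inner_self_eq_norm_sq,
      Submodule.mem_orthogonal_singleton_iff_inner_right.mp y.2, add_zero, inner_neg_right,
      inner_smul_right] at this
  have hsign : s * ⟪w, v⟫ ≤ 0 := by
    refine nonpos_of_mul_nonpos_left (b := ‖w‖ ^ 2) ?_ (by positivity)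
    rw [mul_right_comm, hinner]
    nlinarith [mul_nonneg hc (sq_nonneg ⟪w, v⟫)]
  have hproj : y = -(c • P) := by
    have := congrArg (Submodule.span ℝ {w})ᗮ.orthogonalProjectionOnto heq
    rwa [map_add, map_smul, map_neg, map_smul,
      Submodule.orthogonalProjectionOnto_mem_subspace_eq_self,
      Submodule.orthogonalProjectionOnto_orthogonalComplement_singleton_eq_zero,
      smul_zero, zero_add] at this
  have hdist : ‖y - P‖ = (c + 1) * ‖P‖ := by
    rw [hproj, ← norm_smul_of_nonneg (by positivity), ← norm_neg]
    congr 1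
    module
  nlinarith [hy hsign, norm_nonneg P]

variable [FiniteDimensional ℝ E]

lemma exists_pos_le_norm_orthogonalProjectionOnto {w : E} {h : E → ℝ} (hh : Continuous h) {m : E}
    (hpos : 0 < h (m + w)) (hneg : h (m - w) < 0) :
    ∃ ε > 0, ∀ x ∈ Metric.sphere m ‖w‖, h x * ⟪w, x - m⟫ ≤ 0 →
      ε ≤ ‖(Submodule.span ℝ {w})ᗮ.orthogonalProjectionOnto (x - m)‖ := by
  have hcpt : IsCompact (Metric.sphere m ‖w‖ ∩ {x | h x * ⟪w, x - m⟫ ≤ 0}) :=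
    (isCompact_sphere m ‖w‖).inter_right (isClosed_le (by fun_prop) continuous_const)
  obtain ⟨ε, hε, hle⟩ := hcpt.exists_forall_le' (a := 0)
    (f := fun x => ‖(Submodule.span ℝ {w})ᗮ.orthogonalProjectionOnto (x - m)‖)
    (by fun_prop) fun x ⟨hx, (hhx : h x * ⟪w, x - m⟫ ≤ 0)⟩ => by
      refine norm_pos_iff.mpr fun hproj => hhx.not_gt ?_
      rw [Submodule.orthogonalProjectionOnto_eq_zero_iff, Submodule.orthogonal_orthogonal] at hproj
      obtain ⟨v, rfl⟩ : ∃ v, x = m + v := ⟨x - m, (add_sub_cancel m x).symm⟩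
      rw [add_sub_cancel_left] at hproj ⊢
      have hw : w ≠ 0 := ne_zero_of_pos_add_of_sub_neg hpos hneg
      have hww : 0 < ⟪w, w⟫ := real_inner_self_pos.mpr hw
      rcases eq_or_eq_neg_of_mem_span_singleton_of_norm_eq hproj (by simpa using hx)
        with rfl | rfl
      · positivity
      · rw [inner_neg_right, ← sub_eq_add_neg]
        exact mul_pos_of_neg_of_neg hneg (neg_lt_zero.mpr hww)
  exact ⟨ε, hε, fun x hx hhx => hle x ⟨hx, hhx⟩⟩

-- A zero of `h • w + g`, where `g` is a small perturbation of the orthogonal projection along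
-- `w` that does not vanish on `lam`, is a zero of `h` outside `lam`.
theorem exists_eq_zero_notMem_of_zeroUnstableOn {lam : Set E} {m w : E}
    (hlam : ZeroUnstableOn (Submodule.span ℝ {w})ᗮ lam) {h : E → ℝ} (hh : Continuous h)
    (hpos : 0 < h (m + w)) (hneg : h (m - w) < 0) :
    ∃ x ∈ Metric.closedBall m ‖w‖, h x = 0 ∧ x ∉ lam := by
  have hw : w ≠ 0 := ne_zero_of_pos_add_of_sub_neg hpos hneg
  obtain ⟨ε, hε, hP⟩ := exists_pos_le_norm_orthogonalProjectionOnto hh hpos hneg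
  obtain ⟨g, hg, hgP, hg0⟩ := hlam
    (fun x => (Submodule.span ℝ {w})ᗮ.orthogonalProjectionOnto (x - m)) (by fun_prop) (ε / 2)
    (half_pos hε)
  obtain ⟨x, hx, hzero⟩ := exists_eq_zero_of_forall_sphere_ne_neg_smul
    (F := fun x => h x • w + (g x : E)) (m := m) (norm_pos_iff.mpr hw) (by fun_prop)
    fun x hx c hc => smul_add_ne_neg_smul hw hc fun hsign => by linarith [hgP x, hP x hx hsign]
  have hhx : h x = 0 := by
    have := congrArg (inner ℝ w) hzero
    simpa [inner_add_right, inner_smul_right, hw,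
      Submodule.mem_orthogonal_singleton_iff_inner_right.mp (g x).2] using this
  refine ⟨x, hx, hhx, fun hxlam => hg0 x hxlam ?_⟩
  simpa [hhx] using hzero

end Crossing

section NonseparatingSets

open scoped RealInnerProductSpace

/-- `lam` neither contains nor disconnects any connected open set. -/
def IsNonseparating {X : Type*} [TopologicalSpace X] (lam : Set X) : Prop :=
  ∀ U : Set X, IsOpen U → IsConnected U → IsConnected (U \ lam)

lemma IsNonseparating.image_homeomorph {X Y : Type*} [TopologicalSpace X] [TopologicalSpace Y]
    (e : X ≃ₜ Y) {lam : Set X} (hlam : IsNonseparating lam) : IsNonseparating (e '' lam) := by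
  intro U hU hconn
  have hpre := hlam (e ⁻¹' U) (hU.preimage e.continuous) (e.isConnected_preimage.mpr hconn)
  rwa [← e.isConnected_image, image_sdiff e.injective, image_preimage_eq _ e.surjective] at hpre

lemma inter_closure_inter_closure_nonempty_of_isPreconnected {X : Type*} [TopologicalSpace X]
    {Ω U V : Set X} (hΩ : IsPreconnected Ω) (hcover : Ω ⊆ closure (U ∪ V))
    (hU : (Ω ∩ U).Nonempty) (hV : (Ω ∩ V).Nonempty) :
    (Ω ∩ (closure U ∩ closure V)).Nonempty :=
  isPreconnected_closed_iff.mp hΩ _ _ isClosed_closure isClosed_closure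
    (hcover.trans closure_union.subset) (hU.mono (inter_subset_inter_right Ω subset_closure))
    (hV.mono (inter_subset_inter_right Ω subset_closure))

lemma exists_continuous_pos_neg_of_disjoint {X : Type*} [PseudoMetricSpace X] {U V : Set X}
    (hU : IsOpen U) (hV : IsOpen V) (hUV : Disjoint U V) (hUne : U.Nonempty) (hVne : V.Nonempty) :
    ∃ h : X → ℝ, Continuous h ∧ (∀ x ∈ U, 0 < h x) ∧ (∀ x ∈ V, h x < 0) := by
  have hpos : ∀ {U V : Set X}, IsOpen U → Disjoint U V → V.Nonempty → ∀ x ∈ U,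
      Metric.infDist x Vᶜ < Metric.infDist x Uᶜ := fun hU hUV hVne x hx => by
    rw [Metric.infDist_zero_of_mem (hUV.notMem_of_mem_left hx)]
    exact (hU.isClosed_compl.notMem_iff_infDist_pos
      (hVne.mono hUV.symm.subset_compl_right)).mp (not_not.mpr hx)
  exact ⟨fun x => Metric.infDist x Uᶜ - Metric.infDist x Vᶜ,
    (Metric.continuous_infDist_pt _).sub (Metric.continuous_infDist_pt _),
    fun x hx => sub_pos.mpr (hpos hU hUV hVne x hx),
    fun x hx => sub_neg.mpr (hpos hV hUV.symm hUne x hx)⟩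

lemma closedBall_midpoint_subset_ball {F : Type*} [SeminormedAddCommGroup F] [NormedSpace ℝ F]
    {c p q : F} {r : ℝ} (hp : p ∈ Metric.ball c (r / 2)) (hq : q ∈ Metric.ball c (r / 2)) :
    Metric.closedBall (midpoint ℝ p q) ‖(2⁻¹ : ℝ) • (p - q)‖ ⊆ Metric.ball c r := by
  refine Metric.closedBall_subset_ball' ?_
  have hmid : midpoint ℝ p q ∈ Metric.ball c (r / 2) := (convex_ball c _).midpoint_mem hp hq
  rw [Metric.mem_ball] at hp hq hmid
  rw [norm_smul_of_nonneg (by norm_num), ← dist_eq_norm]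
  linarith [dist_triangle_right p q c]

variable {E : Type*} [NormedAddCommGroup E] [InnerProductSpace ℝ E] [FiniteDimensional ℝ E]
  {lam : Set E}

lemma interior_eq_empty_of_zeroUnstableOn [Nontrivial E]
    (hlam : ∀ w : E, w ≠ 0 → ZeroUnstableOn (Submodule.span ℝ {w})ᗮ lam) : interior lam = ∅ := by
  by_contra! ⟨m, hm⟩
  obtain ⟨r, hr, hball⟩ :=
    Metric.nhds_basis_closedBall.mem_iff.mp (mem_interior_iff_mem_nhds.mp hm)
  obtain ⟨w, hw⟩ := exists_norm_eq E hr.le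
  have hw0 : w ≠ 0 := norm_pos_iff.mp (hw ▸ hr)
  obtain ⟨x, hx, -, hxlam⟩ := exists_eq_zero_notMem_of_zeroUnstableOn (m := m)
    (hlam w hw0) (h := fun x => ⟪w, x - m⟫) (by fun_prop) (by simp [hw0]) (by simp [hw0])
  exact hxlam (hball (hw ▸ hx))

lemma isPreconnected_diff_of_zeroUnstableOn {Ω : Set E} (hΩ : IsOpen Ω) (hconn : IsPreconnected Ω)
    (hclosed : IsClosed lam) (hint : interior lam = ∅)
    (hlam : ∀ w : E, w ≠ 0 → ZeroUnstableOn (Submodule.span ℝ {w})ᗮ lam) :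
    IsPreconnected (Ω \ lam) := by
  intro U₀ V₀ hU₀ hV₀ hsub hUne hVne
  by_contra! hdisj
  let U : Set E := (Ω \ lam) ∩ U₀
  let V : Set E := (Ω \ lam) ∩ V₀
  have hopen : IsOpen (Ω \ lam) := hΩ.sdiff hclosed
  have hUV : U ∪ V = Ω \ lam := by rw [← inter_union_distrib_left, inter_eq_left.mpr hsub]
  have hUV_disj : Disjoint U V := by
    rw [disjoint_iff_inter_eq_empty, ← hdisj]
    exact (inter_inter_distrib_left _ _ _).symm
  obtain ⟨h, hh, hpos, hneg⟩ := exists_continuous_pos_neg_of_disjoint (hopen.inter hU₀)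
    (hopen.inter hV₀) hUV_disj hUne hVne
  obtain ⟨x₀, hx₀, hx₀U, hx₀V⟩ : (Ω ∩ (closure U ∩ closure V)).Nonempty := by
    refine inter_closure_inter_closure_nonempty_of_isPreconnected hconn (hUV ▸ ?_)
      (hUne.mono fun x hx => ⟨hx.1.1, hx⟩) (hVne.mono fun x hx => ⟨hx.1.1, hx⟩)
    exact (interior_eq_empty_iff_dense_compl.mp hint).open_subset_closure_inter hΩ
  obtain ⟨r, hr, hball⟩ := Metric.isOpen_iff.mp hΩ x₀ hx₀
  obtain ⟨p, hp, hpU⟩ := mem_closure_iff_nhds.mp hx₀U _ (Metric.ball_mem_nhds x₀ (half_pos hr))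
  obtain ⟨q, hq, hqV⟩ := mem_closure_iff_nhds.mp hx₀V _ (Metric.ball_mem_nhds x₀ (half_pos hr))
  have hpq : p - q ≠ 0 := sub_ne_zero.mpr (hUV_disj.ne_of_mem hpU hqV)
  obtain ⟨x, hx, hhx, hxlam⟩ := exists_eq_zero_notMem_of_zeroUnstableOn (m := midpoint ℝ p q)
    (hlam ((2⁻¹ : ℝ) • (p - q)) (smul_ne_zero (by norm_num) hpq)) hh
    (by convert hpos p hpU using 2; rw [midpoint_eq_smul_add, invOf_eq_inv]; module)
    (by convert hneg q hqV using 2; rw [midpoint_eq_smul_add, invOf_eq_inv]; module)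
  have hxUV : x ∈ U ∪ V := hUV ▸ ⟨hball (closedBall_midpoint_subset_ball hp hq hx), hxlam⟩
  exact hxUV.elim (fun hxU => (hpos x hxU).ne' hhx) fun hxV => (hneg x hxV).ne hhx

theorem isNonseparating_of_zeroUnstableOn [Nontrivial E] (hclosed : IsClosed lam)
    (hlam : ∀ w : E, w ≠ 0 → ZeroUnstableOn (Submodule.span ℝ {w})ᗮ lam) :
    IsNonseparating lam := by
  have hint := interior_eq_empty_of_zeroUnstableOn hlam
  refine fun U hU hconn => ⟨?_, isPreconnected_diff_of_zeroUnstableOn hU hconn.isPreconnected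
    hclosed hint hlam⟩
  exact (interior_eq_empty_iff_dense_compl.mp hint).inter_open_nonempty U hU hconn.nonempty

theorem isNonseparating_of_subset_sUnion_arcs {F : Type*} [NormedAddCommGroup F] [NormedSpace ℝ F]
    [FiniteDimensional ℝ F] (hdim : 3 ≤ Module.finrank ℝ F) {lam : Set F} (hclosed : IsClosed lam)
    {S : Set (Set F)} (hS : S.Countable) (harc : ∀ A ∈ S, IsArc A) (hlam : lam ⊆ ⋃₀ S) :
    IsNonseparating lam := by
  let e : F ≃ₜ EuclideanSpace ℝ (Fin (Module.finrank ℝ F)) := toEuclidean.toHomeomorph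
  have : Nontrivial (EuclideanSpace ℝ (Fin (Module.finrank ℝ F))) :=
    Module.nontrivial_of_finrank_pos (R := ℝ) (by rw [finrank_euclideanSpace_fin]; lia)
  rw [← e.toEquiv.symm_image_image lam]
  refine (isNonseparating_of_zeroUnstableOn (e.isClosed_image.mpr hclosed) fun w hw =>
    ?_).image_homeomorph e.symm
  have hcodim : 1 < Module.finrank ℝ (Submodule.span ℝ {w})ᗮ := by
    have hsum := (Submodule.span ℝ {w}).finrank_add_finrank_orthogonal
    rw [finrank_span_singleton hw, finrank_euclideanSpace_fin] at hsum
    omega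
  exact (zeroUnstableOn_of_subset_sUnion_arcs hcodim hS harc hlam).of_leftInvOn e.continuous
    e.symm.continuous (mapsTo_iff_image_subset.mpr (e.toEquiv.symm_image_image lam).subset)
    fun x _ => e.apply_symm_apply x

end NonseparatingSets

section Paths

open Filter

lemma continuous_of_forall_continuousOn_Icc_intCast {X : Type*} [TopologicalSpace X] {f : ℝ → X}
    (hf : ∀ n : ℤ, ContinuousOn f (Icc n (n + 1))) : Continuous f := by
  have hlf : LocallyFinite fun n : ℤ => Icc (n : ℝ) (n + 1) :=
    locallyFinite_Icc_of_tendsto tendsto_intCast_atTop_atTop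
      (tendsto_atBot_add_const_right _ 1 (tendsto_intCast_atBot_iff.mpr tendsto_id))
  exact hlf.continuous (iUnion_Icc_intCast ℝ) (fun _ => isClosed_Icc) hf

lemma exists_continuous_forall_mem_floor {X : Type*} [TopologicalSpace X] {V : ℤ → Set X}
    (hV : ∀ n, IsPathConnected (V n)) (hne : ∀ n, (V n ∩ V (n + 1)).Nonempty) :
    ∃ c : ℝ → X, Continuous c ∧ ∀ t, c t ∈ V ⌊t⌋ := by
  choose p hp hp' using hne
  have hjoin : ∀ n, JoinedIn (V n) (p (n - 1)) (p n) := fun n =>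
    (hV n).joinedIn _ (by simpa using hp' (n - 1)) _ (hp n)
  let P : ∀ n, Path (p (n - 1)) (p n) := fun n => (hjoin n).somePath
  let c : ℝ → X := fun t => (P ⌊t⌋).extend (Int.fract t)
  have hcP : ∀ n : ℤ, EqOn c (fun t => (P n).extend (t - n)) (Icc n (n + 1)) := by
    intro n t ht
    rcases ht.2.eq_or_lt with rfl | hlt
    · have hfloor : ⌊(n : ℝ) + 1⌋ = n + 1 := by simp
      simp [c, hfloor]
    · obtain rfl : ⌊t⌋ = n := Int.floor_eq_iff.mpr ⟨ht.1, hlt⟩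
      rfl
  refine ⟨c, continuous_of_forall_continuousOn_Icc_intCast fun n => ?_, fun t => ?_⟩
  · refine ContinuousOn.congr ?_ (hcP n)
    exact ((P n).continuous_extend.comp (by fun_prop)).continuousOn
  · change (P ⌊t⌋).extend (Int.fract t) ∈ V ⌊t⌋
    rw [Path.extend_apply _ ⟨Int.fract_nonneg t, (Int.fract_lt_one t).le⟩]
    exact (hjoin ⌊t⌋).somePath_mem _

lemma exists_antitone_isConnected_tendsto_smallSets {X : Type*} [TopologicalSpace X]
    [LocallyConnectedSpace X] [FirstCountableTopology X] {Ω : Set X} (hΩ : IsOpen Ω)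
    (hconn : IsPreconnected Ω) {a : X} (ha : a ∈ Ω) :
    ∃ B : ℕ → Set X, B 0 = Ω ∧ Antitone B ∧ (∀ n, IsOpen (B n) ∧ a ∈ B n ∧ IsConnected (B n)) ∧
      Tendsto B atTop (𝓝 a).smallSets := by
  obtain ⟨U, hU, hbasis⟩ := ((LocallyConnectedSpace.open_connected_basis a).restrict_subset
    (hΩ.mem_nhds ha)).exists_antitone_subbasis
  refine ⟨fun n => Nat.casesOn n Ω U, rfl, antitone_nat_of_succ_le fun n => ?_, fun n => ?_, ?_⟩
  · cases n with
    | zero => exact (hU 0).2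
    | succ n => exact hbasis.antitone n.le_succ
  · cases n with
    | zero => exact ⟨hΩ, ha, ⟨a, ha⟩, hconn⟩
    | succ n => exact (hU n).1
  · exact (tendsto_add_atTop_iff_nat 1).mp hbasis.tendsto_smallSets

lemma exists_isConnected_chain {X : Type*} [TopologicalSpace X] [LocallyConnectedSpace X]
    [FirstCountableTopology X] {Ω : Set X} (hΩ : IsOpen Ω) (hconn : IsPreconnected Ω) {a a' : X}
    (ha : a ∈ Ω) (ha' : a' ∈ Ω) :
    ∃ V : ℤ → Set X, (∀ n, IsOpen (V n) ∧ IsConnected (V n) ∧ V n ⊆ Ω) ∧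
      (∀ n, (V n ∩ V (n + 1)).Nonempty) ∧
      Tendsto V atBot (𝓝 a).smallSets ∧ Tendsto V atTop (𝓝 a').smallSets := by
  obtain ⟨B, hB0, hB, hBprop, hBlim⟩ := exists_antitone_isConnected_tendsto_smallSets hΩ hconn ha
  obtain ⟨B', hB'0, hB', hB'prop, hB'lim⟩ :=
    exists_antitone_isConnected_tendsto_smallSets hΩ hconn ha'
  have hBΩ : ∀ n, B n ⊆ Ω := fun n => hB0 ▸ hB n.zero_le
  have hB'Ω : ∀ n, B' n ⊆ Ω := fun n => hB'0 ▸ hB' n.zero_le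
  let V : ℤ → Set X := fun n => B (-n).toNat ∩ B' n.toNat
  have hV_nonpos : ∀ n ≤ 0, V n = B (-n).toNat := fun n hn => by
    rw [inter_eq_left, Int.toNat_of_nonpos hn, hB'0]
    exact hBΩ _
  have hV_nonneg : ∀ n ≥ 0, V n = B' n.toNat := fun n hn => by
    rw [inter_eq_right, Int.toNat_of_nonpos (neg_nonpos.mpr hn), hB0]
    exact hB'Ω _
  have htoNat : Tendsto Int.toNat atTop atTop :=
    tendsto_natCast_atTop_iff.mp (tendsto_atTop_mono Int.self_le_toNat tendsto_id)
  refine ⟨V, fun n => ⟨(hBprop _).1.inter (hB'prop _).1, ?_, inter_subset_left.trans (hBΩ _)⟩,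
    fun n => ?_, ?_, ?_⟩
  · rcases le_total n 0 with hn | hn
    · exact hV_nonpos n hn ▸ (hBprop _).2.2
    · exact hV_nonneg n hn ▸ (hB'prop _).2.2
  · rcases lt_or_ge n 0 with hn | hn
    · rw [hV_nonpos n hn.le, hV_nonpos (n + 1) hn]
      exact ⟨a, (hBprop _).2.1, (hBprop _).2.1⟩
    · rw [hV_nonneg n hn, hV_nonneg (n + 1) (by positivity)]
      exact ⟨a', (hB'prop _).2.1, (hB'prop _).2.1⟩
  · exact (hBlim.comp (htoNat.comp tendsto_neg_atBot_atTop)).smallSets_mono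
      (.of_forall fun _ => inter_subset_left)
  · exact (hB'lim.comp htoNat).smallSets_mono (.of_forall fun _ => inter_subset_right)

namespace IsNonseparating

variable {X : Type*} [TopologicalSpace X] {lam : Set X}

lemma diff_nonempty [LocallyConnectedSpace X] (hlam : IsNonseparating lam) {U : Set X}
    (hU : IsOpen U) (hne : U.Nonempty) : (U \ lam).Nonempty := by
  obtain ⟨x, hx⟩ := hne
  exact (hlam _ hU.connectedComponentIn (isConnected_connectedComponentIn_iff.mpr hx)).nonempty.mono
    (sdiff_subset_sdiff_left (connectedComponentIn_subset U x))

lemma isPathConnected_diff [LocallyPathConnectedSpace X] (hlam : IsNonseparating lam)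
    (hclosed : IsClosed lam) {U : Set X} (hU : IsOpen U) (hconn : IsConnected U) :
    IsPathConnected (U \ lam) :=
  (hU.sdiff hclosed).isConnected_iff_isPathConnected.mp (hlam U hU hconn)

theorem exists_continuous_tendsto [LocallyPathConnectedSpace X] [FirstCountableTopology X]
    (hlam : IsNonseparating lam) (hclosed : IsClosed lam) {Ω : Set X} (hΩ : IsOpen Ω)
    (hconn : IsPreconnected Ω) {a a' : X} (ha : a ∈ Ω) (ha' : a' ∈ Ω) :
    ∃ c : ℝ → X, Continuous c ∧ (∀ t, c t ∈ Ω \ lam) ∧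
      Tendsto c atBot (𝓝 a) ∧ Tendsto c atTop (𝓝 a') := by
  obtain ⟨V, hV, hV_inter, hbot, htop⟩ := exists_isConnected_chain hΩ hconn ha ha'
  obtain ⟨c, hc, hcV⟩ := exists_continuous_forall_mem_floor (V := fun n => V n \ lam)
    (fun n => hlam.isPathConnected_diff hclosed (hV n).1 (hV n).2.1) fun n => by
      obtain ⟨x, ⟨hx, hx'⟩, hxlam⟩ :=
        hlam.diff_nonempty ((hV n).1.inter (hV (n + 1)).1) (hV_inter n)
      exact ⟨x, ⟨hx, hxlam⟩, hx', hxlam⟩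
  exact ⟨c, hc, fun t => ⟨(hV _).2.2 (hcV t).1, (hcV t).2⟩,
    (hbot.comp tendsto_floor_atBot).of_smallSets (.of_forall fun t => (hcV t).1),
    (htop.comp tendsto_floor_atTop).of_smallSets (.of_forall fun t => (hcV t).1)⟩

end IsNonseparating

end Paths

section SmoothEmbedding

open Filter
open scoped ContDiff

lemma dimH_image_le_finrank_of_contDiffAt {E F : Type*} [NormedAddCommGroup E] [NormedSpace ℝ E]
    [FiniteDimensional ℝ E] [NormedAddCommGroup F] [NormedSpace ℝ F] {f : E → F} {s : Set E}
    (hf : ∀ x ∈ s, ContDiffAt ℝ 1 f x) : dimH (f '' s) ≤ Module.finrank ℝ E :=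
  calc dimH (f '' s) ≤ dimH s := dimH_image_le_of_locally_lipschitzOn fun x hx =>
        let ⟨K, t, ht, hK⟩ := (hf x hx).exists_lipschitzOnWith
        ⟨K, t, mem_nhdsWithin_of_mem_nhds ht, hK⟩
    _ ≤ dimH (univ : Set E) := dimH_mono (subset_univ s)
    _ = Module.finrank ℝ E := Real.dimH_univ_eq_finrank E

lemma dimH_setOf_exists_add_smul_eq_zero_le {E F : Type*} [NormedAddCommGroup E]
    [NormedSpace ℝ E] [FiniteDimensional ℝ E] [NormedAddCommGroup F] [NormedSpace ℝ F]
    {x : E → F} {k : E → ℝ} (hx : ContDiff ℝ 1 x) (hk : ContDiff ℝ 1 k) :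
    dimH {v | ∃ p, k p ≠ 0 ∧ x p + k p • v = 0} ≤ Module.finrank ℝ E := by
  refine (dimH_mono ?_).trans (dimH_image_le_finrank_of_contDiffAt (s := {p | k p ≠ 0})
    (f := fun p => (k p)⁻¹ • -x p) fun p hp => (hk.contDiffAt.inv hp).smul hx.contDiffAt.neg)
  rintro v ⟨p, hp, hv⟩
  exact ⟨p, hp, (inv_smul_eq_iff₀ hp).mpr (eq_neg_of_add_eq_zero_right hv).symm⟩

variable {F : Type*} [NormedAddCommGroup F] [NormedSpace ℝ F]

lemma deriv_add_smul_const {γ : ℝ → F} {φ : ℝ → ℝ} {t : ℝ} (hγ : DifferentiableAt ℝ γ t)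
    (hφ : DifferentiableAt ℝ φ t) (v : F) :
    deriv (fun t => γ t + φ t • v) t = deriv γ t + deriv φ t • v :=
  (hγ.hasDerivAt.add (hφ.hasDerivAt.smul_const v)).deriv

variable [FiniteDimensional ℝ F]

-- The bad directions `v` form a set of dimension at most `2`, the number of parameters `(s, t)`.
lemma dense_setOf_separating_perturbation (hF : 3 ≤ Module.finrank ℝ F) {γ : ℝ → F} {φ : ℝ → ℝ}
    (hγ : ContDiff ℝ 2 γ) (hφ : ContDiff ℝ 2 φ) :
    Dense {v : F | (∀ s t, γ s + φ s • v = γ t + φ t • v → φ s = φ t) ∧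
      ∀ t, deriv (fun t => γ t + φ t • v) t = 0 → deriv φ t = 0} := by
  have hγ1 : ContDiff ℝ 1 γ := hγ.of_le one_le_two
  have hφ1 : ContDiff ℝ 1 φ := hφ.of_le one_le_two
  have hpairs := dimH_setOf_exists_add_smul_eq_zero_le (E := ℝ × ℝ)
    (x := fun p => γ p.1 - γ p.2) (k := fun p => φ p.1 - φ p.2) (by fun_prop) (by fun_prop)
  have hderivs := dimH_setOf_exists_add_smul_eq_zero_le (E := ℝ) (x := deriv γ) (k := deriv φ)
    hγ.deriv' hφ.deriv'
  have hpairs_lt : Module.finrank ℝ (ℝ × ℝ) < Module.finrank ℝ F := by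
    rw [Module.finrank_prod, Module.finrank_self]
    lia
  have hderivs_lt : Module.finrank ℝ ℝ < Module.finrank ℝ F := by
    rw [Module.finrank_self]
    lia
  have hdim := (dimH_union _ _).trans_lt (max_lt
    (hpairs.trans_lt (Nat.cast_lt.mpr hpairs_lt)) (hderivs.trans_lt (Nat.cast_lt.mpr hderivs_lt)))
  refine (dense_compl_of_dimH_lt_finrank hdim).mono fun v hv => ⟨fun s t hst => ?_, fun t ht => ?_⟩
  · by_contra hne
    refine hv (Or.inl ⟨(s, t), sub_ne_zero.mpr hne, ?_⟩)
    rw [sub_smul, sub_add_sub_comm, sub_eq_zero.mpr hst]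
  · by_contra hne
    refine hv (Or.inr ⟨t, hne, ?_⟩)
    rw [← ht, deriv_add_smul_const (hγ1.differentiable one_ne_zero t)
      (hφ1.differentiable one_ne_zero t)]

-- Perturb `γ` twice, along `t ↦ t * ε t` and then along `ε`: a coincidence at `s`, `t` forces
-- `ε s = ε t` by the second step, and then `s = t` by the first. Derivatives behave likewise.
theorem exists_contDiff_injective_deriv_ne_zero (hF : 3 ≤ Module.finrank ℝ F) {γ : ℝ → F}
    {ε : ℝ → ℝ} (hγ : ContDiff ℝ ∞ γ) (hε : ContDiff ℝ ∞ ε) (hpos : ∀ t, 0 < ε t) :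
    ∃ Γ : ℝ → F, ContDiff ℝ ∞ Γ ∧ Function.Injective Γ ∧ (∀ t, deriv Γ t ≠ 0) ∧
      ∀ t, ‖Γ t - γ t‖ < ε t * (1 + |t|) := by
  have h2 : (2 : WithTop ℕ∞) ≤ ∞ := ENat.LEInfty.out
  have hball : ∀ {s : Set F}, Dense s → ∃ v ∈ s, ‖v‖ < 1 := fun hs =>
    let ⟨v, hv, hvs⟩ := Metric.dense_iff.mp hs 0 1 one_pos
    ⟨v, hvs, mem_ball_zero_iff.mp hv⟩
  obtain ⟨v, ⟨hv_inj, hv_deriv⟩, hv⟩ := hball (dense_setOf_separating_perturbation hF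
    (φ := fun t => t * ε t) (hγ.of_le h2) (by have := hε.of_le h2; fun_prop))
  let γ₁ : ℝ → F := fun t => γ t + (t * ε t) • v
  have hγ₁ : ContDiff ℝ ∞ γ₁ := by fun_prop
  obtain ⟨w, ⟨hw_inj, hw_deriv⟩, hw⟩ := hball
    (dense_setOf_separating_perturbation hF (hγ₁.of_le h2) (hε.of_le h2))
  refine ⟨fun t => γ₁ t + ε t • w, by fun_prop, fun s t hst => ?_, fun t ht => ?_, fun t => ?_⟩
  · have hε_eq : ε s = ε t := hw_inj s t hst
    have hγ₁_eq : γ₁ s = γ₁ t := by simpa [hε_eq] using hst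
    simpa [hε_eq, (hpos t).ne'] using hv_inj s t hγ₁_eq
  · have hdε : deriv ε t = 0 := hw_deriv t ht
    have hdiff : DifferentiableAt ℝ ε t := (hε.differentiable (by simp)) t
    rw [deriv_add_smul_const ((hγ₁.differentiable (by simp)) t) hdiff, hdε, zero_smul,
      add_zero] at ht
    have hdφ := hv_deriv t ht
    rw [deriv_fun_mul differentiableAt_fun_id hdiff, hdε] at hdφ
    exact (hpos t).ne' (by simpa using hdφ)
  · calc ‖γ₁ t + ε t • w - γ t‖ = ε t * ‖w + t • v‖ := by
          rw [← norm_smul_of_nonneg (hpos t).le]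
          congr 1
          module
      _ ≤ ε t * (‖w‖ + |t| * ‖v‖) := by
          rw [← Real.norm_eq_abs, ← norm_smul]
          exact mul_le_mul_of_nonneg_left (norm_add_le _ _) (hpos t).le
      _ < ε t * (1 + |t|) :=
          mul_lt_mul_of_pos_left (add_lt_add_of_lt_of_le hw
            (mul_le_of_le_one_right (abs_nonneg t) hv.le)) (hpos t)

lemma exists_contDiff_pos_lt {E : Type*} [NormedAddCommGroup E] [NormedSpace ℝ E]
    [FiniteDimensional ℝ E] {κ : E → ℝ} (hκ : Continuous κ) (hpos : ∀ x, 0 < κ x) :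
    ∃ ε : E → ℝ, ContDiff ℝ ∞ ε ∧ ∀ x, 0 < ε x ∧ ε x < κ x := by
  obtain ⟨ε, hε, hdist, -⟩ := (hκ.div_const 2).exists_contDiff_approx ⊤ (hκ.div_const 2)
    fun x => half_pos (hpos x)
  refine ⟨ε, hε, fun x => ?_⟩
  have := abs_lt.mp (hdist x)
  constructor <;> linarith

theorem exists_contDiff_injective_deriv_ne_zero_dist_lt (hF : 3 ≤ Module.finrank ℝ F)
    {c : ℝ → F} {δ : ℝ → ℝ} (hc : Continuous c) (hδ : Continuous δ) (hpos : ∀ t, 0 < δ t) :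
    ∃ Γ : ℝ → F, ContDiff ℝ ∞ Γ ∧ Function.Injective Γ ∧ (∀ t, deriv Γ t ≠ 0) ∧
      ∀ t, dist (Γ t) (c t) < δ t := by
  have habs : ∀ t : ℝ, 0 < 1 + |t| := fun t => by positivity
  obtain ⟨γ, hγ, hγc, -⟩ := hc.exists_contDiff_approx ⊤ (hδ.div_const 2)
    fun t => half_pos (hpos t)
  obtain ⟨ε, hε, hε_lt⟩ := exists_contDiff_pos_lt
    ((hδ.div_const 2).div (by fun_prop : Continuous fun t : ℝ => 1 + |t|) fun t => (habs t).ne')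
    fun t => div_pos (half_pos (hpos t)) (habs t)
  obtain ⟨Γ, hΓ, hinj, hderiv, hΓγ⟩ :=
    exists_contDiff_injective_deriv_ne_zero hF hγ hε fun t => (hε_lt t).1
  refine ⟨Γ, hΓ, hinj, hderiv, fun t => ?_⟩
  calc dist (Γ t) (c t) ≤ dist (Γ t) (γ t) + dist (γ t) (c t) := dist_triangle _ _ _
    _ < δ t / 2 + δ t / 2 := by
      gcongr
      · rw [dist_eq_norm]
        exact (hΓγ t).trans ((lt_div_iff₀ (habs t)).mp (hε_lt t).2)
      · exact hγc t
    _ = δ t := add_halves _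

lemma mem_of_dist_lt_infDist_compl {X : Type*} [PseudoMetricSpace X] {W : Set X} {x y : X}
    (h : dist x y < Metric.infDist y Wᶜ) : x ∈ W := by
  by_contra hx
  exact (Metric.infDist_le_dist_of_mem hx).not_gt (dist_comm x y ▸ h)

lemma tendsto_of_dist_lt_infDist_compl {X T : Type*} [PseudoMetricSpace X] {W : Set X}
    {l : Filter T} {f g : T → X} {b : X} (hb : b ∉ W) (hg : Tendsto g l (𝓝 b))
    (hfg : ∀ t, dist (f t) (g t) < Metric.infDist (g t) Wᶜ) : Tendsto f l (𝓝 b) := by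
  refine hg.congr_dist (squeeze_zero (fun _ => dist_nonneg) (fun t => ?_)
    (tendsto_iff_dist_tendsto_zero.mp hg))
  rw [dist_comm]
  exact (hfg t).le.trans (Metric.infDist_le_dist_of_mem hb)

theorem exists_contDiff_injective_deriv_ne_zero_tendsto (hF : 3 ≤ Module.finrank ℝ F) {W : Set F}
    (hW : IsOpen W) {a a' : F} (ha : a ∉ W) (ha' : a' ∉ W) {c : ℝ → F} (hc : Continuous c)
    (hcW : ∀ t, c t ∈ W) (hbot : Tendsto c atBot (𝓝 a)) (htop : Tendsto c atTop (𝓝 a')) :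
    ∃ Γ : ℝ → F, ContDiff ℝ ∞ Γ ∧ Function.Injective Γ ∧ (∀ t, deriv Γ t ≠ 0) ∧
      (∀ t, Γ t ∈ W) ∧ Tendsto Γ atBot (𝓝 a) ∧ Tendsto Γ atTop (𝓝 a') := by
  obtain ⟨Γ, hΓ, hinj, hderiv, hdist⟩ := exists_contDiff_injective_deriv_ne_zero_dist_lt hF hc
    ((Metric.continuous_infDist_pt Wᶜ).comp hc) fun t =>
      (hW.isClosed_compl.notMem_iff_infDist_pos ⟨a, ha⟩).mp (not_not.mpr (hcW t))
  exact ⟨Γ, hΓ, hinj, hderiv, fun t => mem_of_dist_lt_infDist_compl (hdist t),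
    tendsto_of_dist_lt_infDist_compl ha hbot hdist, tendsto_of_dist_lt_infDist_compl ha' htop hdist⟩

end SmoothEmbedding

section ArcOfCurve

open Filter
open scoped Real ContDiff

variable {X : Type*} [TopologicalSpace X]

lemma exists_injOn_continuousOn_Icc_extension [T3Space X] {f : ℝ → X} {α β : ℝ} {a a' : X}
    (hαβ : α < β) (hf : ContinuousOn f (Ioo α β)) (hinj : InjOn f (Ioo α β))
    (hα : Tendsto f (𝓝[>] α) (𝓝 a)) (hβ : Tendsto f (𝓝[<] β) (𝓝 a')) (hne : a ≠ a')
    (ha : a ∉ f '' Ioo α β) (ha' : a' ∉ f '' Ioo α β) :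
    ∃ γ : ℝ → X, ContinuousOn γ (Icc α β) ∧ InjOn γ (Icc α β) ∧ γ α = a ∧ γ β = a' ∧
      EqOn γ f (Ioo α β) := by
  let γ : ℝ → X := extendFrom (Ioo α β) f
  have hγα : γ α = a := eq_lim_at_left_extendFrom_Ioo hαβ hα
  have hγβ : γ β = a' := eq_lim_at_right_extendFrom_Ioo hαβ hβ
  have hγf : EqOn γ f (Ioo α β) := fun s hs => extendFrom_eq (subset_closure hs) (hf s hs)
  refine ⟨γ, continuousOn_Icc_extendFrom_Ioo hf hα hβ, ?_, hγα, hγβ, hγf⟩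
  rw [← Ico_insert_right hαβ.le, ← Ioo_insert_left hαβ, injOn_insert (by simp [hαβ.ne']),
    injOn_insert (by simp), image_insert_eq, hγf.image_eq, hγα, hγβ]
  exact ⟨⟨hinj.congr hγf.symm, ha⟩, by simp [hne.symm, ha']⟩

lemma isArcFrom_image_Icc {γ : ℝ → X} {α β : ℝ} (hαβ : α < β) (hγ : ContinuousOn γ (Icc α β))
    (hinj : InjOn γ (Icc α β)) : IsArcFrom (γ '' Icc α β) (γ α) (γ β) := by
  let ℓ : ℝ → ℝ := AffineMap.lineMap α β
  have hℓ : ℓ '' Icc 0 1 = Icc α β := by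
    rw [← segment_eq_Icc hαβ.le, segment_eq_image_lineMap]
  have hmaps : MapsTo ℓ (Icc 0 1) (Icc α β) := mapsTo_iff_image_subset.mpr hℓ.subset
  refine ⟨γ ∘ ℓ, hγ.comp AffineMap.lineMap_continuous.continuousOn hmaps,
    hinj.comp (AffineMap.lineMap_injective ℝ hαβ.ne).injOn hmaps, ?_, ?_, ?_⟩
  · rw [image_comp, hℓ]
  · exact congrArg γ (AffineMap.lineMap_apply_zero α β)
  · exact congrArg γ (AffineMap.lineMap_apply_one α β)

lemma isEmbedding_restrict_Ioo [T2Space X] {γ : ℝ → X} {α β : ℝ} (hγ : ContinuousOn γ (Icc α β))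
    (hinj : InjOn γ (Icc α β)) : IsEmbedding ((Ioo α β).domRestrict γ) :=
  (hγ.domRestrict.isClosedEmbedding hinj.injective).isEmbedding.comp
    (IsEmbedding.inclusion Ioo_subset_Icc_self)

lemma isArcFrom_and_isSmoothOpenArc_range {F : Type*} [NormedAddCommGroup F] [NormedSpace ℝ F]
    {Γ : ℝ → F} (hΓ : ContDiff ℝ ∞ Γ) (hinj : Function.Injective Γ) (hderiv : ∀ t, deriv Γ t ≠ 0)
    {a a' : F} (hne : a ≠ a') (ha : a ∉ range Γ) (ha' : a' ∉ range Γ)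
    (hbot : Tendsto Γ atBot (𝓝 a)) (htop : Tendsto Γ atTop (𝓝 a')) :
    IsArcFrom (insert a' (insert a (range Γ))) a a' ∧ IsSmoothOpenArc (range Γ) := by
  have hlt : -(π / 2) < π / 2 := neg_lt_self Real.pi_div_two_pos
  have htan : ContDiffOn ℝ ∞ Real.tan (Ioo (-(π / 2)) (π / 2)) := fun t ht =>
    (Real.contDiffAt_tan.mpr (Real.cos_pos_of_mem_Ioo ht).ne').contDiffWithinAt
  have hsmooth : ContDiffOn ℝ ∞ (Γ ∘ Real.tan) (Ioo (-(π / 2)) (π / 2)) := hΓ.comp_contDiffOn htan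
  have himage : Γ ∘ Real.tan '' Ioo (-(π / 2)) (π / 2) = range Γ := by
    rw [image_comp, Real.image_tan_Ioo, image_univ]
  obtain ⟨γ, hγ, hγinj, rfl, rfl, hγΓ⟩ := exists_injOn_continuousOn_Icc_extension hlt
    hsmooth.continuousOn (hinj.comp_injOn Real.injOn_tan)
    (hbot.comp Real.tendsto_tan_neg_pi_div_two) (htop.comp Real.tendsto_tan_pi_div_two) hne
    (himage ▸ ha) (himage ▸ ha')
  rw [← himage, ← hγΓ.image_eq]
  refine ⟨?_, -(π / 2), π / 2, γ, hlt, hsmooth.congr hγΓ, fun t ht => ?_,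
    hγinj.mono Ioo_subset_Icc_self, isEmbedding_restrict_Ioo hγ hγinj, rfl⟩
  · rw [← image_insert_eq, ← image_insert_eq, Ioo_insert_left hlt, Ico_insert_right hlt.le]
    exact isArcFrom_image_Icc hlt hγ hγinj
  · have hcomp := (hΓ.differentiable (by simp) (Real.tan t)).hasDerivAt.scomp t
      (Real.hasDerivAt_tan_of_mem_Ioo ht)
    rw [derivWithin_congr hγΓ (hγΓ ht), derivWithin_of_isOpen isOpen_Ioo ht, hcomp.deriv]
    exact smul_ne_zero (one_div_ne_zero (pow_ne_zero 2 (Real.cos_pos_of_mem_Ioo ht).ne'))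
      (hderiv _)

end ArcOfCurve

theorem IsNonseparating.exists_isArcFrom {F : Type*} [NormedAddCommGroup F] [NormedSpace ℝ F]
    [FiniteDimensional ℝ F] (hF : 3 ≤ Module.finrank ℝ F) {lam : Set F}
    (hlam : IsNonseparating lam) (hclosed : IsClosed lam) {a a' : F} (ha : a ∈ lam)
    (ha' : a' ∈ lam) (hne : a ≠ a') {Ω : Set F} (hΩ : IsOpen Ω) (hconn : IsPreconnected Ω)
    (haΩ : a ∈ Ω) (ha'Ω : a' ∈ Ω) :
    ∃ J : Set F, IsArcFrom J a a' ∧ J ⊆ Ω ∧ J ∩ lam = {a, a'} ∧ IsSmoothOpenArc (J \ {a, a'}) := by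
  obtain ⟨c, hc, hcΩ, hbot, htop⟩ := hlam.exists_continuous_tendsto hclosed hΩ hconn haΩ ha'Ω
  obtain ⟨Γ, hΓ, hinj, hderiv, hΓΩ, hΓbot, hΓtop⟩ :=
    exists_contDiff_injective_deriv_ne_zero_tendsto hF (hΩ.sdiff hclosed) (fun h => h.2 ha)
      (fun h => h.2 ha') hc hcΩ hbot htop
  have hdisj : Disjoint (range Γ) lam :=
    disjoint_left.mpr (forall_mem_range.mpr fun t => (hΓΩ t).2)
  have haΓ : a ∉ range Γ := disjoint_right.mp hdisj ha
  have ha'Γ : a' ∉ range Γ := disjoint_right.mp hdisj ha'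
  obtain ⟨harc, hsmooth⟩ :=
    isArcFrom_and_isSmoothOpenArc_range hΓ hinj hderiv hne haΓ ha'Γ hΓbot hΓtop
  refine ⟨_, harc, ?_, ?_, ?_⟩
  · exact insert_subset ha'Ω (insert_subset haΩ (range_subset_iff.mpr fun t => (hΓΩ t).1))
  · rw [insert_inter_of_mem ha', insert_inter_of_mem ha, hdisj.inter_eq, insert_empty_eq,
      pair_comm]
  · convert hsmooth using 1
    grind

theorem stmt_7_general {F : Type*} [NormedAddCommGroup F] [NormedSpace ℝ F]
    [FiniteDimensional ℝ F] (hF : 3 ≤ Module.finrank ℝ F) {lam : Set F} (hclosed : IsClosed lam)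
    {S : Set (Set F)} (hS : S.Countable) (harc : ∀ A ∈ S, IsArc A) (hcover : lam ⊆ ⋃₀ S)
    {a a' : F} (ha : a ∈ lam) (ha' : a' ∈ lam) (hne : a ≠ a') {Ω : Set F} (hΩ : IsOpen Ω)
    (hconn : IsPreconnected Ω) (haΩ : a ∈ Ω) (ha'Ω : a' ∈ Ω) :
    ∃ J : Set F, IsArcFrom J a a' ∧ J ⊆ Ω ∧ J ∩ lam = {a, a'} ∧ IsSmoothOpenArc (J \ {a, a'}) :=
  (isNonseparating_of_subset_sUnion_arcs hF hclosed hS harc hcover).exists_isArcFrom hF hclosed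
    ha ha' hne hΩ hconn haΩ ha'Ω

/-- In `ℝ^N`, `N ≥ 3`: given a closed set `λ` contained in a countable union of arcs and
two points `a, a'` of `λ` in a connected open set `Ω`, there is an arc in `Ω` from `a`
to `a'` meeting `λ` only at its endpoints, smooth off its endpoints. -/
theorem stmt_7 (N : ℕ) (hN : 3 ≤ N) (lam : Set (Fin N → ℝ)) (hclosed : IsClosed lam)
    (hcover : ∃ S : Set (Set (Fin N → ℝ)), S.Countable ∧ (∀ A ∈ S, IsArc A) ∧ lam ⊆ ⋃₀ S)
    (a a' : Fin N → ℝ) (ha : a ∈ lam) (ha' : a' ∈ lam) (hne : a ≠ a')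
    (Ω : Set (Fin N → ℝ)) (hΩopen : IsOpen Ω) (hΩconn : IsConnected Ω)
    (haΩ : a ∈ Ω) (ha'Ω : a' ∈ Ω) :
    ∃ J : Set (Fin N → ℝ), IsArcFrom J a a' ∧ J ⊆ Ω ∧ J ∩ lam = {a, a'} ∧
      IsSmoothOpenArc (J \ {a, a'}) := by
  obtain ⟨S, hS, harc, hcover⟩ := hcover
  exact stmt_7_general (by simpa using hN) hclosed hS harc hcover ha ha' hne hΩopen
    hΩconn.isPreconnected haΩ ha'Ω

end
end
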